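/- Let p ∈ (0,1) be fixed. For each n, let d(n) ∈ ℕ and α = α(n) ∈ ℝ^{d(n)} be a vector of nonnegative entries. If (‖α‖₂/‖α‖₃)⁶ / n³ → 0 as n → ∞, then the total variation distance between the distribution of the signed triangle count τ(G(n,p)) and the distribution of the signed triangle count τ(G(n,p,α)) converges to 1. -/

import Mathlib

open MeasureTheory ProbabilityTheory Real Filter
open scoped Classical ENNReal NNReal

noncomputable section

/-- Euclidean inner product on `Fin d → ℝ`. -/
def dotp {d : ℕ} (x y : Fin d → ℝ) : ℝ := ∑ i, x i * y i

/-- The `q`-norm of a vector `α ∈ ℝ^d`. -/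
def nrm {d : ℕ} (q : ℕ) (α : Fin d → ℝ) : ℝ := (∑ i, α i ^ q) ^ ((1 : ℝ) / q)

/-- The centered Gaussian measure `N(0, D_α)` on `ℝ^d`, `D_α = diag α`. -/
def gaussPi (d : ℕ) (α : Fin d → ℝ) : Measure (Fin d → ℝ) :=
  Measure.pi fun i => gaussianReal 0 (Real.toNNReal (α i))

/-- The law of `n` i.i.d. samples from `N(0, D_α)`. -/
def sampleMeasure (n d : ℕ) (α : Fin d → ℝ) : Measure (Fin n → Fin d → ℝ) :=
  Measure.pi fun _ => gaussPi d α

/-- `t` is the `p`-th upper quantile of `⟨X₁, X₂⟩` for `X₁, X₂` i.i.d. `N(0, D_α)`. -/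
def IsThreshold (d : ℕ) (α : Fin d → ℝ) (p t : ℝ) : Prop :=
  ((gaussPi d α).prod (gaussPi d α)) {xy | t ≤ dotp xy.1 xy.2} = ENNReal.ofReal p

instance (n : ℕ) : MeasurableSpace (SimpleGraph (Fin n)) := ⊤

/-- The anisotropic random geometric graph `G(n, p, α)`, with threshold `t = t_{p,α}`. -/
def geomGraph (n d : ℕ) (α : Fin d → ℝ) (t : ℝ) : Measure (SimpleGraph (Fin n)) :=
  Measure.map (fun X => SimpleGraph.fromRel fun i j => t ≤ dotp (X i) (X j))
    (sampleMeasure n d α)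

/-- The Erdős–Rényi random graph `G(n, p)`. -/
def erGraph (n : ℕ) (p : ℝ) : Measure (SimpleGraph (Fin n)) :=
  Measure.map (fun x => SimpleGraph.fromRel fun i j => x s(i, j) ≤ p)
    (Measure.pi fun _ : Sym2 (Fin n) => volume.restrict (Set.Icc (0 : ℝ) 1))

/-- Total variation distance between two measures. -/
def tvDist {Ω : Type*} [MeasurableSpace Ω] (μ ν : Measure Ω) : ℝ :=
  ⨆ s : {s : Set Ω // MeasurableSet s}, |(μ s.1).toReal - (ν s.1).toReal|

/-- The `{0,1}`-valued adjacency indicator of a graph. -/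
def adjInd {n : ℕ} (G : SimpleGraph (Fin n)) (i j : Fin n) : ℝ :=
  if G.Adj i j then 1 else 0

/-- The signed triangle count `τ(G) = ∑_{{i,j,k}} (A_{ij}-p)(A_{ik}-p)(A_{jk}-p)`,
written as `1/6` times the sum over ordered triples of pairwise distinct vertices. -/
def signedTriangles {n : ℕ} (p : ℝ) (G : SimpleGraph (Fin n)) : ℝ :=
  (1 / 6) * ∑ i, ∑ j, ∑ k,
    if i ≠ j ∧ i ≠ k ∧ j ≠ k then
      (adjInd G i j - p) * (adjInd G i k - p) * (adjInd G j k - p)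
    else 0

/-- Bounded measurable real functions. -/
def BM {A : Type*} [MeasurableSpace A] (F : A → ℝ) : Prop :=
  Measurable F ∧ ∃ C : ℝ, ∀ x, |F x| ≤ C

namespace BM
variable {A B : Type*} [MeasurableSpace A] [MeasurableSpace B]

lemma const (c : ℝ) : BM (fun _ : A => c) := ⟨measurable_const, |c|, fun _ => le_rfl⟩

lemma add {F G : A → ℝ} (hF : BM F) (hG : BM G) : BM (fun x => F x + G x) := by
  obtain ⟨hF, C, hC⟩ := hF
  obtain ⟨hG, D, hD⟩ := hG
  exact ⟨hF.add hG, C + D, fun x => (abs_add_le _ _).trans (add_le_add (hC x) (hD x))⟩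

lemma neg {F : A → ℝ} (hF : BM F) : BM (fun x => - F x) := by
  obtain ⟨hF, C, hC⟩ := hF
  exact ⟨hF.neg, C, fun x => by rw [abs_neg]; exact hC x⟩

lemma sub {F G : A → ℝ} (hF : BM F) (hG : BM G) : BM (fun x => F x - G x) := by
  simpa [sub_eq_add_neg] using hF.add hG.neg

lemma mul {F G : A → ℝ} (hF : BM F) (hG : BM G) : BM (fun x => F x * G x) := by
  obtain ⟨hF, C, hC⟩ := hF
  obtain ⟨hG, D, hD⟩ := hG
  refine ⟨hF.mul hG, C * D, fun x => ?_⟩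
  rw [abs_mul]
  exact mul_le_mul (hC x) (hD x) (abs_nonneg _) ((abs_nonneg _).trans (hC x))

lemma pow {F : A → ℝ} (hF : BM F) (k : ℕ) : BM (fun x => F x ^ k) := by
  induction k with
  | zero => simpa using BM.const (A := A) 1
  | succ k ih => simpa [pow_succ] using ih.mul hF

lemma sum {κ : Type*} (s : Finset κ) {F : κ → A → ℝ} (hF : ∀ k ∈ s, BM (F k)) :
    BM (fun x => ∑ k ∈ s, F k x) := by
  induction s using Finset.induction_on with
  | empty => simpa using BM.const (A := A) 0
  | insert a s ha ih =>
    simp only [Finset.sum_insert ha]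
    exact (hF a (Finset.mem_insert_self _ _)).add
      (ih fun k hk => hF k (Finset.mem_insert_of_mem hk))

lemma comp {F : A → ℝ} (hF : BM F) {g : B → A} (hg : Measurable g) : BM (fun x => F (g x)) := by
  obtain ⟨hF, C, hC⟩ := hF
  exact ⟨hF.comp hg, C, fun x => hC _⟩

lemma ite {F : A → ℝ} (hF : BM F) (P : Prop) [Decidable P] : BM (fun x => if P then F x else 0) := by
  by_cases h : P
  · simpa [h] using hF
  · simpa [h] using BM.const (A := A) 0

lemma integrable {F : A → ℝ} (hF : BM F) (μ : Measure A) [IsFiniteMeasure μ] :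
    Integrable F μ := by
  obtain ⟨hF, C, hC⟩ := hF
  exact Integrable.of_bound hF.aestronglyMeasurable C (Eventually.of_forall hC)

lemma iadd {F G : A → ℝ} (hF : BM F) (hG : BM G) (μ : Measure A) [IsFiniteMeasure μ] :
    ∫ x, (F x + G x) ∂μ = ∫ x, F x ∂μ + ∫ x, G x ∂μ :=
  integral_add (hF.integrable μ) (hG.integrable μ)

lemma isub {F G : A → ℝ} (hF : BM F) (hG : BM G) (μ : Measure A) [IsFiniteMeasure μ] :
    ∫ x, (F x - G x) ∂μ = ∫ x, F x ∂μ - ∫ x, G x ∂μ :=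
  integral_sub (hF.integrable μ) (hG.integrable μ)

lemma integral_right {F : A → B → ℝ} (hF : BM (Function.uncurry F)) (μ : Measure B)
    [IsProbabilityMeasure μ] : BM (fun x => ∫ y, F x y ∂μ) := by
  obtain ⟨hF, C, hC⟩ := hF
  refine ⟨?_, C, fun x => ?_⟩
  · exact (StronglyMeasurable.integral_prod_right (f := F) hF.stronglyMeasurable).measurable
  · have := norm_integral_le_of_norm_le_const (μ := μ) (f := fun y => F x y) (C := C)
      (Eventually.of_forall fun y => hC (x, y))
    simpa using this

lemma curry {F : A → B → ℝ} (hF : BM (Function.uncurry F)) (x : A) : BM (F x) :=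
  hF.comp (g := fun y => (x, y)) (by fun_prop)

end BM

section resample
variable {ι E : Type*} [Fintype ι] [DecidableEq ι] [MeasurableSpace E]

lemma measurable_update_pair (a : ι) :
    Measurable (fun z : (ι → E) × E => Function.update z.1 a z.2) := by
  rw [measurable_pi_iff]
  intro i
  by_cases h : i = a
  · subst h; simpa using measurable_snd
  · simp only [Function.update_of_ne h]
    exact (measurable_pi_apply i).comp measurable_fst

lemma resample_mp (μ : Measure E) [IsProbabilityMeasure μ] (a : ι) :
    MeasurePreserving (fun z : (ι → E) × E => Function.update z.1 a z.2)
      ((Measure.pi fun _ : ι => μ).prod μ) (Measure.pi fun _ : ι => μ) := by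
  refine ⟨measurable_update_pair a, ?_⟩
  symm
  refine Measure.pi_eq fun s hs => ?_
  rw [Measure.map_apply (measurable_update_pair a) (MeasurableSet.univ_pi hs)]
  have : (fun z : (ι → E) × E => Function.update z.1 a z.2) ⁻¹' (Set.univ.pi s)
      = (Set.univ.pi (Function.update s a Set.univ)) ×ˢ (s a) := by
    ext ⟨X, x⟩
    simp only [Set.mem_preimage, Set.mem_pi, Set.mem_univ, true_imp_iff, Set.mem_prod]
    constructor
    · intro h
      refine ⟨fun i => ?_, by simpa using h a⟩
      by_cases hi : i = a
      · subst hi; simp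
      · simpa [hi] using h i
    · rintro ⟨h1, h2⟩ i
      by_cases hi : i = a
      · subst hi; simpa using h2
      · simpa [hi] using h1 i
  rw [this, Measure.prod_prod, Measure.pi_pi]
  rw [← Finset.mul_prod_erase Finset.univ _ (Finset.mem_univ a),
    ← Finset.mul_prod_erase Finset.univ (fun i => μ (s i)) (Finset.mem_univ a)]
  simp only [Function.update_self, measure_univ, one_mul]
  rw [mul_comm]
  congr 1
  refine Finset.prod_congr rfl fun i hi => ?_
  rw [Function.update_of_ne (Finset.ne_of_mem_erase hi)]

lemma resample_integral (μ : Measure E) [IsProbabilityMeasure μ] (a : ι) {F : (ι → E) → ℝ}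
    (hF : BM F) :
    ∫ X, F X ∂(Measure.pi fun _ : ι => μ)
      = ∫ X, ∫ x, F (Function.update X a x) ∂μ ∂(Measure.pi fun _ : ι => μ) := by
  have h := resample_mp μ a
  conv_lhs => rw [← h.map_eq]
  rw [integral_map h.measurable.aemeasurable hF.1.aestronglyMeasurable]
  rw [integral_prod]
  exact (hF.comp h.measurable).integrable _

lemma resample_zero (μ : Measure E) [IsProbabilityMeasure μ] (a : ι) {F G : (ι → E) → ℝ}
    (hF : BM F) (hG : BM G) (hGa : ∀ X x, G (Function.update X a x) = G X)
    (hz : ∀ X, ∫ x, F (Function.update X a x) ∂μ = 0) :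
    ∫ X, F X * G X ∂(Measure.pi fun _ : ι => μ) = 0 := by
  rw [resample_integral μ a (hF.mul hG)]
  simp only [hGa, integral_mul_const, hz, zero_mul, integral_zero]

lemma second_moment {κ : Type*} [Fintype κ] (μ : Measure E) [IsProbabilityMeasure μ]
    (Z : κ → (ι → E) → ℝ) (supp : κ → Finset ι) (V c : ℝ)
    (hZ : ∀ T, BM (Z T))
    (hdep : ∀ T, ∀ a ∉ supp T, ∀ X x, Z T (Function.update X a x) = Z T X)
    (hzero : ∀ T, ∀ a ∈ supp T, ∀ X, ∫ x, Z T (Function.update X a x) ∂μ = 0)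
    (hV : ∀ T, ∫ X, Z T X ^ 2 ∂(Measure.pi fun _ : ι => μ) ≤ V)
    (hc : ∀ T, ((Finset.univ.filter fun T' => supp T' ⊆ supp T).card : ℝ) ≤ c) :
    ∫ X, (∑ T, Z T X) ^ 2 ∂(Measure.pi fun _ : ι => μ) ≤ Fintype.card κ * c * V := by
  set P := (Measure.pi fun _ : ι => μ)
  have hexp : ∀ X, (∑ T, Z T X) ^ 2 = ∑ T, ∑ T', Z T' X * Z T X := by
    intro X
    rw [sq, Finset.sum_mul_sum, Finset.sum_comm]
  simp only [hexp]
  rw [integral_finsetSum _ fun T _ =>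
    (BM.sum _ fun T' _ => (hZ T').mul (hZ T)).integrable P]
  rcases isEmpty_or_nonempty κ with hk | ⟨⟨T0⟩⟩
  · simp
  have hV0 : 0 ≤ V := (integral_nonneg fun X => sq_nonneg _).trans (hV T0)
  have hrow : ∀ T, ∫ X, ∑ T', Z T' X * Z T X ∂P ≤ c * V := by
    intro T
    rw [integral_finsetSum _ fun T' _ => ((hZ T').mul (hZ T)).integrable P]
    have hterm : ∀ T', ∫ X, Z T' X * Z T X ∂P ≤ if supp T' ⊆ supp T then V else 0 := by
      intro T'
      split_ifs with h
      · have : ∫ X, Z T' X * Z T X ∂P ≤ ∫ X, (1/2) * Z T' X ^ 2 + (1/2) * Z T X ^ 2 ∂P := by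
          refine integral_mono (((hZ T').mul (hZ T)).integrable P)
            ((((BM.const _).mul ((hZ T').pow 2)).add
              ((BM.const _).mul ((hZ T).pow 2))).integrable P) fun X => ?_
          simp only
          nlinarith [sq_nonneg (Z T' X - Z T X)]
        rw [integral_add (((BM.const _).mul ((hZ T').pow 2)).integrable P)
          (((BM.const _).mul ((hZ T).pow 2)).integrable P), integral_const_mul,
          integral_const_mul] at this
        linarith [hV T, hV T']
      · obtain ⟨a, ha, ha'⟩ := Finset.not_subset.1 h
        exact (resample_zero μ a (hZ T') (hZ T) (hdep T a ha') (hzero T' a ha)).le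
    refine (Finset.sum_le_sum fun T' _ => hterm T').trans ?_
    rw [← Finset.sum_filter, Finset.sum_const, nsmul_eq_mul]
    exact mul_le_mul_of_nonneg_right (hc T) hV0
  refine (Finset.sum_le_sum fun T _ => hrow T).trans ?_
  rw [Finset.sum_const, nsmul_eq_mul, Finset.card_univ, mul_assoc]

/-- marginal: a function of one coordinate. -/
lemma pi_integral_one (μ : Measure E) [IsProbabilityMeasure μ] (a : ι) {f : E → ℝ}
    (hf : BM f) : ∫ X, f (X a) ∂(Measure.pi fun _ : ι => μ) = ∫ x, f x ∂μ := by
  rw [resample_integral μ a (hf.comp (measurable_pi_apply a))]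
  simp

lemma pi_integral_two (μ : Measure E) [IsProbabilityMeasure μ] {a b : ι} (hab : a ≠ b)
    {f : E → E → ℝ} (hf : BM (Function.uncurry f)) :
    ∫ X, f (X a) (X b) ∂(Measure.pi fun _ : ι => μ) = ∫ x, ∫ y, f x y ∂μ ∂μ := by
  rw [resample_integral μ b (F := fun X => f (X a) (X b))
    (hf.comp (g := fun X : ι → E => (X a, X b))
      ((measurable_pi_apply a).prodMk (measurable_pi_apply b)))]
  simp only [Function.update_self, Function.update_of_ne hab]
  exact pi_integral_one μ a (hf.integral_right μ)

end resample

section counting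
variable {n : ℕ}

lemma count_third (i j : Fin n) :
    (∑ k : Fin n, if i ≠ j ∧ i ≠ k ∧ j ≠ k then (1 : ℝ) else 0)
      = if i ≠ j then (n : ℝ) - 2 else 0 := by
  by_cases h : i = j
  · simp [h]
  · have hn : 2 ≤ n := by
      have h1 := i.2
      have h2 := j.2
      have h3 : (i : ℕ) ≠ j := fun h' => h (Fin.ext h')
      omega
    have : (Finset.univ.filter fun k : Fin n => i ≠ j ∧ i ≠ k ∧ j ≠ k)
        = Finset.univ \ {i, j} := by
      ext k
      simp only [Finset.mem_filter, Finset.mem_univ, true_and, Finset.mem_sdiff,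
        Finset.mem_insert, Finset.mem_singleton, not_or]
      constructor
      · rintro ⟨_, h1, h2⟩; exact ⟨fun h => h1 h.symm, fun h => h2 h.symm⟩
      · rintro ⟨h1, h2⟩; exact ⟨h, fun h => h1 h.symm, fun h => h2 h.symm⟩
    rw [← Finset.sum_filter, this, Finset.sum_const, Finset.card_sdiff_of_subset (by simp)]
    rw [Finset.card_pair h]
    simp [h, Nat.cast_sub hn]

lemma count_second (i : Fin n) :
    (∑ j : Fin n, if i ≠ j then ((n : ℝ) - 2) else 0) = ((n : ℝ) - 1) * ((n : ℝ) - 2) := by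
  have hn : 1 ≤ n := by have h1 := i.2; omega
  have : (Finset.univ.filter fun j : Fin n => i ≠ j) = Finset.univ.erase i := by
    ext j; simp [eq_comm]
  rw [← Finset.sum_filter, this, Finset.sum_const, Finset.card_erase_of_mem (Finset.mem_univ i)]
  simp [Nat.cast_sub hn]

/-- sum over ordered distinct triples -/
def dsum (n : ℕ) (F : Fin n → Fin n → Fin n → ℝ) : ℝ :=
  ∑ i, ∑ j, ∑ k, if i ≠ j ∧ i ≠ k ∧ j ≠ k then F i j k else 0

lemma dsum_add (F G : Fin n → Fin n → Fin n → ℝ) :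
    dsum n (fun i j k => F i j k + G i j k) = dsum n F + dsum n G := by
  unfold dsum
  simp only [← Finset.sum_add_distrib]
  refine Finset.sum_congr rfl fun i _ => Finset.sum_congr rfl fun j _ =>
    Finset.sum_congr rfl fun k _ => ?_
  split_ifs <;> simp

lemma dsum_swap23 (F : Fin n → Fin n → Fin n → ℝ) :
    dsum n (fun i j k => F i k j) = dsum n F := by
  unfold dsum
  refine Finset.sum_congr rfl fun i _ => ?_
  rw [Finset.sum_comm]
  refine Finset.sum_congr rfl fun j _ => Finset.sum_congr rfl fun k _ => ?_
  congr 1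
  simp only [eq_iff_iff, ne_eq]
  constructor
  · rintro ⟨h1, h2, h3⟩; exact ⟨h2, h1, fun h => h3 h.symm⟩
  · rintro ⟨h1, h2, h3⟩; exact ⟨h2, h1, fun h => h3 h.symm⟩

lemma dsum_swap12 (F : Fin n → Fin n → Fin n → ℝ) :
    dsum n (fun i j k => F j i k) = dsum n F := by
  unfold dsum
  rw [Finset.sum_comm]
  refine Finset.sum_congr rfl fun j _ => Finset.sum_congr rfl fun k _ =>
    Finset.sum_congr rfl fun i _ => ?_
  congr 1
  simp only [eq_iff_iff, ne_eq]
  constructor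
  · rintro ⟨h1, h2, h3⟩; exact ⟨fun h => h1 h.symm, h3, h2⟩
  · rintro ⟨h1, h2, h3⟩; exact ⟨fun h => h1 h.symm, h3, h2⟩

lemma dsum_two (F : Fin n → Fin n → ℝ) :
    dsum n (fun i j _ => F i j) = ((n : ℝ) - 2) * ∑ i, ∑ j, if i ≠ j then F i j else 0 := by
  unfold dsum
  rw [Finset.mul_sum]
  refine Finset.sum_congr rfl fun i _ => ?_
  rw [Finset.mul_sum]
  refine Finset.sum_congr rfl fun j _ => ?_
  have : ∀ k, (if i ≠ j ∧ i ≠ k ∧ j ≠ k then F i j else 0)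
      = F i j * (if i ≠ j ∧ i ≠ k ∧ j ≠ k then (1:ℝ) else 0) := by
    intro k; split_ifs <;> simp
  simp only [this]
  rw [← Finset.mul_sum, count_third]
  split_ifs <;> ring

lemma dsum_one (F : Fin n → ℝ) :
    dsum n (fun i _ _ => F i) = (((n : ℝ) - 1) * ((n : ℝ) - 2)) * ∑ i, F i := by
  rw [dsum_two (fun i _ => F i), Finset.mul_sum, Finset.mul_sum]
  refine Finset.sum_congr rfl fun i _ => ?_
  rw [← count_second i, Finset.mul_sum, Finset.sum_mul]
  refine Finset.sum_congr rfl fun j _ => ?_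
  split_ifs <;> ring

end counting

section hoeff
variable {E : Type*} [MeasurableSpace E] (μ : Measure E) [IsProbabilityMeasure μ]
  (H : E → E → E → ℝ)

def hf2 (x y : E) : ℝ := ∫ z, H x y z ∂μ
def hf1 (x : E) : ℝ := ∫ y, hf2 μ H x y ∂μ
def hD : ℝ := ∫ x, hf1 μ H x ∂μ
def hV2 : ℝ := ∫ x, ∫ y, hf2 μ H x y ^ 2 ∂μ ∂μ
def hg1 (x : E) : ℝ := hf1 μ H x - hD μ H
def hg2 (x y : E) : ℝ := hf2 μ H x y - hf1 μ H x - hf1 μ H y + hD μ H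
def hg3 (x y z : E) : ℝ := H x y z - hf2 μ H x y - hf2 μ H x z - hf2 μ H y z
  + hf1 μ H x + hf1 μ H y + hf1 μ H z - hD μ H

/-- bounded symmetric kernels -/
structure SymKer (H : E → E → E → ℝ) : Prop where
  meas : Measurable (fun z : (E × E) × E => H z.1.1 z.1.2 z.2)
  bd : ∀ x y z, |H x y z| ≤ 1
  s12 : ∀ x y z, H x y z = H y x z
  s23 : ∀ x y z, H x y z = H x z y

variable {H}

lemma SymKer.bm (hH : SymKer H) : BM (fun z : (E × E) × E => H z.1.1 z.1.2 z.2) :=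
  ⟨hH.meas, 1, fun _ => hH.bd _ _ _⟩

lemma SymKer.bm_f2 (hH : SymKer H) : BM (fun z : E × E => hf2 μ H z.1 z.2) :=
  BM.integral_right (F := fun (z : E × E) w => H z.1 z.2 w) hH.bm μ

lemma SymKer.bm_f1 (hH : SymKer H) : BM (hf1 μ H) :=
  BM.integral_right (F := fun x y => hf2 μ H x y) (hH.bm_f2 μ) μ

lemma SymKer.bm_g1 (hH : SymKer H) : BM (hg1 μ H) := (hH.bm_f1 μ).sub (BM.const _)

lemma SymKer.bm_g2 (hH : SymKer H) : BM (fun z : E × E => hg2 μ H z.1 z.2) :=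
  (((hH.bm_f2 μ).sub ((hH.bm_f1 μ).comp measurable_fst)).sub
    ((hH.bm_f1 μ).comp measurable_snd)).add (BM.const _)

lemma SymKer.bm_g3 (hH : SymKer H) : BM (fun z : (E × E) × E => hg3 μ H z.1.1 z.1.2 z.2) :=
  (((((((hH.bm).sub ((hH.bm_f2 μ).comp measurable_fst)).sub
    ((hH.bm_f2 μ).comp (g := fun z : (E × E) × E => (z.1.1, z.2)) (by fun_prop))).sub
    ((hH.bm_f2 μ).comp (g := fun z : (E × E) × E => (z.1.2, z.2)) (by fun_prop))).add
    ((hH.bm_f1 μ).comp (g := fun z : (E × E) × E => z.1.1) (by fun_prop))).add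
    ((hH.bm_f1 μ).comp (g := fun z : (E × E) × E => z.1.2) (by fun_prop))).add
    ((hH.bm_f1 μ).comp (g := fun z : (E × E) × E => z.2) (by fun_prop))).sub (BM.const _)

lemma SymKer.f2_symm (hH : SymKer H) (x y : E) : hf2 μ H x y = hf2 μ H y x := by
  unfold hf2; simp only [hH.s12 x y]

lemma SymKer.f2_left (hH : SymKer H) (x : E) : BM (fun y => hf2 μ H x y) :=
  (hH.bm_f2 μ).comp (g := fun y => (x, y)) (by fun_prop)

lemma abs_integral_le_one {A : Type*} [MeasurableSpace A] (ν : Measure A) [IsProbabilityMeasure ν]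
    {f : A → ℝ} {C : ℝ} (h : ∀ x, |f x| ≤ C) : |∫ x, f x ∂ν| ≤ C := by
  have := norm_integral_le_of_norm_le_const (μ := ν) (f := f) (C := C) (Eventually.of_forall h)
  simpa using this

lemma SymKer.f2_bd (hH : SymKer H) (x y : E) : |hf2 μ H x y| ≤ 1 :=
  abs_integral_le_one μ (hH.bd x y)
lemma SymKer.f1_bd (hH : SymKer H) (x : E) : |hf1 μ H x| ≤ 1 :=
  abs_integral_le_one μ (hH.f2_bd μ x)
lemma SymKer.D_bd (hH : SymKer H) : |hD μ H| ≤ 1 :=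
  abs_integral_le_one μ (hH.f1_bd μ)

lemma SymKer.g1_zero (hH : SymKer H) : ∫ x, hg1 μ H x ∂μ = 0 := by
  unfold hg1
  rw [integral_sub ((hH.bm_f1 μ).integrable μ) (integrable_const _)]
  simp [hD]

lemma SymKer.g2_zero (hH : SymKer H) (x : E) : ∫ y, hg2 μ H x y ∂μ = 0 := by
  unfold hg2
  have i1 := hH.f2_left μ x
  have i2 := hH.bm_f1 μ
  rw [BM.iadd ((i1.sub (BM.const _)).sub i2) (BM.const _),
    BM.isub (i1.sub (BM.const _)) i2, BM.isub i1 (BM.const _)]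
  simp [hD, hf1]

lemma SymKer.g2_symm (hH : SymKer H) (x y : E) : hg2 μ H x y = hg2 μ H y x := by
  unfold hg2; rw [hH.f2_symm μ x y]; ring

lemma SymKer.g3_zero (hH : SymKer H) (x y : E) : ∫ z, hg3 μ H x y z ∂μ = 0 := by
  unfold hg3
  have i0 : BM (fun z => H x y z) :=
    hH.bm.comp (g := fun z => ((x, y), z)) (by fun_prop)
  have i1 := hH.f2_left μ x
  have i1' := hH.f2_left μ y
  have i2 := hH.bm_f1 μ
  have c : ∀ r : ℝ, BM (fun _ : E => r) := fun r => BM.const r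
  rw [BM.isub (((((((i0.sub (c _)).sub i1).sub i1').add (c _)).add (c _)).add i2)) (c _),
    BM.iadd (((((i0.sub (c _)).sub i1).sub i1').add (c _)).add (c _)) i2,
    BM.iadd ((((i0.sub (c _)).sub i1).sub i1').add (c _)) (c _),
    BM.iadd (((i0.sub (c _)).sub i1).sub i1') (c _),
    BM.isub ((i0.sub (c _)).sub i1) i1', BM.isub (i0.sub (c _)) i1,
    BM.isub i0 (c _)]
  simp [hD, hf1, hf2]
  ring

lemma SymKer.g3_s12 (hH : SymKer H) (x y z : E) : hg3 μ H x y z = hg3 μ H y x z := by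
  unfold hg3; rw [hH.f2_symm μ x y, hH.s12 x y z]; ring
lemma SymKer.g3_s23 (hH : SymKer H) (x y z : E) : hg3 μ H x y z = hg3 μ H x z y := by
  unfold hg3; rw [hH.f2_symm μ y z, hH.s23 x y z]; ring

lemma SymKer.g3_bd (hH : SymKer H) (x y z : E) : hg3 μ H x y z ^ 2 ≤ 64 := by
  have h0 := abs_le.1 (hH.bd x y z)
  have h1 := abs_le.1 (hH.f2_bd μ x y)
  have h2 := abs_le.1 (hH.f2_bd μ x z)
  have h3 := abs_le.1 (hH.f2_bd μ y z)
  have h4 := abs_le.1 (hH.f1_bd μ x)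
  have h5 := abs_le.1 (hH.f1_bd μ y)
  have h6 := abs_le.1 (hH.f1_bd μ z)
  have h7 := abs_le.1 (hH.D_bd μ)
  have : |hg3 μ H x y z| ≤ 8 := by
    unfold hg3
    rw [abs_le]; constructor <;> linarith [h0.1, h0.2, h1.1, h1.2, h2.1, h2.2, h3.1, h3.2, h4.1,
      h4.2, h5.1, h5.2, h6.1, h6.2, h7.1, h7.2]
  nlinarith [abs_nonneg (hg3 μ H x y z), sq_abs (hg3 μ H x y z)]

/-- Jensen for squares. -/
lemma sq_integral_le {A : Type*} [MeasurableSpace A] (ν : Measure A) [IsProbabilityMeasure ν]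
    {f : A → ℝ} (hf : BM f) : (∫ x, f x ∂ν) ^ 2 ≤ ∫ x, f x ^ 2 ∂ν := by
  set m := ∫ x, f x ∂ν with hm
  have h : 0 ≤ ∫ x, (f x - m) ^ 2 ∂ν := integral_nonneg fun x => sq_nonneg _
  have e : ∀ x, (f x - m) ^ 2 = f x ^ 2 - (2 * m) * f x + m ^ 2 := fun x => by ring
  simp only [e] at h
  rw [integral_add (((hf.pow 2).sub ((BM.const _).mul hf)).integrable ν) (integrable_const _),
    integral_sub ((hf.pow 2).integrable ν) (((BM.const _).mul hf).integrable ν),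
    integral_const_mul, ← hm] at h
  simp at h
  nlinarith

lemma SymKer.f1_sq (hH : SymKer H) : ∫ x, hf1 μ H x ^ 2 ∂μ ≤ hV2 μ H := by
  unfold hV2
  refine integral_mono (((hH.bm_f1 μ).pow 2).integrable μ) ((BM.integral_right
    (F := fun x y => hf2 μ H x y ^ 2) ((hH.bm_f2 μ).pow 2) μ).integrable μ) fun x => ?_
  exact sq_integral_le μ (hH.f2_left μ x)

lemma SymKer.D_sq (hH : SymKer H) : hD μ H ^ 2 ≤ hV2 μ H :=
  (sq_integral_le μ (hH.bm_f1 μ)).trans (hH.f1_sq μ)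

lemma SymKer.g1_sq (hH : SymKer H) : ∫ x, hg1 μ H x ^ 2 ∂μ ≤ hV2 μ H := by
  refine le_trans ?_ (hH.f1_sq μ)
  unfold hg1
  have e : ∀ x, (hf1 μ H x - hD μ H) ^ 2
      = hf1 μ H x ^ 2 - (2 * hD μ H) * hf1 μ H x + hD μ H ^ 2 := fun x => by ring
  simp only [e]
  rw [integral_add ((((hH.bm_f1 μ).pow 2).sub ((BM.const _).mul (hH.bm_f1 μ))).integrable μ)
    (integrable_const _), integral_sub (((hH.bm_f1 μ).pow 2).integrable μ)
    (((BM.const _).mul (hH.bm_f1 μ)).integrable μ), integral_const_mul]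
  have : ∫ x, hf1 μ H x ∂μ = hD μ H := rfl
  rw [this]
  simp
  nlinarith [sq_nonneg (hD μ H)]

lemma SymKer.V2_le (hH : SymKer H) : hV2 μ H ≤ 1 := by
  have h : |hV2 μ H| ≤ 1 := by
    refine abs_integral_le_one μ fun x => abs_integral_le_one μ fun y => ?_
    rw [abs_of_nonneg (sq_nonneg _)]
    have := hH.f2_bd μ x y
    nlinarith [abs_nonneg (hf2 μ H x y), sq_abs (hf2 μ H x y)]
  exact (le_abs_self _).trans h

lemma SymKer.V2_nonneg : 0 ≤ hV2 μ H :=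
  integral_nonneg fun x => integral_nonneg fun y => sq_nonneg _

lemma SymKer.g2_sq (hH : SymKer H) : ∫ x, ∫ y, hg2 μ H x y ^ 2 ∂μ ∂μ ≤ 16 * hV2 μ H := by
  have b2 := (hH.bm_f2 μ).pow 2
  have b2l : ∀ x, BM (fun y => hf2 μ H x y ^ 2) := fun x => (hH.f2_left μ x).pow 2
  have bb := (hH.bm_f1 μ).pow 2
  have key : ∀ x, ∫ y, hg2 μ H x y ^ 2 ∂μ ≤ (4 * ∫ y, hf2 μ H x y ^ 2 ∂μ) + 4 * hf1 μ H x ^ 2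
      + 4 * (∫ y, hf1 μ H y ^ 2 ∂μ) + 4 * hD μ H ^ 2 := by
    intro x
    have : ∫ y, hg2 μ H x y ^ 2 ∂μ ≤ ∫ y, (4 * hf2 μ H x y ^ 2 + 4 * hf1 μ H x ^ 2
        + 4 * hf1 μ H y ^ 2 + 4 * hD μ H ^ 2) ∂μ := by
      refine integral_mono ((((hH.bm_g2 μ).comp (g := fun y => (x, y)) (by fun_prop)).pow
        2).integrable μ) (((((BM.const 4).mul (b2l x)).add (BM.const _)).add
        ((BM.const 4).mul bb)).add (BM.const _) |>.integrable μ) fun y => ?_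
      simp only [hg2]
      set a := hf2 μ H x y
      set b := hf1 μ H x
      set c := hf1 μ H y
      set e := hD μ H
      nlinarith [sq_nonneg (a + b), sq_nonneg (a + c), sq_nonneg (a - e), sq_nonneg (b - c),
        sq_nonneg (b + e), sq_nonneg (c + e)]
    refine this.trans (le_of_eq ?_)
    rw [integral_add (((((BM.const 4).mul (b2l x)).add (BM.const _)).add
        ((BM.const 4).mul bb)).integrable μ) (integrable_const _),
      integral_add ((((BM.const 4).mul (b2l x)).add (BM.const _)).integrable μ)
        (((BM.const 4).mul bb).integrable μ),
      integral_add (((BM.const 4).mul (b2l x)).integrable μ) (integrable_const _)]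
    simp [integral_const_mul]
  have bi : BM (fun x => ∫ y, hf2 μ H x y ^ 2 ∂μ) :=
    BM.integral_right (F := fun x y => hf2 μ H x y ^ 2) b2 μ
  have : ∫ x, ∫ y, hg2 μ H x y ^ 2 ∂μ ∂μ ≤ ∫ x, ((4 * ∫ y, hf2 μ H x y ^ 2 ∂μ)
      + 4 * hf1 μ H x ^ 2 + 4 * (∫ y, hf1 μ H y ^ 2 ∂μ) + 4 * hD μ H ^ 2) ∂μ := by
    refine integral_mono ((BM.integral_right (F := fun x y => hg2 μ H x y ^ 2)
      ((hH.bm_g2 μ).pow 2) μ).integrable μ) (((((BM.const 4).mul bi).add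
        ((BM.const 4).mul bb)).add (BM.const _)).add (BM.const _) |>.integrable μ) key
  refine this.trans ?_
  rw [integral_add (((((BM.const 4).mul bi).add
        ((BM.const 4).mul bb)).add (BM.const _)).integrable μ) (integrable_const _),
      integral_add ((((BM.const 4).mul bi).add
        ((BM.const 4).mul bb)).integrable μ) (integrable_const _),
      integral_add (((BM.const 4).mul bi).integrable μ) (((BM.const 4).mul bb).integrable μ),
      integral_const_mul, integral_const_mul]
  have h1 := hH.f1_sq μ
  have h2 := hH.D_sq μ
  have h3 : ∫ x, ∫ y, hf2 μ H x y ^ 2 ∂μ ∂μ = hV2 μ H := rfl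
  rw [h3]
  simp
  linarith

variable (n : ℕ)

/-- the three orthogonal pieces -/
lemma SymKer.decomp (hH : SymKer H) (X : Fin n → E) :
    dsum n (fun i j k => H (X i) (X j) (X k))
      = dsum n (fun i j k => hg3 μ H (X i) (X j) (X k))
        + 3 * (((n : ℝ) - 2) * ∑ i, ∑ j, if i ≠ j then hg2 μ H (X i) (X j) else 0)
        + 3 * ((((n : ℝ) - 1) * ((n : ℝ) - 2)) * ∑ i, hg1 μ H (X i))
        + n * (((n : ℝ) - 1) * ((n : ℝ) - 2)) * hD μ H := by
  have e : ∀ i j k, H (X i) (X j) (X k) = hg3 μ H (X i) (X j) (X k)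
      + hg2 μ H (X i) (X j) + hg2 μ H (X i) (X k) + hg2 μ H (X k) (X j)
      + hg1 μ H (X i) + hg1 μ H (X j) + hg1 μ H (X k) + hD μ H := by
    intro i j k
    unfold hg3 hg2 hg1
    rw [hH.f2_symm μ (X k) (X j)]; ring
  simp only [e, dsum_add]
  have a1 : dsum n (fun i j k => hg2 μ H (X i) (X k)) = dsum n (fun i j _ => hg2 μ H (X i) (X j)) :=
    dsum_swap23 (fun i j _ => hg2 μ H (X i) (X j))
  have a2 : dsum n (fun i j k => hg2 μ H (X k) (X j)) = dsum n (fun i j _ => hg2 μ H (X i) (X j)) := by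
    rw [← a1, ← dsum_swap12]
    refine congrArg _ (funext fun i => funext fun j => funext fun k => hH.g2_symm μ _ _)
  have a3 : dsum n (fun i j k => hg1 μ H (X j)) = dsum n (fun i _ _ => hg1 μ H (X i)) :=
    dsum_swap12 (fun i _ _ => hg1 μ H (X i))
  have a4 : dsum n (fun i j k => hg1 μ H (X k)) = dsum n (fun i _ _ => hg1 μ H (X i)) := by
    rw [← a3]; exact dsum_swap23 (fun i j _ => hg1 μ H (X j))
  have a5 : dsum n (fun i j k => hD μ H) = dsum n (fun i _ _ => hD μ H) := rfl
  rw [a1, a2, a3, a4, dsum_two, dsum_one, dsum_one]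
  simp
  ring

lemma card_triple (s : Finset (Fin n)) (hs : s.card ≤ 3)
    (t : Finset (Fin n × Fin n × Fin n)) (h : ∀ x ∈ t, x.1 ∈ s ∧ x.2.1 ∈ s ∧ x.2.2 ∈ s) :
    (t.card : ℝ) ≤ 27 := by
  have h1 : t ⊆ s ×ˢ s ×ˢ s := by
    intro x hx
    simp only [Finset.mem_product]
    exact h x hx
  have h2 := Finset.card_le_card h1
  rw [Finset.card_product, Finset.card_product] at h2
  have h3 : s.card * (s.card * s.card) ≤ 3 * (3 * 3) := by gcongr
  exact_mod_cast h2.trans h3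

lemma card_double (s : Finset (Fin n)) (hs : s.card ≤ 2)
    (t : Finset (Fin n × Fin n)) (h : ∀ x ∈ t, x.1 ∈ s ∧ x.2 ∈ s) :
    (t.card : ℝ) ≤ 4 := by
  have h1 : t ⊆ s ×ˢ s := by
    intro x hx
    simp only [Finset.mem_product]
    exact h x hx
  have h2 := Finset.card_le_card h1
  rw [Finset.card_product] at h2
  have h3 : s.card * s.card ≤ 2 * 2 := by gcongr
  exact_mod_cast h2.trans h3

lemma SymKer.mom3 (hH : SymKer H) :
    ∫ X, dsum n (fun i j k => hg3 μ H (X i) (X j) (X k)) ^ 2 ∂(Measure.pi fun _ : Fin n => μ)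
      ≤ 1728 * (n : ℝ) ^ 3 := by
  have h := second_moment (ι := Fin n) (κ := Fin n × Fin n × Fin n) μ
    (fun T X => if T.1 ≠ T.2.1 ∧ T.1 ≠ T.2.2 ∧ T.2.1 ≠ T.2.2 then
      hg3 μ H (X T.1) (X T.2.1) (X T.2.2) else 0)
    (fun T => {T.1, T.2.1, T.2.2}) 64 27 ?_ ?_ ?_ ?_ ?_
  · simp only [Fintype.sum_prod_type] at h
    refine h.trans (le_of_eq ?_)
    simp [Fintype.card_prod]; ring
  · intro T
    exact BM.ite ((hH.bm_g3 μ).comp (g := fun X : Fin n → E => ((X T.1, X T.2.1), X T.2.2))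
      (by fun_prop)) _
  · intro T a ha X x
    simp only [Finset.mem_insert, Finset.mem_singleton, not_or] at ha
    simp only [Function.update_of_ne (Ne.symm ha.1), Function.update_of_ne (Ne.symm ha.2.1),
      Function.update_of_ne (Ne.symm ha.2.2)]
  · rintro ⟨i, j, k⟩ a ha X
    simp only
    by_cases hd : i ≠ j ∧ i ≠ k ∧ j ≠ k
    · simp only [if_pos hd]
      obtain ⟨h1, h2, h3⟩ := hd
      simp only [Finset.mem_insert, Finset.mem_singleton] at ha
      rcases ha with rfl | rfl | rfl
      · simp only [Function.update_self, Function.update_of_ne h1.symm,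
          Function.update_of_ne h2.symm]
        rw [← hH.g3_zero μ (X j) (X k)]
        refine integral_congr_ae (Eventually.of_forall fun x => ?_)
        simp only
        rw [hH.g3_s12 μ, hH.g3_s23 μ]
      · simp only [Function.update_self, Function.update_of_ne h1,
          Function.update_of_ne h3.symm]
        rw [← hH.g3_zero μ (X i) (X k)]
        refine integral_congr_ae (Eventually.of_forall fun x => ?_)
        simp only
        rw [hH.g3_s23 μ]
      · simp only [Function.update_self, Function.update_of_ne h2,
          Function.update_of_ne h3]
        exact hH.g3_zero μ (X i) (X j)
    · simp only [if_neg hd, integral_zero]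
  · intro T
    have : |∫ X, (if T.1 ≠ T.2.1 ∧ T.1 ≠ T.2.2 ∧ T.2.1 ≠ T.2.2 then
      hg3 μ H (X T.1) (X T.2.1) (X T.2.2) else 0) ^ 2 ∂(Measure.pi fun _ : Fin n => μ)| ≤ 64 := by
      refine abs_integral_le_one _ fun X => ?_
      rw [abs_of_nonneg (sq_nonneg _)]
      split_ifs
      · exact hH.g3_bd μ _ _ _
      · norm_num
    exact (le_abs_self _).trans this
  · intro T
    refine card_triple n {T.1, T.2.1, T.2.2} Finset.card_le_three _ fun x hx => ?_
    simp only [Finset.mem_filter, Finset.mem_univ, true_and] at hx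
    exact ⟨hx (by simp), hx (by simp), hx (by simp)⟩

lemma SymKer.mom2 (hH : SymKer H) :
    ∫ X, (∑ i, ∑ j, if i ≠ j then hg2 μ H (X i) (X j) else 0) ^ 2 ∂(Measure.pi fun _ : Fin n => μ)
      ≤ 64 * (n : ℝ) ^ 2 * hV2 μ H := by
  have h := second_moment (ι := Fin n) (κ := Fin n × Fin n) μ
    (fun T X => if T.1 ≠ T.2 then hg2 μ H (X T.1) (X T.2) else 0)
    (fun T => {T.1, T.2}) (16 * hV2 μ H) 4 ?_ ?_ ?_ ?_ ?_
  · simp only [Fintype.sum_prod_type] at h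
    refine h.trans (le_of_eq ?_)
    simp [Fintype.card_prod]; ring
  · intro T
    exact BM.ite ((hH.bm_g2 μ).comp (g := fun X : Fin n → E => (X T.1, X T.2))
      (by fun_prop)) _
  · intro T a ha X x
    simp only [Finset.mem_insert, Finset.mem_singleton, not_or] at ha
    simp only [Function.update_of_ne (Ne.symm ha.1), Function.update_of_ne (Ne.symm ha.2)]
  · rintro ⟨i, j⟩ a ha X
    simp only
    by_cases hd : i ≠ j
    · simp only [if_pos hd]
      simp only [Finset.mem_insert, Finset.mem_singleton] at ha
      rcases ha with rfl | rfl
      · simp only [Function.update_self, Function.update_of_ne hd.symm]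
        rw [← hH.g2_zero μ (X j)]
        refine integral_congr_ae (Eventually.of_forall fun x => ?_)
        simp only
        rw [hH.g2_symm μ]
      · simp only [Function.update_self, Function.update_of_ne hd]
        exact hH.g2_zero μ (X i)
    · simp only [if_neg hd, integral_zero]
  · rintro ⟨i, j⟩
    simp only
    by_cases hd : i ≠ j
    · simp only [if_pos hd]
      rw [pi_integral_two μ hd (f := fun x y => hg2 μ H x y ^ 2) ((hH.bm_g2 μ).pow 2)]
      exact hH.g2_sq μ
    · simp only [if_neg hd]
      have := SymKer.V2_nonneg μ (H := H)
      simp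
      linarith
  · intro T
    refine card_double n {T.1, T.2} Finset.card_le_two _ fun x hx => ?_
    simp only [Finset.mem_filter, Finset.mem_univ, true_and] at hx
    exact ⟨hx (by simp), hx (by simp)⟩

lemma SymKer.mom1 (hH : SymKer H) :
    ∫ X, (∑ i, hg1 μ H (X i)) ^ 2 ∂(Measure.pi fun _ : Fin n => μ) ≤ n * hV2 μ H := by
  have h := second_moment (ι := Fin n) (κ := Fin n) μ
    (fun T X => hg1 μ H (X T)) (fun T => {T}) (hV2 μ H) 1 ?_ ?_ ?_ ?_ ?_
  · refine h.trans (le_of_eq ?_)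
    simp
  · intro T
    exact (hH.bm_g1 μ).comp (measurable_pi_apply T)
  · intro T a ha X x
    simp only [Finset.mem_singleton] at ha
    simp only [Function.update_of_ne (Ne.symm ha)]
  · intro i a ha X
    simp only [Finset.mem_singleton] at ha
    subst ha
    simp only [Function.update_self]
    exact hH.g1_zero μ
  · intro i
    rw [pi_integral_one μ i (f := fun x => hg1 μ H x ^ 2) ((hH.bm_g1 μ).pow 2)]
    exact hH.g1_sq μ
  · intro T
    have : (Finset.univ.filter fun T' : Fin n => ({T'} : Finset (Fin n)) ⊆ {T}) = {T} := by
      ext; simp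
    rw [this]; simp

lemma SymKer.bm_A3 (hH : SymKer H) :
    BM (fun X : Fin n → E => dsum n (fun i j k => hg3 μ H (X i) (X j) (X k))) := by
  refine BM.sum _ fun i _ => BM.sum _ fun j _ => BM.sum _ fun k _ => BM.ite ?_ _
  exact (hH.bm_g3 μ).comp (g := fun X : Fin n → E => ((X i, X j), X k)) (by fun_prop)
lemma SymKer.bm_A2 (hH : SymKer H) :
    BM (fun X : Fin n → E => ∑ i, ∑ j, if i ≠ j then hg2 μ H (X i) (X j) else 0) := by
  refine BM.sum _ fun i _ => BM.sum _ fun j _ => BM.ite ?_ _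
  exact (hH.bm_g2 μ).comp (g := fun X : Fin n → E => (X i, X j)) (by fun_prop)
lemma SymKer.bm_A1 (hH : SymKer H) :
    BM (fun X : Fin n → E => ∑ i, hg1 μ H (X i)) := by
  exact BM.sum _ fun i _ => (hH.bm_g1 μ).comp (measurable_pi_apply i)

lemma SymKer.U2 (hH : SymKer H) (hn : 3 ≤ n) :
    ∫ X, (dsum n (fun i j k => H (X i) (X j) (X k))
        - n * (((n : ℝ) - 1) * ((n : ℝ) - 2)) * hD μ H
        - 3 * ((((n : ℝ) - 1) * ((n : ℝ) - 2)) * ∑ i, hg1 μ H (X i))) ^ 2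
          ∂(Measure.pi fun _ : Fin n => μ)
      ≤ 5000 * ((n : ℝ) ^ 4 * hV2 μ H + (n : ℝ) ^ 3) := by
  set P := (Measure.pi fun _ : Fin n => μ)
  have hn' : (3 : ℝ) ≤ n := by exact_mod_cast hn
  have m3 := hH.mom3 μ n
  have m2 := hH.mom2 μ n
  have b3 := hH.bm_A3 μ n
  have b2 := hH.bm_A2 μ n
  have : ∀ X : Fin n → E, (dsum n (fun i j k => H (X i) (X j) (X k))
        - n * (((n : ℝ) - 1) * ((n : ℝ) - 2)) * hD μ H
        - 3 * ((((n : ℝ) - 1) * ((n : ℝ) - 2)) * ∑ i, hg1 μ H (X i))) ^ 2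
        ≤ 2 * dsum n (fun i j k => hg3 μ H (X i) (X j) (X k)) ^ 2 +
          (18 * (n : ℝ) ^ 2) * (∑ i, ∑ j, if i ≠ j then hg2 μ H (X i) (X j) else 0) ^ 2 := by
    intro X
    rw [hH.decomp μ n X]
    set a := dsum n (fun i j k => hg3 μ H (X i) (X j) (X k))
    set b := (∑ i, ∑ j, if i ≠ j then hg2 μ H (X i) (X j) else 0)
    have e1 : ((n : ℝ) - 2) ^ 2 * b ^ 2 ≤ (n : ℝ) ^ 2 * b ^ 2 := by
      gcongr
      · linarith
      · linarith
    nlinarith [sq_nonneg (a - 3 * (((n : ℝ) - 2) * b))]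
  have hm := integral_mono (μ := P) ?_ ((((BM.const 2).mul (b3.pow 2)).add
    ((BM.const (18 * (n : ℝ) ^ 2)).mul (b2.pow 2))).integrable P) this
  · refine hm.trans ?_
    rw [integral_add (((BM.const 2).mul (b3.pow 2)).integrable P)
      (((BM.const (18 * (n : ℝ) ^ 2)).mul (b2.pow 2)).integrable P), integral_const_mul,
      integral_const_mul]
    have h4 : 18 * (n : ℝ) ^ 2 * ∫ X, (∑ i, ∑ j, if i ≠ j then hg2 μ H (X i) (X j) else 0) ^ 2 ∂P
      ≤ 18 * (n : ℝ) ^ 2 * (64 * (n : ℝ) ^ 2 * hV2 μ H) := by gcongr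
    have h5 := SymKer.V2_nonneg μ (H := H)
    have h6 : 0 ≤ (n : ℝ) ^ 4 * hV2 μ H := by positivity
    have h7 : 0 ≤ (n : ℝ) ^ 3 := by positivity
    nlinarith
  · have : BM (fun X : Fin n → E => dsum n (fun i j k => H (X i) (X j) (X k))
        - n * (((n : ℝ) - 1) * ((n : ℝ) - 2)) * hD μ H
        - 3 * ((((n : ℝ) - 1) * ((n : ℝ) - 2)) * ∑ i, hg1 μ H (X i))) := by
      refine BM.sub (BM.sub ?_ (BM.const _)) ((BM.const _).mul ((BM.const _).mul (hH.bm_A1 μ n)))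
      refine BM.sum _ fun i _ => BM.sum _ fun j _ => BM.sum _ fun k _ => BM.ite ?_ _
      exact hH.bm.comp (g := fun X : Fin n → E => ((X i, X j), X k)) (by fun_prop)
    exact (this.pow 2).integrable P

lemma SymKer.U1 (hH : SymKer H) (hn : 3 ≤ n) :
    ∫ X, (dsum n (fun i j k => H (X i) (X j) (X k))
        - n * (((n : ℝ) - 1) * ((n : ℝ) - 2)) * hD μ H) ^ 2
          ∂(Measure.pi fun _ : Fin n => μ)
      ≤ 11000 * ((n : ℝ) ^ 5 * hV2 μ H + (n : ℝ) ^ 3) := by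
  set P := (Measure.pi fun _ : Fin n => μ)
  have hn' : (3 : ℝ) ≤ n := by exact_mod_cast hn
  have u2 := hH.U2 μ n hn
  have m1 := hH.mom1 μ n
  have b1 := hH.bm_A1 μ n
  have bS : BM (fun X : Fin n → E => dsum n (fun i j k => H (X i) (X j) (X k))) := by
    refine BM.sum _ fun i _ => BM.sum _ fun j _ => BM.sum _ fun k _ => BM.ite ?_ _
    exact hH.bm.comp (g := fun X : Fin n → E => ((X i, X j), X k)) (by fun_prop)
  have bR : BM (fun X : Fin n → E => dsum n (fun i j k => H (X i) (X j) (X k))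
        - n * (((n : ℝ) - 1) * ((n : ℝ) - 2)) * hD μ H
        - 3 * ((((n : ℝ) - 1) * ((n : ℝ) - 2)) * ∑ i, hg1 μ H (X i))) :=
      BM.sub (BM.sub bS (BM.const _)) ((BM.const _).mul ((BM.const _).mul b1))
  have : ∀ X : Fin n → E, (dsum n (fun i j k => H (X i) (X j) (X k))
        - n * (((n : ℝ) - 1) * ((n : ℝ) - 2)) * hD μ H) ^ 2
        ≤ 2 * (dsum n (fun i j k => H (X i) (X j) (X k))
        - n * (((n : ℝ) - 1) * ((n : ℝ) - 2)) * hD μ H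
        - 3 * ((((n : ℝ) - 1) * ((n : ℝ) - 2)) * ∑ i, hg1 μ H (X i))) ^ 2 +
          (18 * (n : ℝ) ^ 4) * (∑ i, hg1 μ H (X i)) ^ 2 := by
    intro X
    set a := dsum n (fun i j k => H (X i) (X j) (X k)) -
      n * (((n : ℝ) - 1) * ((n : ℝ) - 2)) * hD μ H
    set b := (∑ i, hg1 μ H (X i))
    have e1 : (((n : ℝ) - 1) * ((n : ℝ) - 2)) ^ 2 * b ^ 2 ≤ ((n : ℝ) * n) ^ 2 * b ^ 2 := by
      have : 0 ≤ (n : ℝ) - 2 := by linarith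
      have : 0 ≤ (n : ℝ) - 1 := by linarith
      gcongr
      · linarith
      · linarith
    nlinarith [sq_nonneg (a - 6 * ((((n : ℝ) - 1) * ((n : ℝ) - 2)) * b))]
  have hm := integral_mono (μ := P) (((bS.sub (BM.const _)).pow 2).integrable P)
    ((((BM.const 2).mul (bR.pow 2)).add
    ((BM.const (18 * (n : ℝ) ^ 4)).mul (b1.pow 2))).integrable P) this
  refine hm.trans ?_
  rw [integral_add (((BM.const 2).mul (bR.pow 2)).integrable P)
      (((BM.const (18 * (n : ℝ) ^ 4)).mul (b1.pow 2)).integrable P), integral_const_mul,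
      integral_const_mul]
  have h4 : 18 * (n : ℝ) ^ 4 * ∫ X, (∑ i, hg1 μ H (X i)) ^ 2 ∂P
      ≤ 18 * (n : ℝ) ^ 4 * (n * hV2 μ H) := by gcongr
  have h5 := SymKer.V2_nonneg μ (H := H)
  have h7 : 0 ≤ (n : ℝ) ^ 3 := by positivity
  have h8 : (n : ℝ) ^ 4 * hV2 μ H ≤ (n : ℝ) ^ 5 * hV2 μ H := by
    gcongr
    · linarith
    · norm_num
  have h6 : 0 ≤ (n : ℝ) ^ 5 * hV2 μ H := by positivity
  nlinarith

end hoeff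

lemma cheb {A : Type*} [MeasurableSpace A] (ν : Measure A) [IsProbabilityMeasure ν]
    {f : A → ℝ} (hf : Integrable (fun x => f x ^ 2) ν) {a : ℝ} (ha : 0 < a) :
    ν.real {x | a ≤ |f x|} ≤ (∫ x, f x ^ 2 ∂ν) / a ^ 2 := by
  have h := mul_meas_ge_le_integral_of_nonneg (μ := ν) (f := fun x => f x ^ 2)
    (Eventually.of_forall fun x => sq_nonneg _) hf (a ^ 2)
  have e : {x | a ^ 2 ≤ f x ^ 2} = {x | a ≤ |f x|} := by
    ext x
    simp only [Set.mem_ofPred_eq]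
    rw [sq_le_sq, abs_of_pos ha]
  rw [e] at h
  rw [le_div_iff₀ (by positivity), mul_comm]
  exact h

/-- edge kernel -/
def xiER (p u : ℝ) : ℝ := (if u ≤ p then 1 else 0) - p

def Kk (p t : ℝ) {d : ℕ} (x y : Fin d → ℝ) : ℝ := (if t ≤ dotp x y then 1 else 0) - p

def Hk (p t : ℝ) {d : ℕ} (x y z : Fin d → ℝ) : ℝ := Kk p t x y * Kk p t x z * Kk p t y z

lemma dotp_comm {d : ℕ} (x y : Fin d → ℝ) : dotp x y = dotp y x := by
  unfold dotp; exact Finset.sum_congr rfl fun i _ => mul_comm _ _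

lemma Kk_symm (p t : ℝ) {d : ℕ} (x y : Fin d → ℝ) : Kk p t x y = Kk p t y x := by
  unfold Kk; rw [dotp_comm]

lemma ind_sub_bd {p : ℝ} (hp : p ∈ Set.Ioo (0 : ℝ) 1) (P : Prop) [Decidable P] :
    |(if P then (1 : ℝ) else 0) - p| ≤ 1 := by
  obtain ⟨h0, h1⟩ := hp
  split_ifs <;> rw [abs_le] <;> constructor <;> linarith

lemma Kk_bd {p : ℝ} (hp : p ∈ Set.Ioo (0 : ℝ) 1) (t : ℝ) {d : ℕ} (x y : Fin d → ℝ) :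
    |Kk p t x y| ≤ 1 := ind_sub_bd hp _

lemma measurable_dotp {d : ℕ} {A : Type*} [MeasurableSpace A] {f g : A → Fin d → ℝ}
    (hf : Measurable f) (hg : Measurable g) : Measurable (fun z => dotp (f z) (g z)) := by
  unfold dotp
  refine Finset.measurable_sum _ fun i _ => ?_
  exact ((measurable_pi_apply i).comp hf).mul ((measurable_pi_apply i).comp hg)

lemma measurable_Kk (p t : ℝ) {d : ℕ} {A : Type*} [MeasurableSpace A] {f g : A → Fin d → ℝ}
    (hf : Measurable f) (hg : Measurable g) : Measurable (fun z => Kk p t (f z) (g z)) := by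
  unfold Kk
  refine Measurable.sub (Measurable.ite ?_ measurable_const measurable_const) measurable_const
  exact measurableSet_le measurable_const (measurable_dotp hf hg)

lemma abs_mul3_le {a b c : ℝ} (ha : |a| ≤ 1) (hb : |b| ≤ 1) (hc : |c| ≤ 1) : |a * b * c| ≤ 1 := by
  rw [abs_mul, abs_mul]
  exact mul_le_one₀ (mul_le_one₀ ha (abs_nonneg _) hb) (abs_nonneg _) hc

lemma Hk_symKer {p : ℝ} (hp : p ∈ Set.Ioo (0 : ℝ) 1) (t : ℝ) {d : ℕ} :
    SymKer (Hk p t (d := d)) where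
  meas := by
    unfold Hk
    exact ((measurable_Kk p t (by fun_prop) (by fun_prop)).mul
      (measurable_Kk p t (by fun_prop) (by fun_prop))).mul
      (measurable_Kk p t (by fun_prop) (by fun_prop))
  bd x y z := abs_mul3_le (Kk_bd hp _ _ _) (Kk_bd hp _ _ _) (Kk_bd hp _ _ _)
  s12 x y z := by unfold Hk; rw [Kk_symm p t x y]; ring
  s23 x y z := by unfold Hk; rw [Kk_symm p t y z]; ring

lemma geo_tau (p t : ℝ) {n d : ℕ} (X : Fin n → Fin d → ℝ) :
    signedTriangles p (SimpleGraph.fromRel fun i j => t ≤ dotp (X i) (X j))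
      = (1 / 6) * dsum n (fun i j k => Hk p t (X i) (X j) (X k)) := by
  unfold signedTriangles dsum
  congr 1
  refine Finset.sum_congr rfl fun i _ => Finset.sum_congr rfl fun j _ =>
    Finset.sum_congr rfl fun k _ => ?_
  split_ifs with h
  · obtain ⟨h1, h2, h3⟩ := h
    simp only [adjInd, SimpleGraph.fromRel_adj, Hk, Kk, dotp_comm (X j) (X i),
      dotp_comm (X k) (X i), dotp_comm (X k) (X j), or_self]
    simp [h1, h2, h3]
  · rfl

lemma er_tau (p : ℝ) {n : ℕ} (x : Sym2 (Fin n) → ℝ) :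
    signedTriangles p (SimpleGraph.fromRel fun i j => x s(i, j) ≤ p)
      = (1 / 6) * dsum n (fun i j k =>
        xiER p (x s(i, j)) * xiER p (x s(i, k)) * xiER p (x s(j, k))) := by
  unfold signedTriangles dsum
  congr 1
  refine Finset.sum_congr rfl fun i _ => Finset.sum_congr rfl fun j _ =>
    Finset.sum_congr rfl fun k _ => ?_
  split_ifs with h
  · obtain ⟨h1, h2, h3⟩ := h
    simp only [adjInd, SimpleGraph.fromRel_adj, xiER, @Sym2.eq_swap _ j i,
      @Sym2.eq_swap _ k i, @Sym2.eq_swap _ k j, or_self]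
    simp [h1, h2, h3]
  · rfl

instance er_prob : IsProbabilityMeasure (volume.restrict (Set.Icc (0 : ℝ) 1)) :=
  ⟨by simp⟩

lemma bm_xi {p : ℝ} (hp : p ∈ Set.Ioo (0 : ℝ) 1) : BM (xiER p) :=
  ⟨by
    unfold xiER
    exact (Measurable.ite measurableSet_Iic measurable_const measurable_const).sub
      measurable_const, 1, fun x => ind_sub_bd hp _⟩

lemma xi_zero {p : ℝ} (hp : p ∈ Set.Ioo (0 : ℝ) 1) :
    ∫ u, xiER p u ∂(volume.restrict (Set.Icc (0 : ℝ) 1)) = 0 := by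
  obtain ⟨h0, h1⟩ := hp
  unfold xiER
  have hi : (fun u : ℝ => if u ≤ p then (1 : ℝ) else 0) = (Set.Iic p).indicator 1 := by
    ext u; simp [Set.indicator_apply]
  rw [integral_sub]
  · rw [hi, integral_indicator_one measurableSet_Iic]
    rw [measureReal_restrict_apply measurableSet_Iic]
    have : Set.Iic p ∩ Set.Icc 0 1 = Set.Icc 0 p := by
      ext u; simp only [Set.mem_inter_iff, Set.mem_Iic, Set.mem_Icc]
      constructor
      · rintro ⟨a, b, c⟩; exact ⟨b, a⟩
      · rintro ⟨a, b⟩; exact ⟨b, a, by linarith⟩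
    rw [this]
    simp [h0.le]
  · rw [hi]
    exact (integrable_const (1 : ℝ)).indicator measurableSet_Iic
  · exact integrable_const _

lemma er_moment {p : ℝ} (hp : p ∈ Set.Ioo (0 : ℝ) 1) (n : ℕ) :
    ∫ x, dsum n (fun i j k => xiER p (x s(i, j)) * xiER p (x s(i, k)) * xiER p (x s(j, k))) ^ 2
        ∂(Measure.pi fun _ : Sym2 (Fin n) => volume.restrict (Set.Icc (0 : ℝ) 1))
      ≤ 27 * (n : ℝ) ^ 3 := by
  set μ := volume.restrict (Set.Icc (0 : ℝ) 1)
  have hz := xi_zero hp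
  have h := second_moment (ι := Sym2 (Fin n)) (κ := Fin n × Fin n × Fin n) μ
    (fun T x => if T.1 ≠ T.2.1 ∧ T.1 ≠ T.2.2 ∧ T.2.1 ≠ T.2.2 then
      xiER p (x s(T.1, T.2.1)) * xiER p (x s(T.1, T.2.2)) * xiER p (x s(T.2.1, T.2.2)) else 0)
    (fun T => {s(T.1, T.2.1), s(T.1, T.2.2), s(T.2.1, T.2.2)}) 1 27 ?_ ?_ ?_ ?_ ?_
  · simp only [Fintype.sum_prod_type] at h
    refine h.trans (le_of_eq ?_)
    simp [Fintype.card_prod]; ring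
  · intro T
    exact BM.ite ((((bm_xi hp).comp (measurable_pi_apply _)).mul
      ((bm_xi hp).comp (measurable_pi_apply _))).mul
      ((bm_xi hp).comp (measurable_pi_apply _))) _
  · intro T a ha X x
    simp only [Finset.mem_insert, Finset.mem_singleton, not_or] at ha
    simp only [Function.update_of_ne (Ne.symm ha.1), Function.update_of_ne (Ne.symm ha.2.1),
      Function.update_of_ne (Ne.symm ha.2.2)]
  · rintro ⟨i, j, k⟩ a ha X
    simp only
    by_cases hd : i ≠ j ∧ i ≠ k ∧ j ≠ k
    · simp only [if_pos hd]
      obtain ⟨h1, h2, h3⟩ := hd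
      have e1 : s(i, j) ≠ s(i, k) := by
        simp only [ne_eq, Sym2.eq_iff]; grind
      have e2 : s(i, j) ≠ s(j, k) := by
        simp only [ne_eq, Sym2.eq_iff]; grind
      have e3 : s(i, k) ≠ s(j, k) := by
        simp only [ne_eq, Sym2.eq_iff]; grind
      simp only [Finset.mem_insert, Finset.mem_singleton] at ha
      rcases ha with rfl | rfl | rfl
      · simp only [Function.update_self, Function.update_of_ne e1.symm,
          Function.update_of_ne e2.symm]
        rw [integral_mul_const, integral_mul_const, hz]; simp
      · simp only [Function.update_self, Function.update_of_ne e1,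
          Function.update_of_ne e3.symm]
        rw [integral_mul_const, integral_const_mul, hz]; simp
      · simp only [Function.update_self, Function.update_of_ne e2,
          Function.update_of_ne e3]
        rw [integral_const_mul, hz]; simp
    · simp only [if_neg hd, integral_zero]
  · intro T
    refine (le_abs_self _).trans (abs_integral_le_one _ fun X => ?_)
    rw [abs_of_nonneg (sq_nonneg _)]
    split_ifs
    · rw [← sq_abs]
      exact pow_le_one₀ (abs_nonneg _)
        (abs_mul3_le (ind_sub_bd hp _) (ind_sub_bd hp _) (ind_sub_bd hp _))
    · norm_num
  · rintro ⟨i, j, k⟩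
    refine card_triple n {i, j, k} Finset.card_le_three _ ?_
    rintro ⟨i', j', k'⟩ hx
    simp only [Finset.mem_filter, Finset.mem_univ, true_and] at hx
    have a1 := hx (show s(i', j') ∈ _ by simp)
    have a2 := hx (show s(i', k') ∈ _ by simp)
    simp only [Finset.mem_insert, Finset.mem_singleton, Sym2.eq_iff] at a1 a2 ⊢
    grind

lemma measurable_graph {A : Type*} [MeasurableSpace A] {n : ℕ} (R : A → Fin n → Fin n → Prop)
    (hR : ∀ i j, MeasurableSet {x | R x i j}) :
    Measurable (fun x => SimpleGraph.fromRel (R x)) := by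
  refine measurable_to_countable' fun G => ?_
  have : (fun x => SimpleGraph.fromRel (R x)) ⁻¹' {G}
      = ⋂ i, ⋂ j, {x | (i ≠ j ∧ (R x i j ∨ R x j i)) ↔ G.Adj i j} := by
    ext x
    simp only [Set.mem_preimage, Set.mem_singleton_iff, Set.mem_iInter, Set.mem_ofPred_eq]
    constructor
    · rintro rfl i j; rw [SimpleGraph.fromRel_adj]
    · intro h; ext i j; rw [SimpleGraph.fromRel_adj]; exact h i j
  rw [this]
  refine MeasurableSet.iInter fun i => MeasurableSet.iInter fun j => ?_
  have hm : MeasurableSet {x | i ≠ j ∧ (R x i j ∨ R x j i)} :=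
    (MeasurableSet.const _).inter ((hR i j).union (hR j i))
  by_cases hG : G.Adj i j
  · simpa only [hG, iff_true] using hm
  · simp only [hG, iff_false]
    exact hm.compl

instance gauss_prob (d : ℕ) (α : Fin d → ℝ) : IsProbabilityMeasure (gaussPi d α) := by
  unfold gaussPi; infer_instance
instance sample_prob (n d : ℕ) (α : Fin d → ℝ) : IsProbabilityMeasure (sampleMeasure n d α) := by
  unfold sampleMeasure; infer_instance

lemma er_meas (n : ℕ) (p : ℝ) : Measurable (fun x : Sym2 (Fin n) → ℝ =>
    SimpleGraph.fromRel fun i j => x s(i, j) ≤ p) :=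
  measurable_graph _ fun i j => measurableSet_le (measurable_pi_apply _) measurable_const

lemma geo_meas (n d : ℕ) (t : ℝ) : Measurable (fun X : Fin n → Fin d → ℝ =>
    SimpleGraph.fromRel fun i j => t ≤ dotp (X i) (X j)) :=
  measurable_graph _ fun i j => measurableSet_le measurable_const
    (measurable_dotp (measurable_pi_apply i) (measurable_pi_apply j))

lemma tau_meas (n : ℕ) (p : ℝ) : Measurable (signedTriangles p (n := n)) := fun _ _ => trivial

lemma tv_le_one {Ω : Type*} [MeasurableSpace Ω] (μ ν : Measure Ω) [IsProbabilityMeasure μ]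
    [IsProbabilityMeasure ν] (s : Set Ω) : |(μ s).toReal - (ν s).toReal| ≤ 1 := by
  have h1 : (μ s).toReal ≤ 1 := measureReal_le_one
  have h2 : (ν s).toReal ≤ 1 := measureReal_le_one
  have h3 : 0 ≤ (μ s).toReal := ENNReal.toReal_nonneg
  have h4 : 0 ≤ (ν s).toReal := ENNReal.toReal_nonneg
  rw [abs_le]; constructor <;> linarith

lemma er_prob' (n : ℕ) (p : ℝ) :
    IsProbabilityMeasure (Measure.map (signedTriangles p) (erGraph n p)) := by
  unfold erGraph
  have := Measure.isProbabilityMeasure_map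
    (μ := (Measure.pi fun _ : Sym2 (Fin n) => volume.restrict (Set.Icc (0 : ℝ) 1)))
    (er_meas n p).aemeasurable
  exact Measure.isProbabilityMeasure_map (tau_meas n p).aemeasurable

lemma geo_prob' (n d : ℕ) (α : Fin d → ℝ) (p t : ℝ) :
    IsProbabilityMeasure (Measure.map (signedTriangles p) (geomGraph n d α t)) := by
  unfold geomGraph
  have := Measure.isProbabilityMeasure_map (μ := sampleMeasure n d α)
    (geo_meas n d t).aemeasurable
  exact Measure.isProbabilityMeasure_map (tau_meas n p).aemeasurable

lemma tv_upper (n d : ℕ) (α : Fin d → ℝ) (p t : ℝ) :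
    tvDist (Measure.map (signedTriangles p) (erGraph n p))
        (Measure.map (signedTriangles p) (geomGraph n d α t)) ≤ 1 := by
  have := er_prob' n p
  have := geo_prob' n d α p t
  unfold tvDist
  have : Nonempty {s : Set ℝ // MeasurableSet s} := ⟨⟨∅, MeasurableSet.empty⟩⟩
  exact ciSup_le fun s => tv_le_one _ _ _

/-- The distinguishing lower bound. -/
lemma tv_lower {p : ℝ} (hp : p ∈ Set.Ioo (0 : ℝ) 1) (n d : ℕ) (α : Fin d → ℝ) (t a δ : ℝ)
    (ha : 0 < a)
    (hδ : (sampleMeasure n d α).real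
      {X | |dsum n (fun i j k => Hk p t (X i) (X j) (X k))| ≤ a} ≤ δ) :
    1 - 27 * (n : ℝ) ^ 3 / a ^ 2 - δ ≤
    tvDist (Measure.map (signedTriangles p) (erGraph n p))
        (Measure.map (signedTriangles p) (geomGraph n d α t)) := by
  have i1 := er_prob' n p
  have i2 := geo_prob' n d α p t
  have hbdd : BddAbove (Set.range fun s : {s : Set ℝ // MeasurableSet s} =>
      |((Measure.map (signedTriangles p) (erGraph n p)) s.1).toReal -
        ((Measure.map (signedTriangles p) (geomGraph n d α t)) s.1).toReal|) := by
    refine ⟨1, ?_⟩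
    rintro _ ⟨s, rfl⟩
    exact tv_le_one _ _ _
  have hS : MeasurableSet {u : ℝ | |u| ≤ a / 6} :=
    measurableSet_le measurable_norm measurable_const
  refine le_trans ?_ (le_ciSup hbdd ⟨_, hS⟩)
  refine le_trans ?_ (le_abs_self _)
  simp only
  have e2 : ((Measure.map (signedTriangles p) (geomGraph n d α t)) {u : ℝ | |u| ≤ a / 6}).toReal
      ≤ δ := by
    unfold geomGraph
    rw [Measure.map_apply (tau_meas n p) hS, Measure.map_apply (geo_meas n d t) (tau_meas n p hS)]
    refine le_trans (le_of_eq ?_) hδ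
    rw [Measure.real]
    congr 2
    ext X
    simp only [Set.mem_preimage, Set.mem_ofPred_eq, geo_tau, abs_mul]
    rw [abs_of_pos (by norm_num : (0 : ℝ) < 1 / 6)]
    constructor <;> intro h <;> linarith
  have e1 : 1 - 27 * (n : ℝ) ^ 3 / a ^ 2 ≤
      ((Measure.map (signedTriangles p) (erGraph n p)) {u : ℝ | |u| ≤ a / 6}).toReal := by
    unfold erGraph
    rw [Measure.map_apply (tau_meas n p) hS, Measure.map_apply (er_meas n p) (tau_meas n p hS)]
    set P := (Measure.pi fun _ : Sym2 (Fin n) => volume.restrict (Set.Icc (0 : ℝ) 1))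
    set F : (Sym2 (Fin n) → ℝ) → ℝ := fun x => dsum n (fun i j k =>
        xiER p (x s(i, j)) * xiER p (x s(i, k)) * xiER p (x s(j, k))) with hF
    have hFb : BM F := by
      refine BM.sum _ fun i _ => BM.sum _ fun j _ => BM.sum _ fun k _ => BM.ite ?_ _
      exact (((bm_xi hp).comp (measurable_pi_apply _)).mul
        ((bm_xi hp).comp (measurable_pi_apply _))).mul
        ((bm_xi hp).comp (measurable_pi_apply _))
    have hc := cheb P ((hFb.pow 2).integrable P) ha
    have hm := er_moment hp n
    have hle : P.real {x | a ≤ |F x|} ≤ 27 * (n : ℝ) ^ 3 / a ^ 2 :=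
      hc.trans (by gcongr)
    have hcompl : P.real {x | a ≤ |F x|}ᶜ = 1 - P.real {x | a ≤ |F x|} :=
      probReal_compl_eq_one_sub (measurableSet_le measurable_const hFb.1.norm)
    have hsub : P.real {x | a ≤ |F x|}ᶜ ≤ P.real ((fun x : Sym2 (Fin n) → ℝ =>
        SimpleGraph.fromRel fun i j => x s(i, j) ≤ p) ⁻¹'
        (signedTriangles p ⁻¹' {u : ℝ | |u| ≤ a / 6})) := by
      refine measureReal_mono ?_
      intro x hx
      simp only [Set.mem_compl_iff, Set.mem_ofPred_eq, not_le] at hx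
      simp only [Set.mem_preimage, Set.mem_ofPred_eq, er_tau, abs_mul]
      rw [abs_of_pos (by norm_num : (0 : ℝ) < 1 / 6)]
      simp only [hF] at hx
      linarith
    rw [hcompl] at hsub
    refine le_trans ?_ hsub
    linarith
  linarith

lemma gaussPDF_le (m : ℝ) (v : ℝ≥0) (x : ℝ) :
    gaussianPDFReal m v x ≤ (√(2 * π * v))⁻¹ := by
  rw [gaussianPDFReal]
  have : rexp (-(x - m) ^ 2 / (2 * v)) ≤ 1 := by
    rw [Real.exp_le_one_iff]
    apply div_nonpos_of_nonpos_of_nonneg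
    · nlinarith [sq_nonneg (x - m)]
    · positivity
  calc (√(2 * π * v))⁻¹ * rexp (-(x - m) ^ 2 / (2 * v)) ≤ (√(2 * π * v))⁻¹ * 1 := by gcongr
    _ = _ := mul_one _

lemma gauss_Icc_le (m : ℝ) {v : ℝ≥0} (hv : v ≠ 0) {a b : ℝ} (hab : a ≤ b) :
    (gaussianReal m v).real (Set.Icc a b) ≤ (b - a) * (√(2 * π * v))⁻¹ := by
  rw [Measure.real, gaussianReal_apply_eq_integral m hv]
  rw [ENNReal.toReal_ofReal (integral_nonneg fun x => gaussianPDFReal_nonneg _ _ _)]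
  have h := setIntegral_mono_on (μ := volume) (s := Set.Icc a b)
    (f := gaussianPDFReal m v) (g := fun _ => (√(2 * π * v))⁻¹)
    (integrable_gaussianPDFReal m v).integrableOn
    (integrableOn_const (by simp)) measurableSet_Icc (fun x _ => gaussPDF_le m v x)
  refine h.trans (le_of_eq ?_)
  simp [hab]

section anti
variable {E : Type*} [MeasurableSpace E] (μ : Measure E) [IsProbabilityMeasure μ]

lemma charfn_bound {f : E → ℝ} (hf : Measurable f) (hb : ∀ x, |f x| ≤ 1) {v0 : ℝ}
    (hv : v0 ≤ ∫ x, f x ^ 2 ∂μ - (∫ x, f x ∂μ) ^ 2) {θ : ℝ} (hθ : |θ| ≤ 1) :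
    ‖∫ x, Complex.exp (θ * f x * Complex.I) ∂μ‖ ^ 2 ≤ 1 - (2 / 5) * θ ^ 2 * v0 := by
  have bf : BM f := ⟨hf, 1, hb⟩
  have bc : BM (fun x => Real.cos (θ * f x)) :=
    ⟨Real.measurable_cos.comp (hf.const_mul θ), 1, fun x => Real.abs_cos_le_one _⟩
  have bs : BM (fun x => Real.sin (θ * f x)) :=
    ⟨Real.measurable_sin.comp (hf.const_mul θ), 1, fun x => Real.abs_sin_le_one _⟩
  have e : ∫ x, Complex.exp (θ * f x * Complex.I) ∂μ
      = ((∫ x, Real.cos (θ * f x) ∂μ : ℝ) : ℂ) + ((∫ x, Real.sin (θ * f x) ∂μ : ℝ) : ℂ) * Complex.I := by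
    rw [← integral_complex_ofReal, ← integral_complex_ofReal, ← integral_mul_const,
      ← integral_add]
    · refine integral_congr_ae (Eventually.of_forall fun x => ?_)
      simp only
      rw [← Complex.ofReal_mul, Complex.exp_mul_I, Complex.ofReal_cos, Complex.ofReal_sin]
    · exact (bc.integrable μ).ofReal
    · exact ((bs.integrable μ).ofReal).mul_const _
  rw [e, ← Complex.normSq_eq_norm_sq, Complex.normSq_add_mul_I]
  set C := ∫ x, Real.cos (θ * f x) ∂μ with hC
  set S := ∫ x, Real.sin (θ * f x) ∂μ with hS
  have key : C ^ 2 + S ^ 2 = ∫ x, ∫ y, Real.cos (θ * f x - θ * f y) ∂μ ∂μ := by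
    have : ∀ x, ∫ y, Real.cos (θ * f x - θ * f y) ∂μ
        = Real.cos (θ * f x) * C + Real.sin (θ * f x) * S := by
      intro x
      simp only [Real.cos_sub]
      rw [BM.iadd ((BM.const _).mul bc) ((BM.const _).mul bs), integral_const_mul,
        integral_const_mul]
    simp only [this]
    rw [BM.iadd (bc.mul (BM.const _)) (bs.mul (BM.const _)), integral_mul_const,
        integral_mul_const, ← hC, ← hS]
    ring
  rw [key]
  have b2 := bf.pow 2
  have hpt : ∀ x y, Real.cos (θ * f x - θ * f y) ≤ 1 - (1 / 5) * θ ^ 2 * (f x - f y) ^ 2 := by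
    intro x y
    have h1 : |θ * f x - θ * f y| ≤ π := by
      rw [← mul_sub, abs_mul]
      have h2 : |f x - f y| ≤ 2 := by
        have := abs_le.1 (hb x); have := abs_le.1 (hb y)
        rw [abs_le]; constructor <;> linarith
      have h3 := Real.pi_gt_three
      nlinarith [abs_nonneg θ, abs_nonneg (f x - f y)]
    have h2 := Real.cos_le_one_sub_mul_cos_sq h1
    have hpi : 1 / 5 ≤ 2 / π ^ 2 := by
      rw [le_div_iff₀ (by positivity)]
      have := Real.pi_lt_d2
      nlinarith [Real.pi_pos]
    have h3 : Real.cos (θ * f x - θ * f y) ≤ 1 - 2 / π ^ 2 * (θ * f x - θ * f y) ^ 2 :=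
      h2
    nlinarith [sq_nonneg (θ * f x - θ * f y)]
  set m := ∫ x, f x ∂μ with hm
  set M := ∫ x, f x ^ 2 ∂μ with hM
  have hin : ∀ x, ∫ y, Real.cos (θ * f x - θ * f y) ∂μ
      ≤ 1 - (1 / 5) * θ ^ 2 * (f x ^ 2 - 2 * m * f x + M) := by
    intro x
    have : ∫ y, Real.cos (θ * f x - θ * f y) ∂μ ≤ ∫ y, ((1 - (1 / 5) * θ ^ 2 * f x ^ 2)
        + ((2 / 5) * θ ^ 2 * f x) * f y - ((1 / 5) * θ ^ 2) * f y ^ 2) ∂μ := by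
      refine integral_mono ?_ ((((BM.const _).add ((BM.const _).mul bf)).sub
        ((BM.const _).mul b2)).integrable μ) fun y => ?_
      · exact (BM.integrable ⟨Real.measurable_cos.comp ((hf.const_mul θ).const_sub _), 1,
          fun x => Real.abs_cos_le_one _⟩ μ)
      · refine (hpt x y).trans (le_of_eq ?_)
        ring
    refine this.trans (le_of_eq ?_)
    rw [BM.isub ((BM.const _).add ((BM.const _).mul bf)) ((BM.const _).mul b2),
      BM.iadd (BM.const _) ((BM.const _).mul bf), integral_const_mul, integral_const_mul,
      ← hm, ← hM]
    simp
    ring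
  have hbig : BM (fun x => ∫ y, Real.cos (θ * f x - θ * f y) ∂μ) := by
    refine BM.integral_right (F := fun x y => Real.cos (θ * f x - θ * f y)) ⟨?_, 1,
      fun z => Real.abs_cos_le_one _⟩ μ
    exact Real.measurable_cos.comp (((hf.comp measurable_fst).const_mul θ).sub
      ((hf.comp measurable_snd).const_mul θ))
  have : ∫ x, ∫ y, Real.cos (θ * f x - θ * f y) ∂μ ∂μ
      ≤ ∫ x, ((1 - (1 / 5) * θ ^ 2 * M) + ((2 / 5) * θ ^ 2 * m) * f x
        - ((1 / 5) * θ ^ 2) * f x ^ 2) ∂μ := by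
    refine integral_mono (hbig.integrable μ) ((((BM.const _).add ((BM.const _).mul bf)).sub
        ((BM.const _).mul b2)).integrable μ) fun x => ?_
    refine (hin x).trans (le_of_eq ?_)
    ring
  refine this.trans ?_
  rw [BM.isub ((BM.const _).add ((BM.const _).mul bf)) ((BM.const _).mul b2),
      BM.iadd (BM.const _) ((BM.const _).mul bf), integral_const_mul, integral_const_mul,
      ← hm, ← hM]
  simp
  nlinarith [mul_le_mul_of_nonneg_left hv (sq_nonneg θ)]

lemma gauss_smooth (s : ℝ) : ∫ g, Complex.exp (s * g * Complex.I) ∂(gaussianReal 0 1)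
    = ((rexp (- s ^ 2 / 2) : ℝ) : ℂ) := by
  have := charFun_gaussianReal (μ := 0) (v := 1) s
  rw [charFun_apply_real] at this
  rw [this]
  push_cast
  congr 1
  simp
  ring

lemma anticonc (n : ℕ) {f : E → ℝ} (hf : Measurable f) (hb : ∀ x, |f x| ≤ 1) {v0 : ℝ}
    (hv0 : 0 ≤ v0)
    (hv : v0 ≤ ∫ x, f x ^ 2 ∂μ - (∫ x, f x ∂μ) ^ 2) (b : ℝ) {L η : ℝ} (hL : 0 < L)
    (hη : 0 < η) :
    (Measure.pi fun _ : Fin n => μ).real {X | |∑ i, f (X i) - b| ≤ L}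
      ≤ 2 * (rexp (-(n * v0 * η ^ 2 / (5 * L ^ 2))) + η + 1 / L ^ 2) := by
  set P := Measure.pi fun _ : Fin n => μ
  set γ := gaussianReal 0 1
  set T : (Fin n → E) → ℝ := fun X => ∑ i, f (X i) with hT
  have mT : Measurable T := Finset.measurable_sum _ fun i _ => hf.comp (measurable_pi_apply i)
  -- step 1
  have s1 : P.real {X | |T X - b| ≤ L} ≤ 2 * ∫ X, rexp (-((T X - b) / L) ^ 2 / 2) ∂P := by
    have hms : MeasurableSet {X | |T X - b| ≤ L} :=
      measurableSet_le (mT.sub_const b).norm measurable_const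
    rw [← integral_const_mul, ← integral_indicator_one hms]
    have bme : BM (fun X => rexp (-((T X - b) / L) ^ 2 / 2)) := by
      refine ⟨by fun_prop, 1, fun X => ?_⟩
      rw [abs_of_pos (Real.exp_pos _), Real.exp_le_one_iff]
      nlinarith [sq_nonneg ((T X - b) / L)]
    refine integral_mono ((integrable_const (1 : ℝ)).indicator hms)
      (((BM.const 2).mul bme).integrable P) fun X => ?_
    simp only [Set.indicator_apply, Pi.one_apply]
    split_ifs with h
    · have h1 : ((T X - b) / L) ^ 2 ≤ 1 := by
        rw [div_pow, div_le_one (by positivity), sq_le_sq, abs_of_pos hL]; exact h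
      have h2 : rexp (-1/2) ≤ rexp (-((T X - b) / L) ^ 2 / 2) := by
        apply Real.exp_le_exp.2; linarith
      have h3 : 1 / 2 ≤ rexp (-1/2) := by
        have := Real.add_one_le_exp (-1/2); linarith
      linarith
    · positivity
  refine s1.trans ?_
  have hmeasJ : Measurable (fun z : (Fin n → E) × ℝ =>
      Complex.exp (((T z.1 - b) / L : ℝ) * z.2 * Complex.I)) := by
    have : Measurable (fun z : (Fin n → E) × ℝ => (T z.1 - b) / L) :=
      ((mT.comp measurable_fst).sub_const b).div_const L
    fun_prop
  have hintJ : Integrable (fun z : (Fin n → E) × ℝ =>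
      Complex.exp (((T z.1 - b) / L : ℝ) * z.2 * Complex.I)) (P.prod γ) := by
    refine Integrable.of_bound hmeasJ.aestronglyMeasurable 1 (Eventually.of_forall fun z => ?_)
    rw [← Complex.ofReal_mul, Complex.norm_exp_ofReal_mul_I]
  have s2 : ((∫ X, rexp (-((T X - b) / L) ^ 2 / 2) ∂P : ℝ) : ℂ)
      = ∫ g, ∫ X, Complex.exp (((T X - b) / L : ℝ) * g * Complex.I) ∂P ∂γ := by
    rw [← integral_complex_ofReal, ← integral_integral_swap hintJ]
    refine integral_congr_ae (Eventually.of_forall fun X => ?_)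
    exact (gauss_smooth _).symm
  have s3 : ∀ g : ℝ, ∫ X, Complex.exp (((T X - b) / L : ℝ) * g * Complex.I) ∂P
      = Complex.exp ((-(b * g / L) : ℝ) * Complex.I)
        * (∫ x, Complex.exp (((g / L : ℝ) : ℂ) * f x * Complex.I) ∂μ) ^ n := by
    intro g
    have := integral_fintype_prod_eq_pow (μ := μ) (ι := Fin n)
      (fun x => Complex.exp (((g / L : ℝ) : ℂ) * f x * Complex.I))
    rw [Fintype.card_fin] at this
    rw [← this, ← integral_const_mul]
    refine integral_congr_ae (Eventually.of_forall fun X => ?_)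
    simp only [hT]
    rw [← Complex.exp_sum, ← Complex.exp_add]
    congr 1
    rw [← Finset.sum_mul, ← Finset.mul_sum]
    push_cast
    field_simp
    ring
  have s4 : ∫ X, rexp (-((T X - b) / L) ^ 2 / 2) ∂P
      ≤ ∫ g, ‖∫ x, Complex.exp (((g / L : ℝ) : ℂ) * f x * Complex.I) ∂μ‖ ^ n ∂γ := by
    have h0 : ∫ X, rexp (-((T X - b) / L) ^ 2 / 2) ∂P
        = ‖((∫ X, rexp (-((T X - b) / L) ^ 2 / 2) ∂P : ℝ) : ℂ)‖ := by
      rw [Complex.norm_real, Real.norm_of_nonneg]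
      exact integral_nonneg fun X => (Real.exp_pos _).le
    rw [h0, s2]
    refine (norm_integral_le_integral_norm _).trans (le_of_eq ?_)
    refine integral_congr_ae (Eventually.of_forall fun g => ?_)
    simp only [s3]
    rw [norm_mul, Complex.norm_exp_ofReal_mul_I, one_mul, norm_pow]
  set A : Set ℝ := Set.Icc (-η) η
  set B : Set ℝ := {g | L ≤ |id g|}
  set q := rexp (-(n * v0 * η ^ 2 / (5 * L ^ 2)))
  have hAm : MeasurableSet A := measurableSet_Icc
  have hBm : MeasurableSet B := measurableSet_le measurable_const measurable_id.norm
  have hbd1 : ∀ θ : ℝ, ‖∫ x, Complex.exp ((θ : ℂ) * f x * Complex.I) ∂μ‖ ≤ 1 := by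
    intro θ
    have := norm_integral_le_of_norm_le_const (μ := μ)
      (f := fun x => Complex.exp ((θ : ℂ) * f x * Complex.I)) (C := 1)
      (Eventually.of_forall fun x => by
        rw [← Complex.ofReal_mul, Complex.norm_exp_ofReal_mul_I])
    simpa using this
  have s5 : ∀ g : ℝ, ‖∫ x, Complex.exp (((g / L : ℝ) : ℂ) * f x * Complex.I) ∂μ‖ ^ n
      ≤ q + A.indicator 1 g + B.indicator 1 g := by
    intro g
    set N := ‖∫ x, Complex.exp (((g / L : ℝ) : ℂ) * f x * Complex.I) ∂μ‖ with hN
    have hN1 : N ≤ 1 := hbd1 _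
    have hN0 : 0 ≤ N := norm_nonneg _
    have hNn : N ^ n ≤ 1 := pow_le_one₀ hN0 hN1
    have hq : 0 < q := Real.exp_pos _
    have hA0 : 0 ≤ A.indicator (1 : ℝ → ℝ) g := Set.indicator_nonneg (fun _ _ => zero_le_one) _
    have hB0 : 0 ≤ B.indicator (1 : ℝ → ℝ) g := Set.indicator_nonneg (fun _ _ => zero_le_one) _
    by_cases hgA : g ∈ A
    · rw [Set.indicator_of_mem hgA, Pi.one_apply]; linarith
    by_cases hgB : g ∈ B
    · rw [Set.indicator_of_mem hgB, Pi.one_apply]; linarith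
    have h1 : η ≤ |g| := by
      by_contra h
      push Not at h
      exact hgA (abs_le.1 h.le)
    have h2 : |g / L| ≤ 1 := by
      have : ¬ L ≤ |g| := hgB
      rw [abs_div, abs_of_pos hL, div_le_one hL]; linarith
    have h3 := charfn_bound μ hf hb hv h2
    rw [← hN] at h3
    have h4 : N ^ 2 ≤ rexp (-((2 / 5) * (g / L) ^ 2 * v0)) := by
      refine h3.trans ?_
      have := Real.add_one_le_exp (-((2 / 5) * (g / L) ^ 2 * v0))
      linarith
    have h5 : N ≤ rexp (-((1 / 5) * (g / L) ^ 2 * v0)) := by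
      refine le_of_sq_le_sq ?_ (Real.exp_pos _).le
      refine h4.trans (le_of_eq ?_)
      rw [← Real.exp_nat_mul]
      congr 1; push_cast; ring
    have h6 : N ^ n ≤ q := by
      calc N ^ n ≤ (rexp (-((1 / 5) * (g / L) ^ 2 * v0))) ^ n := by gcongr
        _ = rexp (n * (-((1 / 5) * (g / L) ^ 2 * v0))) := by rw [← Real.exp_nat_mul]
        _ ≤ q := by
          apply Real.exp_le_exp.2
          have : η ^ 2 ≤ g ^ 2 := by rw [sq_le_sq, abs_of_pos hη]; exact h1
          have h7 : n * v0 * η ^ 2 / (5 * L ^ 2) ≤ n * v0 * g ^ 2 / (5 * L ^ 2) := by gcongr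
          have h8 : n * v0 * g ^ 2 / (5 * L ^ 2) = n * ((1 / 5) * (g / L) ^ 2 * v0) := by
            field_simp
          linarith
    linarith
  have s6 : ∫ g, ‖∫ x, Complex.exp (((g / L : ℝ) : ℂ) * f x * Complex.I) ∂μ‖ ^ n ∂γ
      ≤ ∫ g, (q + A.indicator 1 g + B.indicator 1 g) ∂γ := by
    refine integral_mono_of_nonneg (Eventually.of_forall fun g => by positivity) ?_
      (Eventually.of_forall s5)
    exact ((integrable_const q).add ((integrable_const (1 : ℝ)).indicator hAm)).add
      ((integrable_const (1 : ℝ)).indicator hBm)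
  have s7 : ∫ g, (q + A.indicator 1 g + B.indicator 1 g) ∂γ = q + γ.real A + γ.real B := by
    rw [integral_add, integral_add, integral_indicator_one hAm, integral_indicator_one hBm]
    · simp
    · exact integrable_const q
    · exact (integrable_const (1 : ℝ)).indicator hAm
    · exact ((integrable_const q).add ((integrable_const (1 : ℝ)).indicator hAm))
    · exact (integrable_const (1 : ℝ)).indicator hBm
  have s8 : γ.real A ≤ η := by
    refine (gauss_Icc_le 0 one_ne_zero (by linarith : -η ≤ η)).trans ?_
    have : 2 ≤ √(2 * π * (1 : ℝ≥0)) := by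
      apply Real.le_sqrt_of_sq_le
      have := Real.pi_gt_three
      push_cast; linarith
    have h2 : (√(2 * π * (1 : ℝ≥0)))⁻¹ ≤ 2⁻¹ := by gcongr
    nlinarith
  have s9 : γ.real B ≤ 1 / L ^ 2 := by
    have hi : Integrable (fun x : ℝ => id x ^ 2) γ := by
      have := (memLp_id_gaussianReal' (μ := 0) (v := 1) 2 (by simp)).integrable_sq
      exact this
    refine (cheb γ hi hL).trans (le_of_eq ?_)
    have hv := variance_id_gaussianReal (μ := 0) (v := 1)
    rw [variance_of_integral_eq_zero aemeasurable_id (by simp [integral_id_gaussianReal])] at hv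
    rw [hv]; simp
  linarith
end anti

lemma gp_eval_mp (d : ℕ) (α : Fin d → ℝ) (i : Fin d) :
    MeasurePreserving (fun z : Fin d → ℝ => z i) (gaussPi d α)
      (gaussianReal 0 (Real.toNNReal (α i))) :=
  measurePreserving_eval (fun i => gaussianReal 0 (Real.toNNReal (α i))) i

lemma gp_coord_law (d : ℕ) (α : Fin d → ℝ) (i : Fin d) :
    HasGaussianLaw (fun z : Fin d → ℝ => z i) (gaussPi d α) where
  isGaussian_map := by
    rw [(gp_eval_mp d α i).map_eq]; infer_instance

lemma gp_indep (d : ℕ) (α : Fin d → ℝ) :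
    iIndepFun (fun (i : Fin d) (z : Fin d → ℝ) => z i) (gaussPi d α) :=
  iIndepFun_pi (X := fun _ => id) (fun _ => aemeasurable_id)

lemma gp_law (d : ℕ) (α : Fin d → ℝ) :
    HasGaussianLaw (fun z : Fin d → ℝ => z) (gaussPi d α) :=
  (gp_indep d α).hasGaussianLaw (gp_coord_law d α)

def dotL {d : ℕ} (c : Fin d → ℝ) : (Fin d → ℝ) →L[ℝ] ℝ :=
  ∑ i, c i • ContinuousLinearMap.proj i

lemma dotL_apply {d : ℕ} (c z : Fin d → ℝ) : dotL c z = dotp c z := by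
  simp [dotL, dotp]

lemma gp_dot_law {d : ℕ} (α c : Fin d → ℝ) :
    HasGaussianLaw (fun z => dotp c z) (gaussPi d α) := by
  have := (gp_law d α).map_fun (dotL c)
  simpa only [dotL_apply] using this

lemma gp_pair_law {d : ℕ} (α c e : Fin d → ℝ) :
    HasGaussianLaw (fun z => (dotp c z, dotp e z)) (gaussPi d α) := by
  have := (gp_law d α).map_fun ((dotL c).prod (dotL e))
  simpa only [ContinuousLinearMap.prod_apply, dotL_apply] using this

lemma gp_coord_mean {d : ℕ} (α : Fin d → ℝ) (i : Fin d) :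
    ∫ z, z i ∂(gaussPi d α) = 0 := by
  have h := (gp_eval_mp d α i).map_eq
  have := integral_map (μ := gaussPi d α) (φ := fun z : Fin d → ℝ => z i) (f := fun u : ℝ => u)
    (measurable_pi_apply i).aemeasurable (by fun_prop)
  rw [← this, h, integral_id_gaussianReal]

lemma gp_coord_var {d : ℕ} (α : Fin d → ℝ) (hα : ∀ i, 0 ≤ α i) (i : Fin d) :
    Var[fun z => z i; gaussPi d α] = α i := by
  have h := (gp_eval_mp d α i).map_eq
  have := variance_map (μ := gaussPi d α) (Y := fun z : Fin d → ℝ => z i) (X := fun u : ℝ => u)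
    (by fun_prop) (measurable_pi_apply i).aemeasurable
  rw [h, variance_fun_id_gaussianReal] at this
  rw [Function.comp_def] at this
  rw [← this, Real.coe_toNNReal _ (hα i)]

lemma gp_coord_memLp {d : ℕ} (α : Fin d → ℝ) (i : Fin d) (q : ℝ≥0∞) (hq : q ≠ ⊤) :
    MemLp (fun z => z i) q (gaussPi d α) := (gp_coord_law d α i).memLp hq

lemma gp_dot_memLp {d : ℕ} (α c : Fin d → ℝ) (q : ℝ≥0∞) (hq : q ≠ ⊤) :
    MemLp (fun z => dotp c z) q (gaussPi d α) := (gp_dot_law α c).memLp hq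

lemma gp_dot_mean {d : ℕ} (α c : Fin d → ℝ) : ∫ z, dotp c z ∂(gaussPi d α) = 0 := by
  unfold dotp
  rw [integral_finsetSum]
  · simp [integral_const_mul, gp_coord_mean]
  · intro i _
    exact ((gp_coord_law d α i).integrable).const_mul _

lemma gp_cov {d : ℕ} (α : Fin d → ℝ) (hα : ∀ i, 0 ≤ α i) (c e : Fin d → ℝ) :
    cov[fun z => dotp c z, fun z => dotp e z; gaussPi d α] = ∑ i, c i * e i * α i := by
  unfold dotp
  rw [covariance_fun_sum_fun_sum (X := fun i (z : Fin d → ℝ) => c i * z i)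
    (Y := fun i (z : Fin d → ℝ) => e i * z i)
    (fun i => (gp_coord_memLp α i 2 (by simp)).const_mul _)
    (fun i => (gp_coord_memLp α i 2 (by simp)).const_mul _)]
  refine Finset.sum_congr rfl fun i _ => ?_
  rw [Finset.sum_eq_single i]
  · rw [covariance_const_mul_left, covariance_const_mul_right, covariance_self (measurable_pi_apply i).aemeasurable,
      gp_coord_var α hα]; ring
  · intro j _ hj
    rw [covariance_const_mul_left, covariance_const_mul_right,
      ((gp_indep d α).indepFun hj.symm).covariance_eq_zero (gp_coord_memLp α i 2 (by simp))
      (gp_coord_memLp α j 2 (by simp))]; ring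
  · simp

lemma gp_dot_var {d : ℕ} (α : Fin d → ℝ) (hα : ∀ i, 0 ≤ α i) (c : Fin d → ℝ) :
    Var[fun z => dotp c z; gaussPi d α] = ∑ i, c i ^ 2 * α i := by
  rw [← covariance_self (by exact (gp_dot_law α c).aemeasurable), gp_cov α hα]
  exact Finset.sum_congr rfl fun i _ => by ring

lemma gp_map_dot {d : ℕ} (α : Fin d → ℝ) (hα : ∀ i, 0 ≤ α i) (c : Fin d → ℝ) :
    (gaussPi d α).map (fun z => dotp c z) =
      gaussianReal 0 (Real.toNNReal (∑ i, c i ^ 2 * α i)) := by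
  rw [(gp_dot_law α c).map_eq_gaussianReal, gp_dot_var α hα, gp_dot_mean]

lemma gp_map_pair {d : ℕ} (α : Fin d → ℝ) (hα : ∀ i, 0 ≤ α i) (c e : Fin d → ℝ)
    (h : ∑ i, c i * e i * α i = 0) :
    (gaussPi d α).map (fun z => (dotp c z, dotp e z)) =
      (gaussianReal 0 (Real.toNNReal (∑ i, c i ^ 2 * α i))).prod
        (gaussianReal 0 (Real.toNNReal (∑ i, e i ^ 2 * α i))) := by
  have hi := (gp_pair_law α c e).indepFun_of_covariance_eq_zero (by rw [gp_cov α hα, h])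
  rw [indepFun_iff_map_prod_eq_prod_map_map (gp_dot_law α c).aemeasurable
    (gp_dot_law α e).aemeasurable] at hi
  rw [hi, gp_map_dot α hα, gp_map_dot α hα]

lemma gp_cov_int {d : ℕ} (α : Fin d → ℝ) (hα : ∀ i, 0 ≤ α i) (c e : Fin d → ℝ) :
    ∫ z, dotp c z * dotp e z ∂(gaussPi d α) = ∑ i, c i * e i * α i := by
  have := gp_cov α hα c e
  rw [covariance] at this
  simpa only [gp_dot_mean, sub_zero] using this

lemma gp_dot_sq {d : ℕ} (α : Fin d → ℝ) (hα : ∀ i, 0 ≤ α i) (c : Fin d → ℝ) :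
    ∫ z, dotp c z ^ 2 ∂(gaussPi d α) = ∑ i, c i ^ 2 * α i := by
  simp only [pow_two]
  exact gp_cov_int α hα c c

lemma gp_dot_int {d : ℕ} (α c : Fin d → ℝ) : Integrable (fun z => dotp c z) (gaussPi d α) :=
  (gp_dot_law α c).integrable

lemma gp_dot_sq_int {d : ℕ} (α c : Fin d → ℝ) :
    Integrable (fun z => dotp c z ^ 2) (gaussPi d α) :=
  (gp_dot_law α c).memLp_two.integrable_sq

/-- weighted sum of squares of coordinates -/
def quad {d : ℕ} (c x : Fin d → ℝ) : ℝ := ∑ i, c i * x i ^ 2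

lemma gp_coord_sq {d : ℕ} (α : Fin d → ℝ) (hα : ∀ i, 0 ≤ α i) (i : Fin d) :
    ∫ z, z i ^ 2 ∂(gaussPi d α) = α i := by
  have := gp_coord_var α hα i
  rw [variance_eq_integral (measurable_pi_apply i).aemeasurable, gp_coord_mean] at this
  simpa using this

lemma quad_int {d : ℕ} (α c : Fin d → ℝ) : Integrable (fun x => quad c x) (gaussPi d α) := by
  unfold quad
  exact integrable_finsetSum _ fun i _ =>
    ((gp_coord_memLp α i 2 (by simp)).integrable_sq).const_mul _

lemma quad_mean {d : ℕ} (α : Fin d → ℝ) (hα : ∀ i, 0 ≤ α i) (c : Fin d → ℝ) :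
    ∫ x, quad c x ∂(gaussPi d α) = ∑ i, c i * α i := by
  unfold quad
  rw [integral_finsetSum]
  · simp [integral_const_mul, gp_coord_sq α hα]
  · intro i _
    exact ((gp_coord_memLp α i 2 (by simp)).integrable_sq).const_mul _

/-- variance of the square of a standard Gaussian -/
def kap : ℝ := Var[fun u : ℝ => u ^ 2; gaussianReal 0 1]

lemma kap_nonneg : 0 ≤ kap := variance_nonneg _ _

lemma sq_memLp (v : ℝ≥0) : MemLp (fun u : ℝ => u ^ 2) 2 (gaussianReal 0 v) := by
  have h : MemLp (fun u : ℝ => u) 4 (gaussianReal 0 v) := memLp_id_gaussianReal 4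
  have : MemLp (fun u : ℝ => u * u) 2 (gaussianReal 0 v) :=
    MemLp.mul (p := 4) (q := 4) h h (hpqr := ⟨by
      have h4 : (4 : ℝ≥0∞) = 2 * 2 := by norm_num
      rw [h4, ENNReal.mul_inv (by simp) (by simp), ← mul_add, ENNReal.inv_two_add_inv_two,
        mul_one]⟩)
  simpa only [pow_two] using this

lemma var_sq (v : ℝ) (hv : 0 ≤ v) :
    Var[fun u : ℝ => u ^ 2; gaussianReal 0 v.toNNReal] = v ^ 2 * kap := by
  have hm : (gaussianReal 0 1).map (fun u => √v * u) = gaussianReal 0 v.toNNReal := by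
    rw [gaussianReal_map_const_mul]
    congr 1
    · simp
    · ext; simp [Real.sq_sqrt hv, hv]
  rw [← hm, variance_map (by fun_prop) (by fun_prop)]
  have : (fun u : ℝ => u ^ 2) ∘ (fun u => √v * u) = fun u => v * u ^ 2 := by
    ext u; simp only [Function.comp]; rw [mul_pow, Real.sq_sqrt hv]
  rw [this, variance_const_mul]; rfl

lemma quad_memLp {d : ℕ} (α c : Fin d → ℝ) : MemLp (fun x => quad c x) 2 (gaussPi d α) := by
  unfold quad
  refine memLp_finsetSum _ fun i _ => MemLp.const_mul ?_ _
  exact (sq_memLp _).comp_measurePreserving (gp_eval_mp d α i)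

lemma quad_var {d : ℕ} (α : Fin d → ℝ) (hα : ∀ i, 0 ≤ α i) (c : Fin d → ℝ) :
    ∫ x, (quad c x - ∑ i, c i * α i) ^ 2 ∂(gaussPi d α) = kap * ∑ i, c i ^ 2 * α i ^ 2 := by
  have h1 := variance_sum_pi (μ := fun i => gaussianReal 0 (Real.toNNReal (α i)))
    (X := fun i u => c i * u ^ 2) (fun i => (sq_memLp _).const_mul _)
  have h2 : (∑ i, fun ω : Fin d → ℝ => c i * ω i ^ 2) = fun x => quad c x := by
    ext x; simp [quad]
  rw [h2] at h1
  change Var[fun x => quad c x; gaussPi d α] = _ at h1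
  rw [variance_eq_integral ((quad_memLp α c).aestronglyMeasurable.aemeasurable),
    quad_mean α hα] at h1
  rw [h1, Finset.mul_sum]
  refine Finset.sum_congr rfl fun i _ => ?_
  rw [variance_const_mul, var_sq _ (hα i)]; ring

/-- centered Gaussian density -/
def ph (v x : ℝ) : ℝ := (√(2 * π * v))⁻¹ * rexp (-x ^ 2 / (2 * v))

lemma ph_eq {v : ℝ} (hv : 0 ≤ v) (x : ℝ) : gaussianPDFReal 0 v.toNNReal x = ph v x := by
  simp [gaussianPDFReal, ph, hv]

lemma ph_nonneg (v x : ℝ) : 0 ≤ ph v x := by unfold ph; positivity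

lemma ph_pref {v : ℝ} (hv : 1 / 4 ≤ v) : (√(2 * π * v))⁻¹ ≤ 1 := by
  apply inv_le_one_of_one_le₀
  apply Real.le_sqrt_of_sq_le
  nlinarith [Real.pi_gt_three]

lemma ph_le_one {v : ℝ} (hv : 1 / 4 ≤ v) (x : ℝ) : ph v x ≤ 1 := by
  unfold ph
  have h1 := ph_pref hv
  have h2 : rexp (-x ^ 2 / (2 * v)) ≤ 1 := by
    apply Real.exp_le_one_iff.2
    apply div_nonpos_of_nonpos_of_nonneg <;> nlinarith [sq_nonneg x]
  exact mul_le_one₀ h1 (by positivity) h2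

lemma ph_deriv {v : ℝ} (hv : 0 < v) (x : ℝ) : HasDerivAt (ph v) (-(x / v) * ph v x) x := by
  unfold ph
  have h1 : HasDerivAt (fun x : ℝ => -x ^ 2 / (2 * v)) (-(2 * x) / (2 * v)) x := by
    have := ((hasDerivAt_pow 2 x).neg).div_const (2 * v)
    simpa using this
  have := (h1.exp).const_mul (√(2 * π * v))⁻¹
  refine this.congr_deriv ?_
  field_simp

lemma ph_cont {v : ℝ} (hv : 0 < v) : Continuous (ph v) :=
  continuous_iff_continuousAt.2 fun x => (ph_deriv hv x).continuousAt

lemma ph_lip {v : ℝ} (hv : 1 / 4 ≤ v) (x y : ℝ) : |ph v y - ph v x| ≤ 2 * |y - x| := by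
  have hv0 : 0 < v := by linarith
  have := Convex.norm_image_sub_le_of_norm_hasDerivWithin_le (f := ph v)
    (f' := fun x => -(x / v) * ph v x) (s := Set.univ) (x := x) (y := y) (C := 2)
    (fun x _ => (ph_deriv hv0 x).hasDerivWithinAt) ?_ convex_univ trivial trivial
  · simpa using this
  · intro u _
    rw [Real.norm_eq_abs, abs_mul, abs_neg, abs_of_nonneg (ph_nonneg _ _), abs_div,
      abs_of_pos hv0]
    unfold ph
    have h1 := ph_pref hv
    have h0 : 0 ≤ (√(2 * π * v))⁻¹ := by positivity
    set s := u ^ 2 / (2 * v) with hs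
    have hs0 : 0 ≤ s := by positivity
    have e1 : rexp (-u ^ 2 / (2 * v)) ≤ 1 / (1 + s) := by
      rw [neg_div, ← hs, Real.exp_neg, ← one_div]
      apply one_div_le_one_div_of_le (by positivity)
      linarith [Real.add_one_le_exp s]
    calc |u| / v * ((√(2 * π * v))⁻¹ * rexp (-u ^ 2 / (2 * v)))
        ≤ |u| / v * (1 * (1 / (1 + s))) := by gcongr
      _ ≤ 2 := by
        rw [one_mul, div_mul_div_comm, mul_one, div_le_iff₀ (by positivity)]
        have : v * (1 + s) = v + u ^ 2 / 2 := by rw [hs]; field_simp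
        rw [this]
        rw [← sq_abs u]
        nlinarith [sq_nonneg (|u| - 1 / 2), abs_nonneg u]

/-- upper tail -/
def Gt (v u : ℝ) : ℝ := (gaussianReal 0 v.toNNReal).real (Set.Ici u)

lemma Gt_nonneg (v u : ℝ) : 0 ≤ Gt v u := measureReal_nonneg
lemma Gt_le_one (v u : ℝ) : Gt v u ≤ 1 := measureReal_le_one

lemma Gt_eq {v : ℝ} (hv : 0 < v) (u : ℝ) : Gt v u = ∫ x in Set.Ioi u, ph v x := by
  unfold Gt
  rw [Measure.real, gaussianReal_apply_eq_integral 0 (by simpa using hv),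
    ENNReal.toReal_ofReal (integral_nonneg fun x => gaussianPDFReal_nonneg _ _ _),
    integral_Ici_eq_integral_Ioi]
  simp only [ph_eq hv.le]

lemma ph_int {v : ℝ} (hv : 0 < v) : Integrable (ph v) := by
  have := integrable_gaussianPDFReal 0 v.toNNReal
  refine this.congr (Filter.Eventually.of_forall fun x => ph_eq hv.le x)

lemma Gt_expand {v : ℝ} (hv : 1 / 4 ≤ v) (t h : ℝ) :
    |Gt v (t - h) - Gt v t - h * ph v t| ≤ 2 * h ^ 2 := by
  have hv0 : 0 < v := by linarith
  rw [Gt_eq hv0, Gt_eq hv0, intervalIntegral.integral_Ioi_sub_Ioi' (ph_int hv0).integrableOn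
    (ph_int hv0).integrableOn]
  have e : h * ph v t = ∫ x in (t - h)..t, ph v t := by simp
  rw [e, ← intervalIntegral.integral_sub ((ph_cont hv0).intervalIntegrable _ _) (by simp)]
  have := intervalIntegral.norm_integral_le_of_norm_le_const (a := t - h) (b := t)
    (C := 2 * |h|) (f := fun x => ph v x - ph v t) ?_
  · rw [Real.norm_eq_abs] at this
    refine this.trans (le_of_eq ?_)
    rw [sub_sub_cancel, mul_assoc, ← sq, sq_abs]
  · intro x hx
    rw [Real.norm_eq_abs]
    refine (ph_lip hv t x).trans ?_
    have : |x - t| ≤ |h| := by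
      have := Set.abs_sub_right_of_mem_uIcc (Set.uIoc_subset_uIcc hx)
      rw [sub_sub_cancel] at this
      rwa [abs_sub_comm]
    linarith

lemma gauss_tail_mean {a : ℝ} (ha : 0 < a) (t : ℝ) :
    ∫ x, (if t ≤ x then x else 0) ∂(gaussianReal 0 a.toNNReal) = a * ph a t := by
  have hne : a.toNNReal ≠ 0 := by simpa using ha
  rw [integral_gaussianReal_eq_integral_smul hne]
  have e : (fun x => gaussianPDFReal 0 a.toNNReal x • (if t ≤ x then x else 0)) =
      (Set.Ici t).indicator (fun x => x * ph a x) := by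
    ext x
    simp only [ph_eq ha.le, Set.indicator, Set.mem_Ici, smul_eq_mul]
    split_ifs <;> ring
  rw [e, integral_indicator measurableSet_Ici, integral_Ici_eq_integral_Ioi]
  have hi : Integrable (fun x => x * ph a x) := by
    have := (integrable_mul_exp_neg_mul_sq (b := 1 / (2 * a)) (by positivity)).mul_const
      (√(2 * π * a))⁻¹
    refine this.congr (Filter.Eventually.of_forall fun x => ?_)
    simp only [ph]
    rw [show -(1 / (2 * a)) * x ^ 2 = -x ^ 2 / (2 * a) by ring]; ring
  have hd : ∀ x ∈ Set.Ici t, HasDerivAt (fun x => -a * ph a x) (x * ph a x) x := by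
    intro x _
    refine ((ph_deriv ha x).const_mul (-a)).congr_deriv ?_
    field_simp
  have ht : Tendsto (fun x => -a * ph a x) atTop (nhds 0) := by
    have h1 : Tendsto (fun x : ℝ => -x ^ 2 / (2 * a)) atTop atBot := by
      have := (tendsto_pow_atTop (α := ℝ) (n := 2) (by norm_num)).atTop_div_const
        (show (0:ℝ) < 2 * a by positivity)
      have := tendsto_neg_atTop_atBot.comp this
      refine this.congr fun x => ?_
      simp [neg_div]
    have h2 := ((Real.tendsto_exp_atBot.comp h1).const_mul (√(2 * π * a))⁻¹).const_mul (-a)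
    simpa [ph, Function.comp_def] using h2
  rw [integral_Ioi_of_hasDerivAt_of_tendsto' hd hi.integrableOn ht]
  ring

lemma gauss_mean (a : ℝ) : ∫ x, x ∂(gaussianReal 0 a.toNNReal) = 0 := integral_id_gaussianReal
lemma gauss_sq {a : ℝ} (ha : 0 ≤ a) : ∫ x, x ^ 2 ∂(gaussianReal 0 a.toNNReal) = a := by
  have hv := variance_id_gaussianReal (μ := 0) (v := a.toNNReal)
  rw [variance_of_integral_eq_zero aemeasurable_id (by simp [integral_id_gaussianReal])] at hv
  simpa [ha] using hv
lemma gauss_id_int (a : ℝ) : Integrable (fun x : ℝ => x) (gaussianReal 0 a.toNNReal) :=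
  (memLp_id_gaussianReal' 1 (by simp)).integrable le_rfl
lemma gauss_sq_int (a : ℝ) : Integrable (fun x : ℝ => x ^ 2) (gaussianReal 0 a.toNNReal) :=
  (memLp_id_gaussianReal' (μ := 0) (v := a.toNNReal) 2 (by simp)).integrable_sq

lemma Gt_anti (v : ℝ) : Antitone (Gt v) := fun _ _ h =>
  measureReal_mono (Set.Ici_subset_Ici.2 h)
lemma Gt_meas (v : ℝ) : Measurable (Gt v) := (Gt_anti v).measurable

/-- one-dimensional form of the conditional covariance -/
def psi1 (a v l t : ℝ) : ℝ :=
  ∫ x, (if t ≤ x then Gt v (t - l * x) else 0) ∂(gaussianReal 0 a.toNNReal) -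
    Gt a t * ∫ x, Gt v (t - l * x) ∂(gaussianReal 0 a.toNNReal)

lemma Gt_ind (a t : ℝ) :
    ∫ x, (if t ≤ x then (1:ℝ) else 0) ∂(gaussianReal 0 a.toNNReal) = Gt a t := by
  have : (fun x : ℝ => if t ≤ x then (1:ℝ) else 0) = (Set.Ici t).indicator 1 := by
    ext x; simp [Set.indicator]
  rw [this, integral_indicator_one measurableSet_Ici]; rfl

lemma psi1_main {a v : ℝ} (ha : 0 < a) (hv : 1 / 4 ≤ v) (l t : ℝ) :
    |psi1 a v l t - l * a * ph v t * ph a t| ≤ 4 * (l ^ 2 * a) := by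
  set γ := gaussianReal 0 a.toNNReal with hγ
  set ρ : ℝ → ℝ := fun x => Gt v (t - l * x) - Gt v t - l * x * ph v t with hρ
  have hρb : ∀ x, |ρ x| ≤ 2 * l ^ 2 * x ^ 2 := fun x => by
    have := Gt_expand hv t (l * x)
    simp only [hρ]; linarith [mul_pow l x 2]
  have hGm : Measurable (fun x => Gt v (t - l * x)) := (Gt_meas v).comp (by fun_prop)
  have hGi : Integrable (fun x => Gt v (t - l * x)) γ :=
    (BM.integrable ⟨hGm, 1, fun x => by
      rw [abs_of_nonneg (Gt_nonneg _ _)]; exact Gt_le_one _ _⟩ γ)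
  have hxi : Integrable (fun x => l * x * ph v t) γ :=
    ((gauss_id_int a).const_mul l).mul_const _
  have hρi : Integrable ρ γ := (hGi.sub (integrable_const _)).sub hxi
  have hrhoInt : Integrable (fun x => if t ≤ x then ρ x else 0) γ := by
    have := hρi.indicator (measurableSet_Ici (a := t))
    refine this.congr (Filter.Eventually.of_forall fun x => by simp [Set.indicator])
  have h1i : Integrable (fun x : ℝ => if t ≤ x then x else 0) γ := by
    have := (gauss_id_int a).indicator (measurableSet_Ici (a := t))
    refine this.congr (Filter.Eventually.of_forall fun x => by simp [Set.indicator])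
  have hc1 : Integrable (fun x : ℝ => if t ≤ x then (1:ℝ) else 0) γ := by
    have := (integrable_const (μ := γ) (1:ℝ)).indicator (measurableSet_Ici (a := t))
    refine this.congr (Filter.Eventually.of_forall fun x => by simp [Set.indicator])
  have sqi := (gauss_sq_int a).const_mul (2 * l ^ 2)
  have i1 : |∫ x, ρ x ∂γ| ≤ 2 * l ^ 2 * a := by
    refine (abs_integral_le_integral_abs).trans ?_
    refine (integral_mono hρi.abs sqi hρb).trans (le_of_eq ?_)
    rw [integral_const_mul, gauss_sq ha.le]
  have i2 : |∫ x, (if t ≤ x then ρ x else 0) ∂γ| ≤ 2 * l ^ 2 * a := by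
    refine (abs_integral_le_integral_abs).trans ?_
    refine (integral_mono hrhoInt.abs sqi fun x => ?_).trans (le_of_eq ?_)
    · dsimp only
      split_ifs
      · exact hρb x
      · rw [abs_zero]; positivity
    rw [integral_const_mul, gauss_sq ha.le]
  have e1 : ∫ x, Gt v (t - l * x) ∂γ = Gt v t + ∫ x, ρ x ∂γ := by
    have : (fun x => Gt v (t - l * x)) = fun x => (Gt v t + l * ph v t * x) + ρ x := by
      ext x; simp only [hρ]; ring
    have hA : Integrable (fun x => Gt v t + l * ph v t * x) γ :=
      (integrable_const _).add ((gauss_id_int a).const_mul _)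
    rw [this, integral_add hA hρi,
      integral_add (integrable_const _) ((gauss_id_int a).const_mul _), integral_const_mul,
      gauss_mean]
    simp
  have e2 : ∫ x, (if t ≤ x then Gt v (t - l * x) else 0) ∂γ =
      Gt v t * Gt a t + l * ph v t * (a * ph a t) + ∫ x, (if t ≤ x then ρ x else 0) ∂γ := by
    have : (fun x => if t ≤ x then Gt v (t - l * x) else 0) =
      fun x => (Gt v t * (if t ≤ x then (1:ℝ) else 0) + l * ph v t * (if t ≤ x then x else 0))
        + (if t ≤ x then ρ x else 0) := by
      ext x; simp only [hρ]; split_ifs <;> ring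
    have hA : Integrable (fun x => Gt v t * (if t ≤ x then (1:ℝ) else 0) +
      l * ph v t * (if t ≤ x then x else 0)) γ := (hc1.const_mul _).add (h1i.const_mul _)
    rw [this, integral_add hA hrhoInt,
      integral_add (hc1.const_mul _) (h1i.const_mul _), integral_const_mul, integral_const_mul,
      gauss_tail_mean ha, Gt_ind]
  have : psi1 a v l t - l * a * ph v t * ph a t =
      ∫ x, (if t ≤ x then ρ x else 0) ∂γ - Gt a t * ∫ x, ρ x ∂γ := by
    unfold psi1; rw [← hγ, e1, e2]; ring
  rw [this]
  have i3 : |Gt a t * ∫ x, ρ x ∂γ| ≤ 2 * l ^ 2 * a := by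
    rw [abs_mul, abs_of_nonneg (Gt_nonneg _ _)]
    exact (mul_le_of_le_one_left (abs_nonneg _) (Gt_le_one _ _)).trans i1
  have := abs_sub (∫ x, (if t ≤ x then ρ x else 0) ∂γ) (Gt a t * ∫ x, ρ x ∂γ)
  linarith

lemma ph_var {v t T : ℝ} (hv : 1 / 4 ≤ v) (ht : t ^ 2 ≤ T) :
    |ph v t - ph 1 t| ≤ (2 + 2 * T) * |v - 1| := by
  have hv0 : 0 < v := by linarith
  have hT : 0 ≤ T := (sq_nonneg t).trans ht
  have hsv : 1 / 2 ≤ √v := Real.le_sqrt_of_sq_le (by linarith)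
  have e1 : ph v t = (√(2 * π))⁻¹ * ((√v)⁻¹ * rexp (-(t ^ 2 / (2 * v)))) := by
    unfold ph
    rw [Real.sqrt_mul (by positivity), mul_inv, mul_assoc, neg_div]
  have e2 : ph 1 t = (√(2 * π))⁻¹ * rexp (-(t ^ 2 / 2)) := by
    unfold ph; rw [mul_one, mul_one, neg_div]
  have h2pi : (√(2 * π))⁻¹ ≤ 1 := by simpa using ph_pref (v := 1) (by norm_num)
  have A1 : |(√v)⁻¹ - 1| ≤ 2 * |v - 1| := by
    have : (√v)⁻¹ - 1 = (1 - v) / (√v * (1 + √v)) := by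
      have := Real.sq_sqrt hv0.le
      field_simp; nlinarith
    rw [this, abs_div, abs_of_pos (show 0 < √v * (1 + √v) by positivity), abs_sub_comm,
      div_le_iff₀ (by positivity)]
    have : 1 ≤ 2 * (√v * (1 + √v)) := by nlinarith
    nlinarith [abs_nonneg (v - 1)]
  have A2 : |rexp (-(t ^ 2 / (2 * v))) - rexp (-(t ^ 2 / 2))| ≤ 2 * T * |v - 1| := by
    have key : ∀ x y : ℝ, 0 ≤ x → 0 ≤ y → |rexp (-x) - rexp (-y)| ≤ |x - y| := by
      have k0 : ∀ x y : ℝ, 0 ≤ x → x ≤ y → rexp (-x) - rexp (-y) ≤ y - x := by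
        intro x y hx hxy
        have h1 : rexp (-y) = rexp (-x) * rexp (x - y) := by rw [← Real.exp_add]; ring_nf
        have h2 := Real.add_one_le_exp (x - y)
        have h3 : rexp (-x) ≤ 1 := Real.exp_le_one_iff.2 (by linarith)
        have h4 := Real.exp_pos (-x)
        rw [h1]; nlinarith
      intro x y hx hy
      rcases le_total x y with h | h
      · rw [abs_of_nonneg (sub_nonneg.2 (Real.exp_le_exp.2 (by linarith))), abs_sub_comm,
          abs_of_nonneg (by linarith)]
        exact k0 x y hx h
      · rw [abs_sub_comm, abs_of_nonneg (sub_nonneg.2 (Real.exp_le_exp.2 (by linarith))),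
          abs_of_nonneg (by linarith)]
        exact k0 y x hy h
    refine (key _ _ (by positivity) (by positivity)).trans ?_
    have : t ^ 2 / (2 * v) - t ^ 2 / 2 = (t ^ 2 / (2 * v)) * (1 - v) := by field_simp
    rw [this, abs_mul, abs_of_nonneg (by positivity : 0 ≤ t ^ 2 / (2 * v)), abs_sub_comm]
    refine mul_le_mul_of_nonneg_right ?_ (abs_nonneg _)
    rw [div_le_iff₀ (by positivity)]
    nlinarith
  have h3 : |rexp (-(t ^ 2 / (2 * v)))| ≤ 1 := by
    rw [abs_of_pos (Real.exp_pos _)]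
    exact Real.exp_le_one_iff.2 (by rw [neg_nonpos]; positivity)
  have : ph v t - ph 1 t = (√(2 * π))⁻¹ * (((√v)⁻¹ - 1) * rexp (-(t ^ 2 / (2 * v))) +
      (rexp (-(t ^ 2 / (2 * v))) - rexp (-(t ^ 2 / 2)))) := by rw [e1, e2]; ring
  rw [this, abs_mul, abs_of_nonneg (by positivity : 0 ≤ (√(2 * π))⁻¹)]
  refine (mul_le_of_le_one_left (abs_nonneg _) h2pi).trans ?_
  refine (abs_add_le _ _).trans ?_
  rw [abs_mul]
  have := mul_le_of_le_one_right (abs_nonneg ((√v)⁻¹ - 1)) h3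
  linarith

lemma psi1_bound {a b S t T : ℝ} (ht : t ^ 2 ≤ T) (ha : |a - 1| ≤ 1 / 2) (hb : |b - 1| ≤ 1 / 2)
    (hS : S ^ 2 ≤ 1 / 16) :
    |psi1 a (b - S ^ 2 / a) (S / a) t - ph 1 t ^ 2 * S| ≤
      (20 + 10 * T) * (S ^ 2 + (a - 1) ^ 2 + (b - 1) ^ 2) := by
  have hT : 0 ≤ T := (sq_nonneg t).trans ht
  have ha' := abs_le.1 ha
  have hb' := abs_le.1 hb
  have ha0 : 0 < a := by linarith
  have hSa : S ^ 2 / a ≤ 2 * S ^ 2 := by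
    rw [div_le_iff₀ ha0]; nlinarith [sq_nonneg S]
  have hSa0 : 0 ≤ S ^ 2 / a := by positivity
  set v := b - S ^ 2 / a with hv
  have hv4 : 1 / 4 ≤ v := by linarith
  have m := psi1_main ha0 hv4 (S / a) t
  have e1 : S / a * a = S := by field_simp
  have e2 : (S / a) ^ 2 * a = S ^ 2 / a := by field_simp
  rw [e1, e2] at m
  have p1 := ph_var hv4 ht
  have p2 := ph_var (v := a) (by linarith) ht
  have q1 := ph_le_one (v := 1) (by norm_num) t
  have q2 := ph_le_one (v := a) (by linarith) t
  have q10 := ph_nonneg 1 t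
  have q20 := ph_nonneg a t
  have hSabs : |S| ≤ 1 / 4 := abs_le_of_sq_le_sq (by linarith) (by norm_num)
  have hv1 : |v - 1| ≤ |b - 1| + 2 * S ^ 2 := by
    have : v - 1 = (b - 1) - S ^ 2 / a := by rw [hv]; ring
    rw [this]
    refine (abs_sub _ _).trans ?_
    rw [abs_of_nonneg hSa0]; linarith
  have key : |ph v t * ph a t - ph 1 t ^ 2| ≤ (2 + 2 * T) * (|b - 1| + 2 * S ^ 2 + |a - 1|) := by
    have : ph v t * ph a t - ph 1 t ^ 2 =
      (ph v t - ph 1 t) * ph a t + ph 1 t * (ph a t - ph 1 t) := by ring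
    rw [this]
    refine (abs_add_le _ _).trans ?_
    rw [abs_mul, abs_mul, abs_of_nonneg q20, abs_of_nonneg q10]
    have r1 := mul_le_of_le_one_right (abs_nonneg (ph v t - ph 1 t)) q2
    have r2 := mul_le_of_le_one_left (abs_nonneg (ph a t - ph 1 t)) q1
    nlinarith
  have fin : |S * ph v t * ph a t - ph 1 t ^ 2 * S| ≤
      (2 + 2 * T) * (2 * S ^ 2 + (a - 1) ^ 2 + (b - 1) ^ 2) := by
    have : S * ph v t * ph a t - ph 1 t ^ 2 * S = S * (ph v t * ph a t - ph 1 t ^ 2) := by ring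
    rw [this, abs_mul]
    refine (mul_le_mul_of_nonneg_left key (abs_nonneg S)).trans ?_
    rw [mul_left_comm]
    refine mul_le_mul_of_nonneg_left ?_ (by linarith)
    have s1 := sq_nonneg (|S| - |b - 1|)
    have s2 := sq_nonneg (|S| - |a - 1|)
    have z1 := sq_abs S
    have z2 := sq_abs (a - 1)
    have z3 := sq_abs (b - 1)
    have z4 : |S| * (2 * S ^ 2) ≤ 1 / 4 * (2 * S ^ 2) := by gcongr
    nlinarith
  have tot : psi1 a v (S / a) t - ph 1 t ^ 2 * S =
    (psi1 a v (S / a) t - S * ph v t * ph a t) + (S * ph v t * ph a t - ph 1 t ^ 2 * S) := by ring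
  rw [tot]
  refine (abs_add_le _ _).trans ?_
  have x1 : 0 ≤ T * S ^ 2 := by positivity
  have x2 : 0 ≤ T * (a - 1) ^ 2 := by positivity
  have x3 : 0 ≤ T * (b - 1) ^ 2 := by positivity
  nlinarith [sq_nonneg S, sq_nonneg (a - 1), sq_nonneg (b - 1)]

def Ik (t : ℝ) {d : ℕ} (x y : Fin d → ℝ) : ℝ := if t ≤ dotp x y then 1 else 0

lemma Kk_eq (p t : ℝ) {d : ℕ} (x y : Fin d → ℝ) : Kk p t x y = Ik t x y - p := rfl

lemma bm_Ik (t : ℝ) {d : ℕ} : BM (fun z : (Fin d → ℝ) × (Fin d → ℝ) => Ik t z.1 z.2) := by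
  refine ⟨?_, 1, fun x => ?_⟩
  · unfold Ik
    exact Measurable.ite (measurableSet_le measurable_const
      (measurable_dotp measurable_fst measurable_snd)) measurable_const measurable_const
  · unfold Ik; dsimp only; split_ifs <;> simp

lemma Ik_nonneg (t : ℝ) {d : ℕ} (x y : Fin d → ℝ) : 0 ≤ Ik t x y := by
  unfold Ik; split_ifs <;> simp
lemma Ik_le (t : ℝ) {d : ℕ} (x y : Fin d → ℝ) : Ik t x y ≤ 1 := by
  unfold Ik; split_ifs <;> simp

lemma bm_Ik_l (t : ℝ) {d : ℕ} (x : Fin d → ℝ) : BM (fun z => Ik t x z) :=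
  (bm_Ik t).comp (g := fun z => (x, z)) (by fun_prop)

lemma bm_Kk {p : ℝ} (t : ℝ) {d : ℕ} :
    BM (fun z : (Fin d → ℝ) × (Fin d → ℝ) => Kk p t z.1 z.2) := (bm_Ik t).sub (BM.const p)

lemma bm_Kk_l {p : ℝ} (t : ℝ) {d : ℕ} (x : Fin d → ℝ) : BM (fun z => Kk p t x z) :=
  (bm_Kk t).comp (g := fun z => (x, z)) (by fun_prop)

/-- conditional edge fluctuation -/
def kk (p t : ℝ) {d : ℕ} (α x : Fin d → ℝ) : ℝ := ∫ z, Kk p t x z ∂(gaussPi d α)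
/-- conditional expectation of a two-path -/
def n2 (p t : ℝ) {d : ℕ} (α x y : Fin d → ℝ) : ℝ :=
  ∫ z, Kk p t x z * Kk p t y z ∂(gaussPi d α)
/-- conditional covariance -/
def Psi (p t : ℝ) {d : ℕ} (α x y : Fin d → ℝ) : ℝ := n2 p t α x y - kk p t α x * kk p t α y
def Sf {d : ℕ} (α x y : Fin d → ℝ) : ℝ := ∑ i, x i * y i * α i

lemma bm_kk (p t : ℝ) {d : ℕ} (α : Fin d → ℝ) : BM (kk p t α) :=
  BM.integral_right (F := fun x z => Kk p t x z) (bm_Kk t) _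

lemma bm_n2 (p t : ℝ) {d : ℕ} (α : Fin d → ℝ) :
    BM (fun z : (Fin d → ℝ) × (Fin d → ℝ) => n2 p t α z.1 z.2) := by
  refine BM.integral_right (F := fun (w : (Fin d → ℝ) × (Fin d → ℝ)) z =>
    Kk p t w.1 z * Kk p t w.2 z) ?_ _
  exact ((bm_Kk t).comp (g := fun w : ((Fin d → ℝ) × (Fin d → ℝ)) × (Fin d → ℝ) => (w.1.1, w.2))
    (by fun_prop)).mul ((bm_Kk t).comp
    (g := fun w : ((Fin d → ℝ) × (Fin d → ℝ)) × (Fin d → ℝ) => (w.1.2, w.2)) (by fun_prop))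

lemma bm_Psi (p t : ℝ) {d : ℕ} (α : Fin d → ℝ) :
    BM (fun z : (Fin d → ℝ) × (Fin d → ℝ) => Psi p t α z.1 z.2) :=
  (bm_n2 p t α).sub (((bm_kk p t α).comp measurable_fst).mul ((bm_kk p t α).comp measurable_snd))

lemma bm_Psi_l (p t : ℝ) {d : ℕ} (α x : Fin d → ℝ) : BM (fun y => Psi p t α x y) :=
  (bm_Psi p t α).comp (g := fun z => (x, z)) (by fun_prop)

lemma bm_n2_l (p t : ℝ) {d : ℕ} (α x : Fin d → ℝ) : BM (fun y => n2 p t α x y) :=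
  (bm_n2 p t α).comp (g := fun z => (x, z)) (by fun_prop)

lemma kk_eq (p t : ℝ) {d : ℕ} (α x : Fin d → ℝ) :
    kk p t α x = ∫ z, Ik t x z ∂(gaussPi d α) - p := by
  unfold kk; simp only [Kk_eq]
  rw [(bm_Ik_l t x).isub (BM.const p)]; simp

lemma Psi_eq (p t : ℝ) {d : ℕ} (α x y : Fin d → ℝ) :
    Psi p t α x y = ∫ z, Ik t x z * Ik t y z ∂(gaussPi d α) -
      (∫ z, Ik t x z ∂(gaussPi d α)) * (∫ z, Ik t y z ∂(gaussPi d α)) := by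
  unfold Psi
  rw [kk_eq, kk_eq]
  unfold n2
  have e : ∀ z, Kk p t x z * Kk p t y z =
      (Ik t x z * Ik t y z - (p * Ik t x z + p * Ik t y z)) + p ^ 2 := fun z => by
    simp only [Kk_eq]; ring
  simp only [e]
  have bx := bm_Ik_l t x
  have by' := bm_Ik_l t y
  rw [((bx.mul by').sub (((BM.const p).mul bx).add ((BM.const p).mul by'))).iadd (BM.const _),
    (bx.mul by').isub (((BM.const p).mul bx).add ((BM.const p).mul by')),
    ((BM.const p).mul bx).iadd ((BM.const p).mul by'), integral_const_mul, integral_const_mul]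
  simp only [integral_const, probReal_univ, one_smul]
  ring

lemma Psi_bd (p t : ℝ) {d : ℕ} (α x y : Fin d → ℝ) : |Psi p t α x y| ≤ 1 := by
  rw [Psi_eq]
  have h : ∀ x, 0 ≤ ∫ z, Ik t x z ∂(gaussPi d α) ∧ ∫ z, Ik t x z ∂(gaussPi d α) ≤ 1 := by
    intro x
    refine ⟨integral_nonneg fun z => Ik_nonneg t x z, ?_⟩
    exact (le_abs_self _).trans (abs_integral_le_one _ fun z => by
      rw [abs_of_nonneg (Ik_nonneg t x z)]; exact Ik_le t x z)
  have h2 : 0 ≤ ∫ z, Ik t x z * Ik t y z ∂(gaussPi d α) :=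
    integral_nonneg fun z => mul_nonneg (Ik_nonneg t x z) (Ik_nonneg t y z)
  have h3 : ∫ z, Ik t x z * Ik t y z ∂(gaussPi d α) ≤ 1 :=
    (le_abs_self _).trans (abs_integral_le_one _ fun z => by
      rw [abs_of_nonneg (mul_nonneg (Ik_nonneg t x z) (Ik_nonneg t y z))]
      exact mul_le_one₀ (Ik_le t x z) (Ik_nonneg t y z) (Ik_le t y z))
  obtain ⟨x0, x1⟩ := h x
  obtain ⟨y0, y1⟩ := h y
  rw [abs_le]; constructor <;> nlinarith [mul_nonneg x0 y0, mul_le_one₀ x1 y0 y1]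

lemma quad_eq {d : ℕ} (α x : Fin d → ℝ) : quad α x = ∑ i, x i ^ 2 * α i := by
  unfold quad; exact Finset.sum_congr rfl fun i _ => mul_comm _ _

lemma int_Ik {d : ℕ} (α : Fin d → ℝ) (hα : ∀ i, 0 ≤ α i) (t : ℝ) (x : Fin d → ℝ) :
    ∫ z, Ik t x z ∂(gaussPi d α) = Gt (quad α x) t := by
  have h := gp_map_dot α hα x
  have := integral_map (μ := gaussPi d α) (φ := fun z => dotp x z)
    (f := fun u : ℝ => if t ≤ u then (1:ℝ) else 0) (gp_dot_law α x).aemeasurable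
    (Measurable.ite measurableSet_Ici measurable_const measurable_const).aestronglyMeasurable
  rw [h, ← quad_eq, Gt_ind] at this
  exact this.symm

lemma Gt_shift (v t u : ℝ) : ∫ r, (if t ≤ r + u then (1:ℝ) else 0) ∂(gaussianReal 0 v.toNNReal)
    = Gt v (t - u) := by
  rw [← Gt_ind]; simp only [sub_le_iff_le_add]

lemma regress {d : ℕ} (α : Fin d → ℝ) (hα : ∀ i, 0 ≤ α i) (x y : Fin d → ℝ)
    (hx : 0 < quad α x) (F : ℝ × ℝ → ℝ) (hF : Measurable F) :
    ∫ z, F (dotp x z, dotp y z - (Sf α x y / quad α x) * dotp x z) ∂(gaussPi d α) =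
    ∫ w, F w ∂((gaussianReal 0 (quad α x).toNNReal).prod
      (gaussianReal 0 (quad α y - Sf α x y ^ 2 / quad α x).toNNReal)) := by
  set l := Sf α x y / quad α x with hl
  set e : Fin d → ℝ := fun i => y i - l * x i with he
  have h1 : ∑ i, x i * e i * α i = 0 := by
    have : ∑ i, x i * e i * α i = Sf α x y - l * quad α x := by
      rw [quad_eq]; unfold Sf
      rw [Finset.mul_sum, ← Finset.sum_sub_distrib]
      exact Finset.sum_congr rfl fun i _ => by simp only [he]; ring
    rw [this, hl]; field_simp; ring
  have h2 : ∑ i, e i ^ 2 * α i = quad α y - Sf α x y ^ 2 / quad α x := by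
    have : ∑ i, e i ^ 2 * α i = quad α y - 2 * l * Sf α x y + l ^ 2 * quad α x := by
      rw [quad_eq, quad_eq]; unfold Sf
      rw [Finset.mul_sum, Finset.mul_sum, ← Finset.sum_sub_distrib, ← Finset.sum_add_distrib]
      exact Finset.sum_congr rfl fun i _ => by simp only [he]; ring
    rw [this, hl]; field_simp; ring
  have hm := gp_map_pair α hα x e h1
  rw [h2, ← quad_eq] at hm
  have h3 : ∀ z, dotp e z = dotp y z - l * dotp x z := fun z => by
    unfold dotp
    rw [Finset.mul_sum, ← Finset.sum_sub_distrib]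
    exact Finset.sum_congr rfl fun i _ => by simp only [he]; ring
  rw [← hm, integral_map (gp_pair_law α x e).aemeasurable hF.aestronglyMeasurable]
  simp only [h3]

lemma Psi_psi1 {d : ℕ} (α : Fin d → ℝ) (hα : ∀ i, 0 ≤ α i) (p t : ℝ) (x y : Fin d → ℝ)
    (hx : 0 < quad α x) :
    Psi p t α x y = psi1 (quad α x) (quad α y - Sf α x y ^ 2 / quad α x)
      (Sf α x y / quad α x) t := by
  rw [Psi_eq, int_Ik α hα t x]
  unfold psi1
  set l := Sf α x y / quad α x with hl
  set v := quad α y - Sf α x y ^ 2 / quad α x with hv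
  have m1 : Measurable (fun w : ℝ × ℝ => if t ≤ w.1 then (1:ℝ) else 0) :=
    Measurable.ite (measurableSet_le measurable_const measurable_fst) measurable_const
      measurable_const
  have m2 : Measurable (fun w : ℝ × ℝ => if t ≤ w.2 + l * w.1 then (1:ℝ) else 0) :=
    Measurable.ite (measurableSet_le measurable_const (by fun_prop)) measurable_const
      measurable_const
  have b1 : BM (fun w : ℝ × ℝ => if t ≤ w.1 then (1:ℝ) else 0) :=
    ⟨m1, 1, fun w => by dsimp only; split_ifs <;> simp⟩
  have b2 : BM (fun w : ℝ × ℝ => if t ≤ w.2 + l * w.1 then (1:ℝ) else 0) :=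
    ⟨m2, 1, fun w => by dsimp only; split_ifs <;> simp⟩
  have r1 := regress α hα x y hx _ (m1.mul m2)
  have r2 := regress α hα x y hx _ m2
  simp only [Pi.mul_apply, ← hl, ← hv, sub_add_cancel] at r1 r2
  have e1 : ∫ z, Ik t x z * Ik t y z ∂(gaussPi d α) =
    ∫ u, (if t ≤ u then Gt v (t - l * u) else 0) ∂(gaussianReal 0 (quad α x).toNNReal) := by
    refine Eq.trans r1 ?_
    rw [integral_prod _ ((b1.mul b2).integrable _)]
    refine integral_congr_ae (Eventually.of_forall fun u => ?_)
    dsimp only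
    by_cases h : t ≤ u
    · simp only [h, if_true, one_mul, Gt_shift]
    · simp only [h, if_false, zero_mul, integral_zero]
  have e2 : ∫ z, Ik t y z ∂(gaussPi d α) =
    ∫ u, Gt v (t - l * u) ∂(gaussianReal 0 (quad α x).toNNReal) := by
    refine Eq.trans r2 ?_
    rw [integral_prod _ (b2.integrable _)]
    refine integral_congr_ae (Eventually.of_forall fun u => ?_)
    dsimp only
    rw [Gt_shift]
  rw [e1, e2]

/-- the pointwise comparison -/
lemma Psi_pointwise {d : ℕ} (α : Fin d → ℝ) (hα : ∀ i, 0 ≤ α i) (p t T : ℝ) (ht : t ^ 2 ≤ T)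
    (x y : Fin d → ℝ) :
    |Psi p t α x y - ph 1 t ^ 2 * Sf α x y| ≤
      (20 + 10 * T) * (Sf α x y ^ 2 + (quad α x - 1) ^ 2 + (quad α y - 1) ^ 2) := by
  have hT : 0 ≤ T := (sq_nonneg t).trans ht
  set a := quad α x with ha
  set b := quad α y with hb
  set S := Sf α x y with hS
  have q1 := ph_le_one (v := 1) (by norm_num) t
  have q0 := ph_nonneg 1 t
  have q2 : ph 1 t ^ 2 ≤ 1 := pow_le_one₀ q0 q1
  have triv : |Psi p t α x y - ph 1 t ^ 2 * S| ≤ 1 + |S| := by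
    refine (abs_sub _ _).trans (add_le_add (Psi_bd _ _ _ _ _) ?_)
    rw [abs_mul, abs_of_nonneg (by positivity : 0 ≤ ph 1 t ^ 2)]
    exact mul_le_of_le_one_left (abs_nonneg _) q2
  have z1 := sq_abs S
  have x1 : 0 ≤ T * S ^ 2 := by positivity
  have x2 : 0 ≤ T * (a - 1) ^ 2 := by positivity
  have x3 : 0 ≤ T * (b - 1) ^ 2 := by positivity
  by_cases h1 : S ^ 2 ≤ 1 / 16
  · by_cases h2 : |a - 1| ≤ 1 / 2
    · by_cases h3 : |b - 1| ≤ 1 / 2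
      · have ha0 : 0 < a := by have := abs_le.1 h2; linarith
        rw [Psi_psi1 α hα p t x y ha0]
        exact psi1_bound ht h2 h3 h1
      · have : 1 / 4 < (b - 1) ^ 2 := by rw [← sq_abs]; nlinarith
        nlinarith [sq_nonneg (|S| - 1 / 2), sq_nonneg S, sq_nonneg (a - 1)]
    · have : 1 / 4 < (a - 1) ^ 2 := by rw [← sq_abs]; nlinarith
      nlinarith [sq_nonneg (|S| - 1 / 2), sq_nonneg S, sq_nonneg (b - 1)]
  · have : 1 / 4 < |S| := by
      by_contra hc
      have := abs_nonneg S
      apply h1; nlinarith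
    nlinarith [sq_nonneg (a - 1), sq_nonneg (b - 1)]

section avg
variable {d : ℕ} {α : Fin d → ℝ} {p t T : ℝ}

lemma thr_int (hp : p ∈ Set.Ioo (0 : ℝ) 1) (hthr : IsThreshold d α p t) :
    ∫ x, ∫ z, Ik t x z ∂(gaussPi d α) ∂(gaussPi d α) = p := by
  have h := integral_prod _ ((bm_Ik t (d := d)).integrable ((gaussPi d α).prod (gaussPi d α)))
  rw [← h]
  have e : (fun z : (Fin d → ℝ) × (Fin d → ℝ) => Ik t z.1 z.2) =
      Set.indicator {xy | t ≤ dotp xy.1 xy.2} 1 := by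
    ext z; simp [Ik, Set.indicator]
  rw [e, integral_indicator_one (measurableSet_le measurable_const
    (measurable_dotp measurable_fst measurable_snd)), Measure.real, hthr,
    ENNReal.toReal_ofReal hp.1.le]

lemma kk_zero (hp : p ∈ Set.Ioo (0 : ℝ) 1) (hthr : IsThreshold d α p t) :
    ∫ x, kk p t α x ∂(gaussPi d α) = 0 := by
  simp only [kk_eq]
  have b : BM (fun x : Fin d → ℝ => ∫ z, Ik t x z ∂(gaussPi d α)) :=
    BM.integral_right (F := fun x z => Ik t x z) (bm_Ik t) _
  rw [b.isub (BM.const p), thr_int hp hthr]; simp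

lemma kk_bd (hp : p ∈ Set.Ioo (0 : ℝ) 1) (x : Fin d → ℝ) : |kk p t α x| ≤ 1 :=
  abs_integral_le_one _ fun z => Kk_bd hp t x z

lemma t_bound (hα : ∀ i, 0 ≤ α i) (h2 : ∑ i, α i ^ 2 = 1) (hp : p ∈ Set.Ioo (0 : ℝ) 1)
    (hthr : IsThreshold d α p t) : t ^ 2 ≤ 1 / (p * (1 - p)) := by
  obtain ⟨hp0, hp1⟩ := hp
  have hq : ∫ x, quad α x ∂(gaussPi d α) = 1 := by
    rw [quad_mean α hα, ← h2]; exact Finset.sum_congr rfl fun i _ => by ring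
  have hdot : ∀ x, ∫ z, dotp x z ^ 2 ∂(gaussPi d α) = quad α x := fun x => by
    rw [gp_dot_sq α hα, quad_eq]
  have bI : BM (fun x : Fin d → ℝ => ∫ z, Ik t x z ∂(gaussPi d α)) :=
    BM.integral_right (F := fun x z => Ik t x z) (bm_Ik t) _
  rw [le_div_iff₀ (by nlinarith)]
  rcases le_or_gt t 0 with h | h
  · have k1 : ∀ x, ∫ z, t ^ 2 * (1 - Ik t x z) ∂(gaussPi d α) ≤ quad α x := fun x => by
      rw [← hdot x]
      refine integral_mono (((BM.const _).mul ((BM.const 1).sub (bm_Ik_l t x))).integrable _)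
        (gp_dot_sq_int α x) fun z => ?_
      dsimp only [Ik]
      split_ifs with h1
      · simp; positivity
      · push Not at h1; simp; nlinarith
    have k2 : ∫ x, t ^ 2 * (1 - ∫ z, Ik t x z ∂(gaussPi d α)) ∂(gaussPi d α) ≤ 1 := by
      refine le_trans ?_ hq.le
      refine integral_mono (((BM.const _).mul ((BM.const 1).sub bI)).integrable _)
        (quad_int α α) fun x => ?_
      refine le_trans (le_of_eq ?_) (k1 x)
      rw [integral_const_mul, (BM.const 1).isub (bm_Ik_l t x)]; simp
    rw [integral_const_mul, (BM.const 1).isub bI, thr_int ⟨hp0, hp1⟩ hthr] at k2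
    simp only [integral_const, probReal_univ, one_smul] at k2
    nlinarith [mul_nonneg (sq_nonneg t) (by linarith : 0 ≤ 1 - p)]
  · have k1 : ∀ x, ∫ z, t ^ 2 * Ik t x z ∂(gaussPi d α) ≤ quad α x := fun x => by
      rw [← hdot x]
      refine integral_mono (((BM.const _).mul (bm_Ik_l t x)).integrable _)
        (gp_dot_sq_int α x) fun z => ?_
      dsimp only [Ik]
      split_ifs with h1
      · simp; nlinarith
      · simp; positivity
    have k2 : ∫ x, t ^ 2 * (∫ z, Ik t x z ∂(gaussPi d α)) ∂(gaussPi d α) ≤ 1 := by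
      rw [← hq]
      refine integral_mono (((BM.const _).mul bI).integrable _)
        (quad_int α α) fun x => ?_
      refine le_trans (le_of_eq ?_) (k1 x)
      rw [integral_const_mul]
    rw [integral_const_mul, thr_int ⟨hp0, hp1⟩ hthr] at k2
    nlinarith [mul_nonneg (sq_nonneg t) hp0.le]

lemma Sf_dot (α x y : Fin d → ℝ) : Sf α x y = dotp (fun i => x i * α i) y := by
  unfold Sf dotp; exact Finset.sum_congr rfl fun i _ => by ring

lemma Sf_int (α x : Fin d → ℝ) : Integrable (fun y => Sf α x y) (gaussPi d α) := by
  simp only [Sf_dot]; exact gp_dot_int _ _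
lemma Sf_sq_int (α x : Fin d → ℝ) : Integrable (fun y => Sf α x y ^ 2) (gaussPi d α) := by
  simp only [Sf_dot]; exact gp_dot_sq_int _ _
lemma Sf_mean (α x : Fin d → ℝ) : ∫ y, Sf α x y ∂(gaussPi d α) = 0 := by
  simp only [Sf_dot]; exact gp_dot_mean _ _
lemma Sf_sq (hα : ∀ i, 0 ≤ α i) (x : Fin d → ℝ) :
    ∫ y, Sf α x y ^ 2 ∂(gaussPi d α) = quad (fun i => α i ^ 3) x := by
  simp only [Sf_dot]; rw [gp_dot_sq α hα]; unfold quad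
  exact Finset.sum_congr rfl fun i _ => by ring

lemma A_int (α : Fin d → ℝ) : Integrable (fun y => (quad α y - 1) ^ 2) (gaussPi d α) :=
  ((quad_memLp α α).sub (memLp_const 1)).integrable_sq

lemma A_sq (hα : ∀ i, 0 ≤ α i) (h2 : ∑ i, α i ^ 2 = 1) :
    ∫ y, (quad α y - 1) ^ 2 ∂(gaussPi d α) = kap * ∑ i, α i ^ 4 := by
  have h := quad_var α hα α
  have e : ∑ i, α i * α i = 1 := by rw [← h2]; exact Finset.sum_congr rfl fun i _ => by ring
  rw [e] at h; rw [h]; congr 1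
  exact Finset.sum_congr rfl fun i _ => by ring

def Rf (α x y : Fin d → ℝ) : ℝ := Sf α x y ^ 2 + (quad α x - 1) ^ 2 + (quad α y - 1) ^ 2
def Rx (α x : Fin d → ℝ) : ℝ :=
  quad (fun i => α i ^ 3) x + (quad α x - 1) ^ 2 + kap * ∑ i, α i ^ 4

lemma Rf_int (α x : Fin d → ℝ) : Integrable (fun y => Rf α x y) (gaussPi d α) :=
  ((Sf_sq_int α x).add (integrable_const _)).add (A_int α)

lemma Rf_eq (hα : ∀ i, 0 ≤ α i) (h2 : ∑ i, α i ^ 2 = 1) (x : Fin d → ℝ) :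
    ∫ y, Rf α x y ∂(gaussPi d α) = Rx α x := by
  unfold Rf Rx
  have i1 : Integrable (fun y => Sf α x y ^ 2 + (quad α x - 1) ^ 2) (gaussPi d α) :=
    (Sf_sq_int α x).add (integrable_const _)
  rw [integral_add i1 (A_int α), integral_add (Sf_sq_int α x) (integrable_const _), Sf_sq hα,
    A_sq hα h2]
  simp

lemma Rx_int (α : Fin d → ℝ) : Integrable (fun x => Rx α x) (gaussPi d α) :=
  ((quad_int α _).add (A_int α)).add (integrable_const _)

lemma Rx_eq (hα : ∀ i, 0 ≤ α i) (h2 : ∑ i, α i ^ 2 = 1) :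
    ∫ x, Rx α x ∂(gaussPi d α) = (1 + 2 * kap) * ∑ i, α i ^ 4 := by
  unfold Rx
  have i1 : Integrable (fun x => quad (fun i => α i ^ 3) x + (quad α x - 1) ^ 2) (gaussPi d α) :=
    (quad_int α _).add (A_int α)
  rw [integral_add i1 (integrable_const _), integral_add (quad_int α _) (A_int α),
    quad_mean α hα, A_sq hα h2]
  have : ∑ i, α i ^ 3 * α i = ∑ i, α i ^ 4 := Finset.sum_congr rfl fun i _ => by ring
  rw [this]; simp; ring

lemma Psi_swap : ∫ x, ∫ y, Psi p t α x y ∂(gaussPi d α) ∂(gaussPi d α) =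
    ∫ x, kk p t α x ^ 2 ∂(gaussPi d α) - (∫ x, kk p t α x ∂(gaussPi d α)) ^ 2 := by
  have bn : BM (fun x => ∫ y, n2 p t α x y ∂(gaussPi d α)) :=
    BM.integral_right (F := fun x y => n2 p t α x y) (bm_n2 p t α) _
  have e1 : ∀ x, ∫ y, Psi p t α x y ∂(gaussPi d α) = ∫ y, n2 p t α x y ∂(gaussPi d α) -
      kk p t α x * ∫ y, kk p t α y ∂(gaussPi d α) := fun x => by
    unfold Psi
    rw [(bm_n2_l p t α x).isub ((BM.const _).mul (bm_kk p t α)), integral_const_mul]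
  simp only [e1]
  rw [bn.isub ((bm_kk p t α).mul (BM.const _)), integral_mul_const]
  have e2 : ∀ x, ∫ y, n2 p t α x y ∂(gaussPi d α) =
      ∫ z, Kk p t x z * kk p t α z ∂(gaussPi d α) := fun x => by
    unfold n2
    rw [integral_integral_swap]
    · refine integral_congr_ae (Eventually.of_forall fun z => ?_)
      dsimp only
      rw [integral_const_mul]
      unfold kk; simp only [Kk_symm p t z]
    · refine BM.integrable ?_ _
      exact (((bm_Kk_l t x).comp (measurable_snd)).mul (bm_Kk t) : BM (fun z : (Fin d → ℝ) ×
        (Fin d → ℝ) => Kk p t x z.2 * Kk p t z.1 z.2))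
  simp only [e2]
  rw [integral_integral_swap]
  · have : ∀ z : Fin d → ℝ, ∫ x, Kk p t x z * kk p t α z ∂(gaussPi d α) = kk p t α z ^ 2 := by
      intro z
      rw [integral_mul_const, pow_two]
      congr 1
      unfold kk; simp only [Kk_symm p t z]
    simp only [this]; ring
  · refine BM.integrable ?_ _
    exact ((bm_Kk t).mul ((bm_kk p t α).comp measurable_snd) : BM (fun z : (Fin d → ℝ) ×
        (Fin d → ℝ) => Kk p t z.1 z.2 * kk p t α z.2))

lemma ek2 (hα : ∀ i, 0 ≤ α i) (h2 : ∑ i, α i ^ 2 = 1) (hp : p ∈ Set.Ioo (0 : ℝ) 1)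
    (hthr : IsThreshold d α p t) (ht : t ^ 2 ≤ T) :
    ∫ x, kk p t α x ^ 2 ∂(gaussPi d α) ≤ (20 + 10 * T) * ((1 + 2 * kap) * ∑ i, α i ^ 4) := by
  have h := Psi_swap (p := p) (t := t) (α := α)
  rw [kk_zero hp hthr] at h
  have bP : BM (fun x => ∫ y, Psi p t α x y ∂(gaussPi d α)) :=
    BM.integral_right (F := fun x y => Psi p t α x y) (bm_Psi p t α) _
  rw [← Rx_eq hα h2, ← integral_const_mul]
  have : ∫ x, kk p t α x ^ 2 ∂(gaussPi d α) =
    ∫ x, ∫ y, Psi p t α x y ∂(gaussPi d α) ∂(gaussPi d α) := by rw [h]; ring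
  rw [this]
  refine integral_mono (bP.integrable _) ((Rx_int α).const_mul _) fun x => ?_
  dsimp only
  rw [← Rf_eq hα h2, ← integral_const_mul]
  have e : ∫ y, Psi p t α x y ∂(gaussPi d α) =
      ∫ y, (Psi p t α x y - ph 1 t ^ 2 * Sf α x y) ∂(gaussPi d α) := by
    rw [integral_sub ((bm_Psi_l p t α x).integrable _) ((Sf_int α x).const_mul _),
      integral_const_mul, Sf_mean]; ring
  rw [e]
  refine integral_mono (((bm_Psi_l p t α x).integrable _).sub ((Sf_int α x).const_mul _))
    ((Rf_int α x).const_mul _) fun y => ?_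
  exact (le_abs_self _).trans (Psi_pointwise α hα p t T ht x y)

lemma hf2_eq (x y : Fin d → ℝ) :
    hf2 (gaussPi d α) (Hk p t) x y = Kk p t x y * n2 p t α x y := by
  unfold hf2 n2 Hk
  rw [← integral_const_mul]; simp only [mul_assoc]

lemma K2 (hα : ∀ i, 0 ≤ α i) (h2 : ∑ i, α i ^ 2 = 1) (hp : p ∈ Set.Ioo (0 : ℝ) 1)
    (hthr : IsThreshold d α p t) (ht : t ^ 2 ≤ T) :
    hV2 (gaussPi d α) (Hk p t) ≤
      (2 + 6 * ((20 + 10 * T) * (1 + 2 * kap))) * ∑ i, α i ^ 4 := by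
  have hT : 0 ≤ T := (sq_nonneg t).trans ht
  set C := 20 + 10 * T with hC
  have hsk := Hk_symKer hp t (d := d)
  set E2 := ∫ x, kk p t α x ^ 2 ∂(gaussPi d α) with hE2
  have hE0 : 0 ≤ E2 := integral_nonneg fun x => sq_nonneg _
  have hE1 : E2 ≤ 1 := (le_abs_self _).trans (abs_integral_le_one _ fun x => by
    rw [abs_of_nonneg (sq_nonneg _), ← sq_abs]
    exact pow_le_one₀ (abs_nonneg _) (kk_bd hp x))
  have hE := ek2 hα h2 hp hthr ht
  rw [← hE2, ← hC] at hE
  have pt : ∀ x y, hf2 (gaussPi d α) (Hk p t) x y ^ 2 ≤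
      (2 * Sf α x y ^ 2 + 4 * C * Rf α x y) + 2 * kk p t α x ^ 2 * kk p t α y ^ 2 := by
    intro x y
    rw [hf2_eq, mul_pow]
    have a1 : Kk p t x y ^ 2 ≤ 1 := by
      rw [← sq_abs]; exact pow_le_one₀ (abs_nonneg _) (Kk_bd hp t x y)
    have a2 : n2 p t α x y = Psi p t α x y + kk p t α x * kk p t α y := by unfold Psi; ring
    refine (mul_le_of_le_one_left (sq_nonneg _) a1).trans ?_
    have a3 : Psi p t α x y ^ 2 ≤ Sf α x y ^ 2 + 2 * (C * Rf α x y) := by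
      have b1 := Psi_pointwise α hα p t T ht x y
      have b2 := Psi_bd p t α x y
      have q1 := ph_le_one (v := 1) (by norm_num) t
      have q0 := ph_nonneg 1 t
      have q2 : ph 1 t ^ 2 ≤ 1 := pow_le_one₀ q0 q1
      set c := ph 1 t ^ 2 with hc
      set P := Psi p t α x y
      set S := Sf α x y
      have c0 : 0 ≤ c := by positivity
      have c1 : (c * S) ^ 2 ≤ S ^ 2 := by
        rw [mul_pow]; exact mul_le_of_le_one_left (sq_nonneg _) (pow_le_one₀ c0 q2)
      have b3 : P * (P - c * S) ≤ C * Rf α x y := by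
        refine (le_abs_self _).trans ?_
        rw [abs_mul]
        exact (mul_le_of_le_one_left (abs_nonneg _) b2).trans b1
      nlinarith [sq_nonneg (P - c * S)]
    rw [a2]
    nlinarith [sq_nonneg (Psi p t α x y - kk p t α x * kk p t α y)]
  have in1 : ∀ x, ∫ y, hf2 (gaussPi d α) (Hk p t) x y ^ 2 ∂(gaussPi d α) ≤
      (2 * quad (fun i => α i ^ 3) x + 4 * C * Rx α x) + 2 * E2 * kk p t α x ^ 2 := by
    intro x
    have j1 : Integrable (fun y => 2 * Sf α x y ^ 2 + 4 * C * Rf α x y) (gaussPi d α) :=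
      ((Sf_sq_int α x).const_mul _).add ((Rf_int α x).const_mul _)
    have j2 : Integrable (fun y => 2 * kk p t α x ^ 2 * kk p t α y ^ 2) (gaussPi d α) :=
      (((bm_kk p t α).pow 2).integrable _).const_mul _
    refine (integral_mono (((hsk.f2_left _ x).pow 2).integrable _) (j1.add j2)
      (pt x)).trans (le_of_eq ?_)
    refine (integral_add j1 j2).trans ?_
    rw [integral_add ((Sf_sq_int α x).const_mul _)
      ((Rf_int α x).const_mul _), integral_const_mul, integral_const_mul, integral_const_mul,
      Sf_sq hα, Rf_eq hα h2, ← hE2]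
    ring
  unfold hV2
  have j1 : Integrable (fun x => 2 * quad (fun i => α i ^ 3) x + 4 * C * Rx α x) (gaussPi d α) :=
    ((quad_int α _).const_mul _).add ((Rx_int α).const_mul _)
  have j2 : Integrable (fun x => 2 * E2 * kk p t α x ^ 2) (gaussPi d α) :=
      (((bm_kk p t α).pow 2).integrable _).const_mul _
  refine (integral_mono ((BM.integral_right
    (F := fun x y => hf2 (gaussPi d α) (Hk p t) x y ^ 2) ((hsk.bm_f2 _).pow 2) _).integrable _)
    (j1.add j2) in1).trans ?_
  refine le_trans (le_of_eq (integral_add j1 j2)) ?_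
  rw [integral_add ((quad_int α _).const_mul _)
      ((Rx_int α).const_mul _), integral_const_mul, integral_const_mul, integral_const_mul,
      quad_mean α hα, Rx_eq hα h2, ← hE2]
  have : ∑ i, α i ^ 3 * α i = ∑ i, α i ^ 4 := Finset.sum_congr rfl fun i _ => by ring
  rw [this]
  nlinarith

end avg

section avg
variable {d : ℕ} {α : Fin d → ℝ} {p t T : ℝ}

lemma quad_nonneg (hα : ∀ i, 0 ≤ α i) (x : Fin d → ℝ) : 0 ≤ quad α x :=
  Finset.sum_nonneg fun i _ => mul_nonneg (hα i) (sq_nonneg _)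

lemma IS_pos (hα : ∀ i, 0 ≤ α i) (x : Fin d → ℝ) (hx : 0 < quad α x) :
    ∫ y, Ik t x y * Sf α x y ∂(gaussPi d α) =
      quad (fun i => α i ^ 2) x * ph (quad α x) t := by
  set e : Fin d → ℝ := fun i => x i * α i with he
  have hS : Sf α x e = quad (fun i => α i ^ 2) x := by
    unfold Sf quad; exact Finset.sum_congr rfl fun i _ => by simp only [he]; ring
  set l := Sf α x e / quad α x with hl
  set v := quad α e - Sf α x e ^ 2 / quad α x with hv
  have m1 : Measurable (fun w : ℝ × ℝ => if t ≤ w.1 then (1:ℝ) else 0) :=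
    Measurable.ite (measurableSet_le measurable_const measurable_fst) measurable_const
      measurable_const
  have m2 : Measurable (fun w : ℝ × ℝ => w.2 + l * w.1) := by fun_prop
  have r1 := regress α hα x e hx _ (m1.mul m2)
  simp only [Pi.mul_apply, ← hl, ← hv, sub_add_cancel] at r1
  have e1 : ∫ y, Ik t x y * Sf α x y ∂(gaussPi d α) =
      ∫ y, (if t ≤ dotp x y then (1:ℝ) else 0) * dotp e y ∂(gaussPi d α) := by
    simp only [Sf_dot]; rfl
  rw [e1, r1]
  have hi : Integrable (fun w : ℝ × ℝ => w.2 + l * w.1)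
      ((gaussianReal 0 (quad α x).toNNReal).prod (gaussianReal 0 v.toNNReal)) :=
    ((gauss_id_int v).comp_snd _).add (((gauss_id_int (quad α x)).comp_fst _).const_mul l)
  rw [integral_prod _ (hi.bdd_mul (c := 1) m1.aestronglyMeasurable
    (Eventually.of_forall fun w => by split_ifs <;> simp))]
  have e2 : ∀ u : ℝ, ∫ r, (if t ≤ u then (1:ℝ) else 0) * (r + l * u) ∂(gaussianReal 0 v.toNNReal)
      = l * (if t ≤ u then u else 0) := by
    intro u
    have : ∫ r, (r + l * u) ∂(gaussianReal 0 v.toNNReal) = l * u := by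
      rw [integral_add (gauss_id_int v) (integrable_const _), gauss_mean]; simp
    by_cases h : t ≤ u
    · simp only [h, if_true, one_mul, this]
    · simp [h]
  simp only [e2]
  rw [integral_const_mul, gauss_tail_mean hx, hl, hS]
  field_simp

lemma IS_zero (hα : ∀ i, 0 ≤ α i) (x : Fin d → ℝ) (hx : quad α x = 0) (y : Fin d → ℝ) :
    Sf α x y = 0 := by
  unfold quad at hx
  rw [Finset.sum_eq_zero_iff_of_nonneg fun i _ => mul_nonneg (hα i) (sq_nonneg _)] at hx
  unfold Sf
  refine Finset.sum_eq_zero fun i hi => ?_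
  rcases mul_eq_zero.1 (hx i hi) with h | h
  · rw [h]; ring
  · rw [pow_eq_zero_iff (by norm_num)] at h; rw [h]; ring

/-- lower bound for the density near the threshold -/
def e0 (T : ℝ) : ℝ := rexp (-T) / 4

lemma e0_pos (T : ℝ) : 0 < e0 T := by unfold e0; positivity

lemma ph_lower {a : ℝ} (ht : t ^ 2 ≤ T) (ha : |a - 1| ≤ 1 / 2) : e0 T ≤ ph a t := by
  have ha' := abs_le.1 ha
  have ha0 : 0 < a := by linarith
  unfold e0 ph
  have h1 : 1 / 4 ≤ (√(2 * π * a))⁻¹ := by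
    rw [one_div]
    apply inv_anti₀ (by positivity)
    rw [Real.sqrt_le_left (by norm_num)]
    nlinarith [Real.pi_lt_four, Real.pi_pos]
  have h2 : rexp (-T) ≤ rexp (-t ^ 2 / (2 * a)) := by
    apply Real.exp_le_exp.2
    rw [neg_div, neg_le_neg_iff, div_le_iff₀ (by positivity)]
    nlinarith [sq_nonneg t]
  calc rexp (-T) / 4 = (1 / 4) * rexp (-T) := by ring
    _ ≤ _ := by gcongr

lemma KS_lower (hα : ∀ i, 0 ≤ α i) (ht : t ^ 2 ≤ T) {r : ℝ} (hr1 : r ≤ 1) (x : Fin d → ℝ) :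
    e0 T * (quad (fun i => α i ^ 2) x - 6 * (quad α x - 1) ^ 2 -
      (1 / 2) * (quad (fun i => α i ^ 2) x - r) ^ 2) ≤
    ∫ y, Kk p t x y * Sf α x y ∂(gaussPi d α) := by
  have hI : Integrable (fun y => Ik t x y * Sf α x y) (gaussPi d α) :=
    (Sf_int α x).bdd_mul (c := 1) (bm_Ik_l t x).1.aestronglyMeasurable
      (Eventually.of_forall fun w => by
        rw [Real.norm_eq_abs, abs_of_nonneg (Ik_nonneg _ _ _)]; exact Ik_le _ _ _)
  have e : ∫ y, Kk p t x y * Sf α x y ∂(gaussPi d α) =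
      ∫ y, Ik t x y * Sf α x y ∂(gaussPi d α) := by
    simp only [Kk_eq, sub_mul]
    rw [integral_sub hI ((Sf_int α x).const_mul _), integral_const_mul, Sf_mean]; ring
  rw [e]
  set τ := quad (fun i => α i ^ 2) x with hτ
  have hτ0 : 0 ≤ τ := quad_nonneg (fun i => sq_nonneg _) x
  have h0 : 0 ≤ ∫ y, Ik t x y * Sf α x y ∂(gaussPi d α) := by
    rcases (quad_nonneg hα x).eq_or_lt with h | h
    · simp [IS_zero hα x h.symm]
    · rw [IS_pos hα x h]; exact mul_nonneg hτ0 (ph_nonneg _ _)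
  have he := e0_pos T
  by_cases h : |quad α x - 1| ≤ 1 / 2
  · have hq : 0 < quad α x := by have := abs_le.1 h; linarith
    rw [IS_pos hα x hq, ← hτ, mul_comm τ]
    have := ph_lower ht h
    refine le_trans (mul_le_mul_of_nonneg_left ?_ he.le) (mul_le_mul_of_nonneg_right this hτ0)
    nlinarith [sq_nonneg (quad α x - 1), sq_nonneg (τ - r)]
  · refine le_trans ?_ h0
    apply mul_nonpos_of_nonneg_of_nonpos he.le
    have : 1 / 4 < (quad α x - 1) ^ 2 := by rw [← sq_abs]; push Not at h; nlinarith
    nlinarith [sq_nonneg (τ - r - 1)]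

lemma alpha_le_one (hα : ∀ i, 0 ≤ α i) (h2 : ∑ i, α i ^ 2 = 1) (i : Fin d) : α i ≤ 1 := by
  have := Finset.single_le_sum (f := fun i => α i ^ 2) (fun i _ => sq_nonneg (α i))
    (Finset.mem_univ i)
  rw [h2] at this
  nlinarith [hα i]

lemma r_le_one (hα : ∀ i, 0 ≤ α i) (h2 : ∑ i, α i ^ 2 = 1) : ∑ i, α i ^ 3 ≤ 1 := by
  rw [← h2]
  exact Finset.sum_le_sum fun i _ => pow_le_pow_of_le_one (hα i) (alpha_le_one hα h2 i) (by norm_num)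

lemma six_le (hα : ∀ i, 0 ≤ α i) (h2 : ∑ i, α i ^ 2 = 1) :
    ∑ i, (α i ^ 2) ^ 2 * α i ^ 2 ≤ ∑ i, α i ^ 4 := by
  refine Finset.sum_le_sum fun i _ => ?_
  have : (α i ^ 2) ^ 2 * α i ^ 2 = α i ^ 6 := by ring
  rw [this]
  exact pow_le_pow_of_le_one (hα i) (alpha_le_one hα h2 i) (by norm_num)

lemma K3 (hα : ∀ i, 0 ≤ α i) (h2 : ∑ i, α i ^ 2 = 1) (hp : p ∈ Set.Ioo (0 : ℝ) 1)
    (hthr : IsThreshold d α p t) (ht : t ^ 2 ≤ T) :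
    e0 T ^ 3 * ∑ i, α i ^ 3 - (7 * kap + 2 * ((20 + 10 * T) * (1 + 2 * kap))) * ∑ i, α i ^ 4 ≤
      hD (gaussPi d α) (Hk p t) := by
  have hT : 0 ≤ T := (sq_nonneg t).trans ht
  set C := 20 + 10 * T with hC
  set r := ∑ i, α i ^ 3 with hr
  set β := ∑ i, α i ^ 4 with hβ
  have hβ0 : 0 ≤ β := Finset.sum_nonneg fun i _ => by positivity
  have hsk := Hk_symKer hp t (d := d)
  set E2 := ∫ x, kk p t α x ^ 2 ∂(gaussPi d α) with hE2
  have hE := ek2 hα h2 hp hthr ht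
  rw [← hE2, ← hC, ← hβ] at hE
  set c := ph 1 t ^ 2 with hc
  have he := e0_pos T
  have q1 := ph_le_one (v := 1) (by norm_num) t
  have q0 : e0 T ≤ ph 1 t := ph_lower ht (by norm_num)
  have c0 : 0 ≤ c := by positivity
  have c1 : c ≤ 1 := pow_le_one₀ (he.le.trans q0) q1
  have ce : e0 T ^ 2 ≤ c := by rw [hc]; gcongr
  set Qx : (Fin d → ℝ) → ℝ := fun x => quad (fun i => α i ^ 2) x - 6 * (quad α x - 1) ^ 2 -
      (1 / 2) * (quad (fun i => α i ^ 2) x - r) ^ 2 with hQ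
  have pt : ∀ x y, c * (Kk p t x y * Sf α x y) - C * Rf α x y -
      (1 / 2) * (kk p t α x ^ 2 + kk p t α y ^ 2) ≤ hf2 (gaussPi d α) (Hk p t) x y := by
    intro x y
    rw [hf2_eq]
    have a2 : n2 p t α x y = Psi p t α x y + kk p t α x * kk p t α y := by unfold Psi; ring
    have b1 := Psi_pointwise α hα p t T ht x y
    have b2 := Kk_bd hp t x y
    have b3 : |Kk p t x y * (Psi p t α x y - c * Sf α x y)| ≤ C * Rf α x y := by
      rw [abs_mul]
      exact (mul_le_of_le_one_left (abs_nonneg _) b2).trans b1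
    have b4 : |Kk p t x y * (kk p t α x * kk p t α y)| ≤
        (1 / 2) * (kk p t α x ^ 2 + kk p t α y ^ 2) := by
      rw [abs_mul]
      refine (mul_le_of_le_one_left (abs_nonneg _) b2).trans ?_
      rw [abs_le]
      constructor <;> nlinarith [sq_nonneg (kk p t α x - kk p t α y),
        sq_nonneg (kk p t α x + kk p t α y)]
    have := (abs_le.1 b3).1
    have := (abs_le.1 b4).1
    rw [a2]; nlinarith
  have in1 : ∀ x, e0 T * c * Qx x - C * Rx α x - (1 / 2) * (kk p t α x ^ 2 + E2) ≤
      hf1 (gaussPi d α) (Hk p t) x := by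
    intro x
    have j0 : Integrable (fun y => Kk p t x y * Sf α x y) (gaussPi d α) :=
      (Sf_int α x).bdd_mul (c := 1) (bm_Kk_l t x).1.aestronglyMeasurable
        (Eventually.of_forall fun w => by
          rw [Real.norm_eq_abs]; exact Kk_bd hp _ _ _)
    have j1 : Integrable (fun y => c * (Kk p t x y * Sf α x y) - C * Rf α x y) (gaussPi d α) :=
      (j0.const_mul _).sub ((Rf_int α x).const_mul _)
    have j3 : Integrable (fun y => kk p t α x ^ 2 + kk p t α y ^ 2) (gaussPi d α) :=
      (integrable_const _).add (((bm_kk p t α).pow 2).integrable _)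
    have j2 := j3.const_mul (1 / 2)
    refine le_trans ?_ (integral_mono (j1.sub j2) ((hsk.f2_left _ x).integrable _) (pt x))
    refine le_trans ?_ (le_of_eq (integral_sub j1 j2).symm)
    rw [integral_sub (j0.const_mul _) ((Rf_int α x).const_mul _), integral_const_mul,
      integral_const_mul, integral_const_mul, Rf_eq hα h2,
      integral_add (integrable_const _) (((bm_kk p t α).pow 2).integrable _), ← hE2]
    have := KS_lower (p := p) hα ht (r_le_one hα h2) x
    rw [← hr] at this
    have := mul_le_mul_of_nonneg_left this c0
    simp only [integral_const, probReal_univ, one_smul]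
    simp only [hQ]
    linarith
  have iq1 : Integrable (fun x => quad (fun i => α i ^ 2) x - 6 * (quad α x - 1) ^ 2)
      (gaussPi d α) := (quad_int α _).sub ((A_int α).const_mul _)
  have iq2 : Integrable (fun x => (quad (fun i => α i ^ 2) x - r) ^ 2) (gaussPi d α) :=
    ((quad_memLp α _).sub (memLp_const r)).integrable_sq
  have iq : Integrable Qx (gaussPi d α) := iq1.sub (iq2.const_mul _)
  have er : ∑ i, α i ^ 2 * α i = r := Finset.sum_congr rfl fun i _ => by ring
  have vq : r - 7 * kap * β ≤ ∫ x, Qx x ∂(gaussPi d α) := by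
    have v1 := quad_var α hα (fun i => α i ^ 2)
    rw [er] at v1
    simp only [hQ]
    rw [integral_sub iq1 (iq2.const_mul _), integral_sub (quad_int α _) ((A_int α).const_mul _),
      integral_const_mul, integral_const_mul, v1, A_sq hα h2, quad_mean α hα, er, ← hβ]
    have := mul_le_mul_of_nonneg_left (six_le hα h2) kap_nonneg
    rw [← hβ] at this
    have := mul_nonneg kap_nonneg hβ0
    linarith
  have k1 : Integrable (fun x => e0 T * c * Qx x - C * Rx α x) (gaussPi d α) :=
    (iq.const_mul _).sub ((Rx_int α).const_mul _)
  have k3 : Integrable (fun x => kk p t α x ^ 2 + E2) (gaussPi d α) :=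
    (((bm_kk p t α).pow 2).integrable _).add (integrable_const _)
  have k2 := k3.const_mul (1 / 2)
  have fin := integral_mono (k1.sub k2) ((hsk.bm_f1 _).integrable _) in1
  have fin2 := (integral_sub k1 k2).symm.le.trans fin
  rw [integral_sub (iq.const_mul _) ((Rx_int α).const_mul _), integral_const_mul,
      integral_const_mul, integral_const_mul, Rx_eq hα h2,
      integral_add (((bm_kk p t α).pow 2).integrable _) (integrable_const _), ← hE2, ← hβ] at fin2
  simp only [integral_const, probReal_univ, one_smul] at fin2
  refine le_trans ?_ fin2
  have g0 : 0 ≤ e0 T * c := mul_nonneg he.le c0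
  have g1 : e0 T * c ≤ 1 := mul_le_one₀ (q0.trans q1) c0 c1
  have g2 : e0 T ^ 3 ≤ e0 T * c := by
    rw [pow_succ', ]; exact mul_le_mul_of_nonneg_left ce he.le
  have hr0 : 0 ≤ r := Finset.sum_nonneg fun i _ => pow_nonneg (hα i) 3
  have g3 := mul_le_mul_of_nonneg_left vq g0
  have g4 := mul_le_mul_of_nonneg_right g2 hr0
  have hkβ : 0 ≤ 7 * kap * β := mul_nonneg (mul_nonneg (by norm_num) kap_nonneg) hβ0
  have g5 := mul_le_mul_of_nonneg_right g1 hkβ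
  nlinarith

end avg

section spike

/-- real sign function -/
def sgm (u : ℝ) : ℝ := if 0 < u then 1 else if u < 0 then -1 else 0

lemma sgm_meas : Measurable sgm :=
  Measurable.ite (measurableSet_lt measurable_const measurable_id) measurable_const
    (Measurable.ite (measurableSet_lt measurable_id measurable_const)
      measurable_const measurable_const)

lemma sgm_neg (u : ℝ) : sgm (-u) = - sgm u := by
  unfold sgm
  rcases lt_trichotomy u 0 with h | h | h
  · simp [h, not_lt.2 h.le]
  · simp [h]
  · simp [h, not_lt.2 h.le]

lemma sgm_bd (u : ℝ) : |sgm u| ≤ 1 := by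
  unfold sgm; split_ifs <;> simp

lemma sgm_pos {u : ℝ} (h : 0 < u) : sgm u = 1 := by simp [sgm, h]
lemma sgm_of_neg {u : ℝ} (h : u < 0) : sgm u = -1 := by simp [sgm, h, not_lt.2 h.le]

lemma bm_sgm {d : ℕ} (m : Fin d) : BM (fun y : Fin d → ℝ => sgm (y m)) :=
  ⟨sgm_meas.comp (measurable_pi_apply m), 1, fun _ => sgm_bd _⟩

lemma Gt_mono_v {ε v A : ℝ} (hε : 0 < ε) (hv : ε ≤ v) (hA : 0 ≤ A) : Gt ε A ≤ Gt v A := by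
  set c := √(v / ε) with hc
  have hv0 : 0 < v := hε.trans_le hv
  have c1 : 1 ≤ c := by
    rw [hc, ← Real.sqrt_one]; apply Real.sqrt_le_sqrt; rw [le_div_iff₀ hε]; linarith
  have csq : c ^ 2 = v / ε := Real.sq_sqrt (by positivity)
  have hmap : (gaussianReal 0 ε.toNNReal).map (fun x => c * x) = gaussianReal 0 v.toNNReal := by
    rw [gaussianReal_map_const_mul]
    congr 1
    · simp
    · ext
      simp only [NNReal.coe_mul, NNReal.coe_mk, Real.coe_toNNReal _ hε.le, Real.coe_toNNReal _ hv0.le]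
      rw [csq]; field_simp
  unfold Gt
  rw [← hmap, map_measureReal_apply (by fun_prop) measurableSet_Ici]
  refine measureReal_mono (fun x hx => ?_)
  have hx' : A ≤ x := hx
  show A ≤ c * x
  nlinarith

lemma Gt_pos {ε A : ℝ} (hε : 0 < ε) : 0 < Gt ε A := by
  unfold Gt
  have hv : ε.toNNReal ≠ 0 := by simpa using hε
  have : (gaussianReal 0 ε.toNNReal) (Set.Ici A) ≠ 0 := by
    intro h
    have := gaussianReal_absolutelyContinuous' 0 hv h
    simp at this
  exact ENNReal.toReal_pos this (measure_ne_top _ _)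

/-- flip the sign of one coordinate -/
def fl {d : ℕ} (m : Fin d) (y : Fin d → ℝ) : Fin d → ℝ := fun i => if i = m then - y i else y i

lemma fl_mp {d : ℕ} (α : Fin d → ℝ) (m : Fin d) :
    MeasurePreserving (fl m) (gaussPi d α) (gaussPi d α) := by
  unfold gaussPi fl
  refine measurePreserving_pi (f := fun i u => if i = m then - u else u) _ _ fun i => ?_
  by_cases h : i = m
  · simp only [h, if_true]
    refine ⟨measurable_neg, ?_⟩
    have := gaussianReal_map_neg (μ := 0) (v := (α m).toNNReal)
    simpa using this
  · simp only [h, if_false]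
    exact MeasurePreserving.id _

lemma fl_int {d : ℕ} (α : Fin d → ℝ) (m : Fin d) {F : (Fin d → ℝ) → ℝ} (hF : Measurable F) :
    ∫ y, F (fl m y) ∂(gaussPi d α) = ∫ y, F y ∂(gaussPi d α) := by
  have h := fl_mp α m
  conv_rhs => rw [← h.map_eq]
  rw [integral_map h.measurable.aemeasurable hF.aestronglyMeasurable]

lemma dot_split {d : ℕ} (m : Fin d) (x y : Fin d → ℝ) :
    dotp x y = x m * y m + dotp (Function.update x m 0) y := by
  unfold dotp
  rw [← Finset.add_sum_erase _ _ (Finset.mem_univ m),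
    ← Finset.add_sum_erase (f := fun i => Function.update x m 0 i * y i) _ (Finset.mem_univ m)]
  simp only [Function.update_self, zero_mul, zero_add]
  congr 1
  refine Finset.sum_congr rfl fun i hi => ?_
  rw [Function.update_of_ne (Finset.ne_of_mem_erase hi)]

lemma dot_fl {d : ℕ} (m : Fin d) (y z : Fin d → ℝ) :
    dotp (fl m y) z = - (y m * z m) + dotp (Function.update y m 0) z := by
  rw [dot_split m]
  have : Function.update (fl m y) m 0 = Function.update y m 0 := by
    ext i
    by_cases h : i = m
    · subst h; simp
    · simp [h, fl]
  rw [this]; simp [fl]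

/-- events about one coordinate and sums over the other coordinates are independent -/
lemma split_prob {d : ℕ} (α : Fin d → ℝ) (m : Fin d) (g : Fin d → ℝ → ℝ)
    (hg : ∀ i, Measurable (g i)) (A : ℝ) (S : Set ℝ) (hS : MeasurableSet S) :
    (gaussPi d α).real {x | A ≤ x m ∧ ∑ i ∈ Finset.univ.erase m, g i (x i) ∈ S} =
      Gt (α m) A * (gaussPi d α).real {x | ∑ i ∈ Finset.univ.erase m, g i (x i) ∈ S} := by
  set f : Fin d → (Fin d → ℝ) → ℝ := fun i x => if i = m then x i else g i (x i) with hf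
  have hi : iIndepFun f (gaussPi d α) := by
    have := (gp_indep d α).comp (fun i u => if i = m then u else g i u) (fun i => by
      by_cases h : i = m
      · simp only [h, if_true]; exact measurable_id
      · simpa [h] using hg i)
    exact this
  have hm : ∀ i, Measurable (f i) := fun i => by
    by_cases h : i = m
    · simp only [hf, h, if_true]; fun_prop
    · simp only [hf, h, if_false]; exact (hg i).comp (measurable_pi_apply i)
  have hind := hi.indepFun_finsetSum_of_notMem hm (Finset.notMem_erase m Finset.univ)
  have e1 : ∀ x, (∑ i ∈ Finset.univ.erase m, f i) x = ∑ i ∈ Finset.univ.erase m, g i (x i) := by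
    intro x
    rw [Finset.sum_apply]
    refine Finset.sum_congr rfl fun i hi => ?_
    simp [hf, Finset.ne_of_mem_erase hi]
  have key := hind.measure_inter_preimage_eq_mul S (Set.Ici A) hS measurableSet_Ici
  have e2 : {x : Fin d → ℝ | A ≤ x m ∧ ∑ i ∈ Finset.univ.erase m, g i (x i) ∈ S} =
      (∑ i ∈ Finset.univ.erase m, f i) ⁻¹' S ∩ f m ⁻¹' Set.Ici A := by
    ext x
    have e5 : f m x = x m := by simp [hf]
    simp only [Set.mem_inter_iff, Set.mem_preimage, e1, Set.mem_ofPred_eq, Set.mem_Ici, e5]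
    tauto
  have e3 : {x : Fin d → ℝ | ∑ i ∈ Finset.univ.erase m, g i (x i) ∈ S} =
      (∑ i ∈ Finset.univ.erase m, f i) ⁻¹' S := by
    ext x
    simp only [Set.mem_preimage, e1, Set.mem_ofPred_eq]
  have e4 : (gaussPi d α).real (f m ⁻¹' Set.Ici A) = Gt (α m) A := by
    unfold Gt
    rw [← (gp_eval_mp d α m).map_eq, map_measureReal_apply (by fun_prop) measurableSet_Ici]
    congr 1
    ext x; simp [hf]
  rw [e2, e3, ← e4]
  simp only [Measure.real]
  rw [key, ENNReal.toReal_mul, mul_comm]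

lemma quad_up {d : ℕ} (α : Fin d → ℝ) (m : Fin d) (x : Fin d → ℝ) :
    ∑ i ∈ Finset.univ.erase m, α i * x i ^ 2 = ∑ i, (Function.update x m 0 i) ^ 2 * α i := by
  rw [← Finset.add_sum_erase (f := fun i => Function.update x m 0 i ^ 2 * α i) _
    (Finset.mem_univ m)]
  simp only [Function.update_self]
  rw [zero_pow (by norm_num), zero_mul, zero_add]
  refine Finset.sum_congr rfl fun i hi => ?_
  rw [Function.update_of_ne (Finset.ne_of_mem_erase hi)]; ring

/-- remaining quadratic form -/
def Vm {d : ℕ} (α : Fin d → ℝ) (m : Fin d) (x : Fin d → ℝ) : ℝ :=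
  ∑ i ∈ Finset.univ.erase m, α i * x i ^ 2

lemma Vm_nonneg {d : ℕ} {α : Fin d → ℝ} (hα : ∀ i, 0 ≤ α i) (m : Fin d) (x : Fin d → ℝ) :
    0 ≤ Vm α m x := Finset.sum_nonneg fun i _ => mul_nonneg (hα i) (sq_nonneg _)

lemma Vm_int {d : ℕ} (α : Fin d → ℝ) (m : Fin d) : Integrable (Vm α m) (gaussPi d α) :=
  integrable_finsetSum _ fun i _ =>
    ((gp_coord_memLp α i 2 (by simp)).integrable_sq).const_mul _

lemma Vm_mean {d : ℕ} {α : Fin d → ℝ} (hα : ∀ i, 0 ≤ α i) (h2 : ∑ i, α i ^ 2 = 1) (m : Fin d) :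
    ∫ x, Vm α m x ∂(gaussPi d α) ≤ 1 := by
  unfold Vm
  rw [integral_finsetSum _ fun i _ =>
    ((gp_coord_memLp α i 2 (by simp)).integrable_sq).const_mul _]
  simp only [integral_const_mul, gp_coord_sq α hα]
  rw [← h2]
  refine le_trans (Finset.sum_le_sum_of_subset_of_nonneg (Finset.erase_subset m _)
    fun i _ _ => mul_nonneg (hα i) (hα i)) ?_
  exact le_of_eq (Finset.sum_congr rfl fun i _ => by ring)

lemma markov_half {A : Type*} [MeasurableSpace A] (ν : Measure A) [IsProbabilityMeasure ν]
    {f : A → ℝ} (hf : Measurable f) (h0 : ∀ x, 0 ≤ f x) (hi : Integrable f ν) {a : ℝ} (ha : 0 < a)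
    (hm : ∫ x, f x ∂ν ≤ a / 2) : 1 / 2 ≤ ν.real {x | f x ≤ a} := by
  have h := mul_meas_ge_le_integral_of_nonneg (Eventually.of_forall h0) hi a
  have hc : ν.real {x | f x ≤ a} = 1 - ν.real {x | a < f x} := by
    rw [← probReal_compl_eq_one_sub (measurableSet_lt measurable_const hf)]
    congr 1; ext x; simp
  have h1 : ν.real {x | a < f x} ≤ ν.real {x | a ≤ f x} :=
    measureReal_mono fun x (hx : a < f x) => (show a ≤ f x from hx.le)
  have h2 : a * ν.real {x | a ≤ f x} ≤ a / 2 := h.trans hm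
  have h3 : ν.real {x | a ≤ f x} ≤ 1 / 2 := by
    by_contra hh; push Not at hh; nlinarith
  linarith

lemma ev_x {d : ℕ} {α : Fin d → ℝ} (hα : ∀ i, 0 ≤ α i) (h2 : ∑ i, α i ^ 2 = 1) (m : Fin d)
    {ε A : ℝ} (hε : 0 < ε) (hm : ε ≤ α m) (hA : 0 ≤ A) :
    Gt ε A / 2 ≤ (gaussPi d α).real {x | A ≤ x m ∧ Vm α m x ≤ 2} := by
  have := split_prob α m (fun i u => α i * u ^ 2) (fun i => by fun_prop) A (Set.Iic 2)
    measurableSet_Iic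
  have h1 : 1 / 2 ≤ (gaussPi d α).real {x | Vm α m x ≤ 2} :=
    markov_half _ (by unfold Vm; fun_prop) (Vm_nonneg hα m) (Vm_int α m) two_pos
      ((Vm_mean hα h2 m).trans (by norm_num))
  refine le_trans ?_ this.symm.le
  have h3 := Gt_mono_v hε hm hA
  have h4 := (Gt_pos hε (A := A)).le
  have h5 : Gt ε A / 2 = Gt ε A * (1 / 2) := by ring
  rw [h5]
  exact mul_le_mul h3 h1 (by norm_num) (h4.trans h3)

lemma ev_z {d : ℕ} {α : Fin d → ℝ} (hα : ∀ i, 0 ≤ α i) (m : Fin d)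
    {ε A : ℝ} (hε : 0 < ε) (hm : ε ≤ α m) (hA : 0 ≤ A) (y : Fin d → ℝ) (hy : Vm α m y ≤ 2) :
    Gt ε A / 2 ≤ (gaussPi d α).real
      {z | A ≤ z m ∧ |dotp (Function.update y m 0) z| ≤ 2} := by
  have := split_prob α m (fun i u => y i * u) (fun i => by fun_prop) A {u | u ^ 2 ≤ 4}
    (measurableSet_le (by fun_prop) measurable_const)
  have e : ∀ z : Fin d → ℝ, ∑ i ∈ Finset.univ.erase m, y i * z i =
      dotp (Function.update y m 0) z := by
    intro z
    have h1 := dot_split m y z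
    have h2 : dotp y z = y m * z m + ∑ i ∈ Finset.univ.erase m, y i * z i := by
      unfold dotp; rw [← Finset.add_sum_erase _ _ (Finset.mem_univ m)]
    linarith
  simp only [e, Set.mem_ofPred_eq] at this
  have h1 : 1 / 2 ≤ (gaussPi d α).real {z | dotp (Function.update y m 0) z ^ 2 ≤ 4} := by
    refine markov_half _ (f := fun z => dotp (Function.update y m 0) z ^ 2) ((measurable_dotp measurable_const measurable_id).pow_const 2)
      (fun z => sq_nonneg _) (gp_dot_sq_int α _) (by norm_num) ?_
    rw [gp_dot_sq α hα, ← quad_up]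
    exact hy.trans (by norm_num)
  have e3 : {z : Fin d → ℝ | A ≤ z m ∧ |dotp (Function.update y m 0) z| ≤ 2} =
      {z | A ≤ z m ∧ dotp (Function.update y m 0) z ^ 2 ≤ 4} := by
    ext z
    simp only [Set.mem_ofPred_eq]
    rw [show (4:ℝ) = 2 ^ 2 by norm_num, sq_le_sq, abs_of_pos (two_pos : (0:ℝ) < 2)]
  rw [e3, this]
  have h3 := Gt_mono_v hε hm hA
  have h4 := (Gt_pos hε (A := A)).le
  have h5 : Gt ε A / 2 = Gt ε A * (1 / 2) := by ring
  rw [h5]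
  exact mul_le_mul h3 h1 (by norm_num) (h4.trans h3)

end spike

section spikeB
variable {d : ℕ} {α : Fin d → ℝ} {p t T ε : ℝ}

/-- limiting kernel in the direction of a spike -/
def sm (p : ℝ) {d : ℕ} (m : Fin d) (y : Fin d → ℝ) : ℝ := sgm (y m) / 2 + (1 / 2 - p)

lemma bm_sm (p : ℝ) {d : ℕ} (m : Fin d) : BM (sm p m) := by
  have := ((BM.const (1 / 2)).mul (bm_sgm m)).add (BM.const (1 / 2 - p))
  convert this using 2 with y
  unfold sm; ring

lemma sm_bd (hp : p ∈ Set.Ioo (0 : ℝ) 1) (m : Fin d) (y : Fin d → ℝ) : |sm p m y| ≤ 1 := by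
  have := abs_le.1 (sgm_bd (y m))
  obtain ⟨h0, h1⟩ := hp
  unfold sm; rw [abs_le]; constructor <;> linarith

/-- limiting value of the projection -/
def finf (p t : ℝ) {d : ℕ} (α : Fin d → ℝ) (m : Fin d) : ℝ :=
  ∫ y, ∫ z, sm p m y * sm p m z * Kk p t y z ∂(gaussPi d α) ∂(gaussPi d α)

/-- sign correlation -/
def Gs (p t : ℝ) {d : ℕ} (α : Fin d → ℝ) (m : Fin d) (y : Fin d → ℝ) : ℝ :=
  ∫ z, sgm (y m) * sgm (z m) * Kk p t y z ∂(gaussPi d α)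

lemma bm_ssK (m : Fin d) :
    BM (fun w : (Fin d → ℝ) × (Fin d → ℝ) => sgm (w.1 m) * sgm (w.2 m) * Kk p t w.1 w.2) :=
  (((bm_sgm m).comp measurable_fst).mul ((bm_sgm m).comp measurable_snd)).mul (bm_Kk t)

lemma bm_Gs (m : Fin d) : BM (Gs p t α m) :=
  BM.integral_right (F := fun (y z : Fin d → ℝ) => sgm (y m) * sgm (z m) * Kk p t y z) (bm_ssK m) _

lemma quad_fl (m : Fin d) (y : Fin d → ℝ) : quad α (fl m y) = quad α y := by
  unfold quad fl
  refine Finset.sum_congr rfl fun i _ => ?_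
  split_ifs <;> simp

lemma kk_fl (hα : ∀ i, 0 ≤ α i) (m : Fin d) (y : Fin d → ℝ) : kk p t α (fl m y) = kk p t α y := by
  rw [kk_eq, kk_eq, int_Ik α hα, int_Ik α hα, quad_fl]

lemma sgm_fl (m : Fin d) (y : Fin d → ℝ) : sgm (fl m y m) = - sgm (y m) := by
  rw [← sgm_neg]; simp [fl]

lemma sgm_kk (hα : ∀ i, 0 ≤ α i) (m : Fin d) : ∫ y, sgm (y m) * kk p t α y ∂(gaussPi d α) = 0 := by
  have h := fl_int α m ((bm_sgm m).mul (bm_kk p t α)).1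
  simp only [kk_fl hα, sgm_fl, neg_mul] at h
  rw [integral_neg] at h
  linarith

lemma finf_eq (hα : ∀ i, 0 ≤ α i) (hp : p ∈ Set.Ioo (0 : ℝ) 1) (hthr : IsThreshold d α p t)
    (m : Fin d) : finf p t α m = (1 / 4) * ∫ y, Gs p t α m y ∂(gaussPi d α) := by
  set c := 1 / 2 - p with hc
  set N : (Fin d → ℝ) → ℝ := fun y => ∫ z, sgm (z m) * Kk p t y z ∂(gaussPi d α) with hN
  have bN2 : BM (fun w : (Fin d → ℝ) × (Fin d → ℝ) => sgm (w.2 m) * Kk p t w.1 w.2) :=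
    ((bm_sgm m).comp measurable_snd).mul (bm_Kk t)
  have bN : BM N := BM.integral_right (F := fun (y z : Fin d → ℝ) => sgm (z m) * Kk p t y z) bN2 _
  have hNz : ∫ y, N y ∂(gaussPi d α) = 0 := by
    rw [hN, integral_integral_swap (bN2.integrable _), ← sgm_kk (p := p) (t := t) hα m]
    congr 1; ext z
    rw [integral_const_mul]; unfold kk
    simp only [Kk_symm p t z]
  have inner : ∀ y, ∫ z, sm p m y * sm p m z * Kk p t y z ∂(gaussPi d α) =
      (1 / 4) * Gs p t α m y + (c / 2) * (sgm (y m) * kk p t α y) + (c / 2) * N y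
        + c ^ 2 * kk p t α y := by
    intro y
    have b1 : BM (fun z => sgm (y m) * sgm (z m) * Kk p t y z) :=
      (bm_ssK m).comp (g := fun z => (y, z)) (by fun_prop)
    have b2 : BM (fun z => sgm (z m) * Kk p t y z) :=
      bN2.comp (g := fun z => (y, z)) (by fun_prop)
    have b3 := bm_Kk_l (p := p) t y
    have e : ∀ z, sm p m y * sm p m z * Kk p t y z =
        (1 / 4) * (sgm (y m) * sgm (z m) * Kk p t y z) + (c / 2 * sgm (y m)) * Kk p t y z +
        (c / 2) * (sgm (z m) * Kk p t y z) + c ^ 2 * Kk p t y z := by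
      intro z; unfold sm; rw [← hc]; ring
    simp only [e]
    rw [((((BM.const _).mul b1).add ((BM.const _).mul b3)).add ((BM.const _).mul b2)).iadd
      ((BM.const _).mul b3), (((BM.const _).mul b1).add ((BM.const _).mul b3)).iadd
      ((BM.const _).mul b2), ((BM.const _).mul b1).iadd ((BM.const _).mul b3)]
    simp only [integral_const_mul]
    unfold Gs kk
    rw [hN]; ring
  unfold finf
  simp only [inner]
  have g1 := (BM.const (A := Fin d → ℝ) (1 / 4)).mul (bm_Gs (p := p) (t := t) (α := α) m)
  have g2 := (BM.const (A := Fin d → ℝ) (c / 2)).mul ((bm_sgm m).mul (bm_kk p t α))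
  have g3 := (BM.const (A := Fin d → ℝ) (c / 2)).mul bN
  have g4 := (BM.const (A := Fin d → ℝ) (c ^ 2)).mul (bm_kk p t α)
  rw [((g1.add g2).add g3).iadd g4, (g1.add g2).iadd g3, g1.iadd g2]
  simp only [integral_const_mul]
  rw [hNz, sgm_kk hα, kk_zero hp hthr]; ring

lemma flip_pt (m : Fin d) (y z : Fin d → ℝ) :
    0 ≤ sgm (y m) * sgm (z m) * (Kk p t y z - Kk p t (fl m y) z) := by
  rw [Kk_eq, Kk_eq]; unfold Ik
  rw [dot_split m y z, dot_fl]
  rcases lt_trichotomy (y m) 0 with h | h | h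
  · rcases lt_trichotomy (z m) 0 with h' | h' | h'
    · have := mul_pos_of_neg_of_neg h h'
      rw [sgm_of_neg h, sgm_of_neg h']; split_ifs <;> first | linarith | norm_num
    · simp [h', sgm]
    · have := mul_neg_of_neg_of_pos h h'
      rw [sgm_of_neg h, sgm_pos h']; split_ifs <;> first | linarith | norm_num
  · simp [h, sgm]
  · rcases lt_trichotomy (z m) 0 with h' | h' | h'
    · have := mul_neg_of_pos_of_neg h h'
      rw [sgm_pos h, sgm_of_neg h']; split_ifs <;> first | linarith | norm_num
    · simp [h', sgm]
    · have := mul_pos h h'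
      rw [sgm_pos h, sgm_pos h']; split_ifs <;> first | linarith | norm_num

lemma flip_one {A : ℝ} (hA0 : 0 < A) (hA : 2 + |t| < A ^ 2) (m : Fin d) (y z : Fin d → ℝ)
    (hy : A ≤ y m) (hz : A ≤ z m) (hW : |dotp (Function.update y m 0) z| ≤ 2) :
    sgm (y m) * sgm (z m) * (Kk p t y z - Kk p t (fl m y) z) = 1 := by
  rw [Kk_eq, Kk_eq]; unfold Ik
  rw [dot_split m y z, dot_fl, sgm_pos (hA0.trans_le hy), sgm_pos (hA0.trans_le hz)]
  have h1 : A ^ 2 ≤ y m * z m := by nlinarith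
  have h2 := abs_le.1 hW
  have h3 := neg_abs_le t
  have h4 := le_abs_self t
  rw [if_pos (by linarith), if_neg (by push Not; linarith)]
  ring

lemma Gs_lower (hα : ∀ i, 0 ≤ α i) (h2 : ∑ i, α i ^ 2 = 1) (m : Fin d) (hε : 0 < ε)
    (hm : ε ≤ α m) {A : ℝ} (hA0 : 0 < A) (hA : 2 + |t| < A ^ 2) :
    Gt ε A ^ 2 / 8 ≤ ∫ y, Gs p t α m y ∂(gaussPi d α) := by
  set w := Gt ε A with hw
  have w0 : 0 < w := Gt_pos hε
  set E : Set (Fin d → ℝ) := {x | A ≤ x m ∧ Vm α m x ≤ 2} with hE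
  have hEm : MeasurableSet E := (measurableSet_le measurable_const (measurable_pi_apply m)).inter
    (measurableSet_le (f := Vm α m) (by unfold Vm; fun_prop) measurable_const)
  have hpe := ev_x hα h2 m hε hm hA0.le
  rw [← hE, ← hw] at hpe
  have bG := bm_Gs (p := p) (t := t) (α := α) m
  have bGf : BM (fun y => Gs p t α m (fl m y)) := bG.comp (fl_mp α m).measurable
  have hsum : 2 * ∫ y, Gs p t α m y ∂(gaussPi d α) =
      ∫ y, (Gs p t α m y + Gs p t α m (fl m y)) ∂(gaussPi d α) := by
    rw [bG.iadd bGf, fl_int α m bG.1]; ring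
  have hGG : ∀ y, Gs p t α m y + Gs p t α m (fl m y) =
      ∫ z, sgm (y m) * sgm (z m) * (Kk p t y z - Kk p t (fl m y) z) ∂(gaussPi d α) := by
    intro y
    have b1 : ∀ y : Fin d → ℝ, BM (fun z => sgm (y m) * sgm (z m) * Kk p t y z) := fun y =>
      (bm_ssK m).comp (g := fun z => (y, z)) (by fun_prop)
    unfold Gs
    rw [← (b1 y).iadd (b1 (fl m y))]
    congr 1; ext z; rw [sgm_fl]; ring
  have bpt : ∀ y, w / 2 * E.indicator (fun _ => (1:ℝ)) y ≤
      Gs p t α m y + Gs p t α m (fl m y) := by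
    intro y
    rw [hGG]
    by_cases hy : y ∈ E
    · rw [Set.indicator_of_mem hy, mul_one]
      refine (ev_z hα m hε hm hA0.le y hy.2).trans ?_
      have hms : MeasurableSet {z : Fin d → ℝ | A ≤ z m ∧ |dotp (Function.update y m 0) z| ≤ 2} :=
        (measurableSet_le measurable_const (measurable_pi_apply m)).inter
          (measurableSet_le (measurable_dotp measurable_const measurable_id).abs measurable_const)
      rw [← integral_indicator_one hms]
      refine integral_mono ((integrable_const (1:ℝ)).indicator hms) ?_ fun z => ?_
      · have b : BM (fun z => sgm (y m) * sgm (z m) * (Kk p t y z - Kk p t (fl m y) z)) :=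
          ((BM.const _).mul (bm_sgm m)).mul ((bm_Kk_l t y).sub (bm_Kk_l t _))
        exact b.integrable _
      · by_cases hz : z ∈ {z : Fin d → ℝ | A ≤ z m ∧ |dotp (Function.update y m 0) z| ≤ 2}
        · rw [Set.indicator_of_mem hz]
          exact (flip_one hA0 hA m y z hy.1 hz.1 hz.2).symm.le
        · rw [Set.indicator_of_notMem hz]; exact flip_pt m y z
    · rw [Set.indicator_of_notMem hy, mul_zero]
      exact integral_nonneg fun z => flip_pt m y z
  have fin : w / 2 * (w / 2) ≤ 2 * ∫ y, Gs p t α m y ∂(gaussPi d α) := by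
    rw [hsum]
    refine le_trans ?_ (integral_mono (((integrable_const (1:ℝ)).indicator hEm).const_mul (w / 2))
      ((bG.add bGf).integrable _) bpt)
    rw [integral_const_mul]
    have : ∫ a, E.indicator (fun _ => (1:ℝ)) a ∂(gaussPi d α) = (gaussPi d α).real E :=
      integral_indicator_one hEm
    rw [this]
    gcongr
  nlinarith

/-- deviation from the limiting kernel is small -/
lemma e_pt (hp : p ∈ Set.Ioo (0 : ℝ) 1) {B L b : ℝ} (hL : 0 < L) (hb : 0 < b) (hB : |t| + b ≤ B)
    (m : Fin d) (x y : Fin d → ℝ) (hx : L ≤ x m) :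
    |Kk p t x y - sm p m y| ≤ (if |y m| ≤ B / L then 1 else 0) +
      (1 / b ^ 2) * dotp (Function.update x m 0) y ^ 2 := by
  have hsg := abs_le.1 (sgm_bd (y m))
  have hI0 := Ik_nonneg t x y
  have hI1 := Ik_le t x y
  have e : Kk p t x y - sm p m y = Ik t x y - (sgm (y m) / 2 + 1 / 2) := by
    rw [Kk_eq]; unfold sm; ring
  have e1 : |Kk p t x y - sm p m y| ≤ 1 := by
    rw [e, abs_le]; constructor <;> linarith
  have hq : 0 ≤ (1 / b ^ 2) * dotp (Function.update x m 0) y ^ 2 := by positivity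
  by_cases h : |y m| ≤ B / L
  · rw [if_pos h]; linarith
  · rw [if_neg h, zero_add]
    push Not at h
    rw [div_lt_iff₀ hL] at h
    by_cases hW : b ≤ |dotp (Function.update x m 0) y|
    · refine e1.trans ?_
      rw [one_div_mul_eq_div, le_div_iff₀ (by positivity), one_mul, ← sq_abs (dotp _ _)]
      gcongr
    · push Not at hW
      refine le_trans (le_of_eq ?_) hq
      have hW' := abs_lt.1 hW
      have h3 := neg_abs_le t
      have h4 := le_abs_self t
      rw [e]; unfold Ik; rw [dot_split m]
      rcases lt_trichotomy (y m) 0 with h' | h' | h'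
      · rw [abs_of_neg h'] at h
        rw [sgm_of_neg h', if_neg (by push Not; nlinarith)]; norm_num
      · rw [h', abs_zero, zero_mul] at h
        linarith [abs_nonneg t]
      · rw [abs_of_pos h'] at h
        rw [sgm_pos h', if_pos (by nlinarith)]; norm_num

lemma e_int (hα : ∀ i, 0 ≤ α i) (hp : p ∈ Set.Ioo (0 : ℝ) 1) {B L b : ℝ} (hL : 0 < L) (hb : 0 < b)
    (hB : |t| + b ≤ B) (m : Fin d) (hε : 0 < ε) (hm : ε ≤ α m) (x : Fin d → ℝ) (hx : L ≤ x m)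
    (hV : Vm α m x ≤ 2) :
    ∫ y, |Kk p t x y - sm p m y| ∂(gaussPi d α) ≤ 2 * (B / L) * (√(2 * π * ε))⁻¹ + 2 / b ^ 2 := by
  have hB0 : 0 ≤ B := by linarith [abs_nonneg t]
  have hms : MeasurableSet {y : Fin d → ℝ | |y m| ≤ B / L} :=
    measurableSet_le (measurable_pi_apply m).abs measurable_const
  have e1 : (fun y : Fin d → ℝ => if |y m| ≤ B / L then (1:ℝ) else 0) =
      Set.indicator {y : Fin d → ℝ | |y m| ≤ B / L} 1 := by
    ext y; simp [Set.indicator]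
  have i1 : Integrable (fun y : Fin d → ℝ => if |y m| ≤ B / L then (1:ℝ) else 0) (gaussPi d α) := by
    rw [e1]; exact (integrable_const (1:ℝ)).indicator hms
  have i2 : Integrable (fun y => (1 / b ^ 2) * dotp (Function.update x m 0) y ^ 2) (gaussPi d α) :=
    (gp_dot_sq_int α _).const_mul _
  have ba : BM (fun y => |Kk p t x y - sm p m y|) := by
    have b0 := (bm_Kk_l (p := p) t x).sub (bm_sm p m)
    obtain ⟨hme, C, hC⟩ := b0
    exact ⟨hme.abs, C, fun y => by rw [abs_abs]; exact hC y⟩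
  refine (integral_mono (ba.integrable _) (i1.add i2)
    fun y => e_pt hp hL hb hB m x y hx).trans ?_
  refine (integral_add i1 i2).trans_le ?_
  have hαm : 0 < α m := hε.trans_le hm
  refine add_le_add ?_ ?_
  · rw [e1, integral_indicator_one hms]
    have : (gaussPi d α).real {y : Fin d → ℝ | |y m| ≤ B / L} =
        (gaussianReal 0 (α m).toNNReal).real (Set.Icc (-(B / L)) (B / L)) := by
      rw [← (gp_eval_mp d α m).map_eq, map_measureReal_apply (by fun_prop) measurableSet_Icc]
      congr 1; ext y; simp [abs_le]
    rw [this]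
    have hBL : 0 ≤ B / L := by positivity
    refine (gauss_Icc_le 0 (by simpa using hαm) (by linarith)).trans ?_
    rw [Real.coe_toNNReal _ hαm.le]
    have : B / L - -(B / L) = 2 * (B / L) := by ring
    rw [this]
    gcongr
  · rw [integral_const_mul, gp_dot_sq α hα, ← quad_up, one_div_mul_eq_div]
    gcongr
    exact hV

lemma f1_lower (hp : p ∈ Set.Ioo (0 : ℝ) 1) (m : Fin d) (x : Fin d → ℝ) :
    finf p t α m - 2 * ∫ y, |Kk p t x y - sm p m y| ∂(gaussPi d α) ≤
      hf1 (gaussPi d α) (Hk p t) x := by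
  have ba : BM (fun y => |Kk p t x y - sm p m y|) := by
    have b0 := (bm_Kk_l (p := p) t x).sub (bm_sm p m)
    obtain ⟨hme, C, hC⟩ := b0
    exact ⟨hme.abs, C, fun y => by rw [abs_abs]; exact hC y⟩
  set e : (Fin d → ℝ) → ℝ := fun y => |Kk p t x y - sm p m y| with he
  set I := ∫ y, e y ∂(gaussPi d α) with hI
  have bs2 : BM (fun w : (Fin d → ℝ) × (Fin d → ℝ) => sm p m w.1 * sm p m w.2 * Kk p t w.1 w.2) :=
    (((bm_sm p m).comp measurable_fst).mul ((bm_sm p m).comp measurable_snd)).mul (bm_Kk t)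
  have bsi : BM (fun y => ∫ z, sm p m y * sm p m z * Kk p t y z ∂(gaussPi d α)) :=
    BM.integral_right (F := fun y z => sm p m y * sm p m z * Kk p t y z) bs2 _
  have hsk := Hk_symKer hp t (d := d)
  have key : ∀ y, (∫ z, sm p m y * sm p m z * Kk p t y z ∂(gaussPi d α)) - e y - I ≤
      hf2 (gaussPi d α) (Hk p t) x y := by
    intro y
    have b1 : BM (fun z => sm p m y * sm p m z * Kk p t y z) :=
      bs2.comp (g := fun z => (y, z)) (by fun_prop)
    have e1 : (∫ z, sm p m y * sm p m z * Kk p t y z ∂(gaussPi d α)) - e y - I =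
        ∫ z, (sm p m y * sm p m z * Kk p t y z - e y - e z) ∂(gaussPi d α) := by
      rw [(b1.sub (BM.const (e y))).isub ba, b1.isub (BM.const (e y))]; simp [hI]
    rw [e1]
    unfold hf2
    refine integral_mono (((b1.sub (BM.const (e y))).sub ba).integrable _)
      (BM.integrable (hsk.bm.comp (g := fun z => ((x, y), z)) (by fun_prop)) _) fun z => ?_
    dsimp only
    unfold Hk
    have a1 : |Kk p t x y * Kk p t x z * Kk p t y z - sm p m y * sm p m z * Kk p t y z| ≤
        e y + e z := by
      have : Kk p t x y * Kk p t x z * Kk p t y z - sm p m y * sm p m z * Kk p t y z =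
        (Kk p t x y - sm p m y) * Kk p t x z * Kk p t y z +
        sm p m y * (Kk p t x z - sm p m z) * Kk p t y z := by ring
      rw [this]
      refine (abs_add_le _ _).trans ?_
      rw [abs_mul, abs_mul, abs_mul, abs_mul]
      have k1 := Kk_bd hp t x z
      have k2 := Kk_bd hp t y z
      have k3 := sm_bd hp m y
      refine add_le_add ?_ ?_
      · exact (mul_le_of_le_one_right (by positivity) k2).trans
          (mul_le_of_le_one_right (abs_nonneg _) k1)
      · exact (mul_le_of_le_one_right (by positivity) k2).trans
          (mul_le_of_le_one_left (abs_nonneg _) k3)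
    have := (abs_le.1 a1).1
    linarith
  have e2 : finf p t α m - 2 * I = ∫ y, ((∫ z, sm p m y * sm p m z * Kk p t y z ∂(gaussPi d α))
      - e y - I) ∂(gaussPi d α) := by
    rw [(bsi.sub ba).isub (BM.const I), bsi.isub ba, ← hI]
    simp only [integral_const, probReal_univ, one_smul]
    unfold finf; ring
  rw [e2]
  exact integral_mono (((bsi.sub ba).sub (BM.const I)).integrable _)
    ((hsk.f2_left _ x).integrable _) key

end spikeB

/-- a large coordinate of `α` makes the one-point projection non-degenerate -/
lemma K4 {p T ε : ℝ} (hp : p ∈ Set.Ioo (0 : ℝ) 1) (hT : 0 ≤ T) (hε : 0 < ε) :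
    ∃ c1 c2 : ℝ, 0 < c1 ∧ 0 < c2 ∧ ∀ (d : ℕ) (α : Fin d → ℝ) (t : ℝ) (m : Fin d),
      (∀ i, 0 ≤ α i) → ∑ i, α i ^ 2 = 1 → IsThreshold d α p t → t ^ 2 ≤ T → ε ≤ α m →
      c2 ≤ (gaussPi d α).real {x | 2 * c1 ≤ hf1 (gaussPi d α) (Hk p t) x} := by
  set A := 2 + T with hA
  set w := Gt ε A with hw
  have w0 : 0 < w := Gt_pos hε
  have w1 : w ≤ 1 := Gt_le_one _ _
  set c1 := w ^ 2 / 128 with hc1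
  have c0 : 0 < c1 := by positivity
  have cl : c1 ≤ 1 := by rw [hc1]; nlinarith
  set b := 2 / c1 with hb
  have b0 : 0 < b := by positivity
  set B := A + b with hB
  have hB0 : 0 < B := by positivity
  have hs : 0 < √(2 * π * ε) := Real.sqrt_pos.2 (by positivity)
  set L := 4 * B / (√(2 * π * ε) * c1) with hL
  have hL0 : 0 < L := by positivity
  refine ⟨c1, Gt ε L / 2, c0, half_pos (Gt_pos hε), ?_⟩
  intro d α t m hα h2 hthr ht hm
  refine (ev_x hα h2 m hε hm hL0.le).trans (measureReal_mono fun x hx => ?_)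
  have ht1 : |t| ≤ A := by
    have := sq_abs t
    rw [hA]; nlinarith [abs_nonneg t, sq_nonneg (|t| - 1)]
  have hA2 : 2 + |t| < A ^ 2 := by
    have := sq_abs t
    have h3 : |t| ≤ 1 + T := by nlinarith [abs_nonneg t, sq_nonneg (|t| - 1)]
    rw [hA]; nlinarith
  have hf := f1_lower (α := α) (t := t) hp m x
  have hG := Gs_lower (p := p) (t := t) hα h2 m hε hm (A := A) (by positivity) hA2
  have hfi := finf_eq hα hp hthr m
  have hei := e_int (t := t) hα hp hL0 b0 (B := B) (by rw [hB]; linarith) m hε hm x hx.1 hx.2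
  have h5 : 2 * (B / L) * (√(2 * π * ε))⁻¹ = c1 / 2 := by
    rw [hL]; field_simp; norm_num
  have h6 : 2 / b ^ 2 ≤ c1 / 2 := by
    have : 2 / b ^ 2 = c1 ^ 2 / 2 := by rw [hb]; field_simp
    rw [this]; nlinarith
  show 2 * c1 ≤ hf1 (gaussPi d α) (Hk p t) x
  rw [← hw] at hG
  rw [h5] at hei
  have : w ^ 2 = 128 * c1 := by rw [hc1]; ring
  linarith

section scaling

lemma gp_scale {d : ℕ} (α : Fin d → ℝ) (hα : ∀ i, 0 ≤ α i) {c : ℝ} (hc : 0 < c) :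
    MeasurePreserving (fun (x : Fin d → ℝ) i => (√c)⁻¹ * x i) (gaussPi d α)
      (gaussPi d (fun i => α i / c)) := by
  unfold gaussPi
  refine measurePreserving_pi (f := fun _ u => (√c)⁻¹ * u) _ _ fun i => ?_
  refine ⟨by fun_prop, ?_⟩
  rw [gaussianReal_map_const_mul]
  congr 1
  · simp
  · ext
    simp only [NNReal.coe_mul, NNReal.coe_mk, Real.coe_toNNReal _ (hα i),
      Real.coe_toNNReal _ (div_nonneg (hα i) hc.le)]
    rw [inv_pow, Real.sq_sqrt hc.le]; field_simp

lemma dotp_scale {d : ℕ} {c : ℝ} (hc : 0 < c) (x y : Fin d → ℝ) :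
    dotp (fun i => (√c)⁻¹ * x i) (fun i => (√c)⁻¹ * y i) = dotp x y / c := by
  unfold dotp
  rw [Finset.sum_div]
  refine Finset.sum_congr rfl fun i _ => ?_
  have : (√c)⁻¹ * (√c)⁻¹ = c⁻¹ := by rw [← mul_inv, Real.mul_self_sqrt hc.le]
  calc _ = ((√c)⁻¹ * (√c)⁻¹) * (x i * y i) := by ring
    _ = _ := by rw [this]; ring

lemma geom_scale (n : ℕ) {d : ℕ} (α : Fin d → ℝ) (hα : ∀ i, 0 ≤ α i) {c : ℝ} (hc : 0 < c) (t : ℝ) :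
    geomGraph n d (fun i => α i / c) (t / c) = geomGraph n d α t := by
  have h : MeasurePreserving (fun (X : Fin n → Fin d → ℝ) j i => (√c)⁻¹ * X j i)
      (sampleMeasure n d α) (sampleMeasure n d (fun i => α i / c)) := by
    unfold sampleMeasure
    exact measurePreserving_pi (f := fun _ (x : Fin d → ℝ) i => (√c)⁻¹ * x i) _ _ fun j => gp_scale α hα hc
  unfold geomGraph
  rw [← h.map_eq, Measure.map_map _ h.measurable]
  · congr 1
    ext1 X
    simp only [Function.comp_apply, dotp_scale hc, div_le_div_iff_of_pos_right hc]
  · exact geo_meas _ _ _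

lemma thr_scale {d : ℕ} (α : Fin d → ℝ) (hα : ∀ i, 0 ≤ α i) {c : ℝ} (hc : 0 < c) {p t : ℝ}
    (h : IsThreshold d α p t) : IsThreshold d (fun i => α i / c) p (t / c) := by
  unfold IsThreshold at *
  have hm := (gp_scale α hα hc).prod (gp_scale α hα hc)
  rw [← hm.map_eq, Measure.map_apply hm.measurable (measurableSet_le measurable_const
    (measurable_dotp measurable_fst measurable_snd)), ← h]
  congr 1
  ext w
  simp only [Set.mem_preimage, Set.mem_ofPred_eq, Prod.map, dotp_scale hc,
    div_le_div_iff_of_pos_right hc]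

lemma thr_pos {d : ℕ} (α : Fin d → ℝ) (hα : ∀ i, 0 ≤ α i) {p t : ℝ} (hp : p ∈ Set.Ioo (0 : ℝ) 1)
    (h : IsThreshold d α p t) : 0 < ∑ i, α i ^ 2 := by
  by_contra hn
  have h0 : ∑ i, α i ^ 2 = 0 := le_antisymm (not_lt.1 hn) (Finset.sum_nonneg fun i _ => sq_nonneg _)
  have hz : ∀ i, α i = 0 := fun i => by
    have := (Finset.sum_eq_zero_iff_of_nonneg fun i _ => sq_nonneg (α i)).1 h0 i (Finset.mem_univ i)
    simpa using this
  have e := thr_int hp h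
  simp only [int_Ik α hα] at e
  have q : ∀ x, quad α x = 0 := fun x => by simp [quad, hz]
  simp only [q, integral_const, probReal_univ, one_smul] at e
  obtain ⟨p0, p1⟩ := hp
  have : Gt 0 t = 0 ∨ Gt 0 t = 1 := by
    unfold Gt
    simp only [Real.toNNReal_zero, gaussianReal_zero_var]
    by_cases h : (0:ℝ) ∈ Set.Ici t
    · right; simp only [Measure.real, Measure.dirac_apply, Set.indicator_of_mem h]; simp
    · left; simp only [Measure.real, Measure.dirac_apply, Set.indicator_of_notMem h]; simp
  rcases this with h | h <;> linarith

lemma beta_le {d : ℕ} {α : Fin d → ℝ} (hα : ∀ i, 0 ≤ α i) :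
    (∑ i, α i ^ 4) ^ 3 ≤ (∑ i, α i ^ 3) ^ 4 := by
  set r := ∑ i, α i ^ 3 with hr
  have r0 : 0 ≤ r := Finset.sum_nonneg fun i _ => pow_nonneg (hα i) _
  set M := r ^ (1 / 3 : ℝ) with hM
  have M0 : 0 ≤ M := by positivity
  have M3 : M ^ 3 = r := by
    rw [hM, ← Real.rpow_natCast, ← Real.rpow_mul r0]; norm_num
  have hle : ∀ i, α i ≤ M := fun i => by
    have : α i ^ 3 ≤ M ^ 3 := by
      rw [M3, hr]
      exact Finset.single_le_sum (f := fun i => α i ^ 3) (fun i _ => pow_nonneg (hα i) _)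
        (Finset.mem_univ i)
    exact le_of_pow_le_pow_left₀ (by norm_num) M0 this
  have hb : ∑ i, α i ^ 4 ≤ M * r := by
    rw [hr, Finset.mul_sum]
    refine Finset.sum_le_sum fun i _ => ?_
    have := mul_le_mul_of_nonneg_right (hle i) (pow_nonneg (hα i) 3)
    calc α i ^ 4 = α i * α i ^ 3 := by ring
      _ ≤ _ := this
  calc (∑ i, α i ^ 4) ^ 3 ≤ (M * r) ^ 3 :=
        pow_le_pow_left₀ (Finset.sum_nonneg fun i _ => pow_nonneg (hα i) _) hb 3
    _ = r ^ 4 := by rw [mul_pow, M3]; ring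

lemma exists_big {d : ℕ} {α : Fin d → ℝ} (hα : ∀ i, 0 ≤ α i) (h2 : ∑ i, α i ^ 2 = 1) {ε : ℝ}
    (hr : ε ≤ ∑ i, α i ^ 3) : ∃ m, ε ≤ α m := by
  by_contra hn
  push Not at hn
  have h1 : ∀ i, α i ^ 3 ≤ ε * α i ^ 2 := fun i => by
    have := mul_le_mul_of_nonneg_right (hn i).le (sq_nonneg (α i))
    calc α i ^ 3 = α i * α i ^ 2 := by ring
      _ ≤ _ := this
  have hne : ∃ i, 0 < α i := by
    by_contra hh
    push Not at hh
    have : ∀ i, α i = 0 := fun i => le_antisymm (hh i) (hα i)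
    simp [this] at h2
  obtain ⟨i, hi⟩ := hne
  have hlt : α i ^ 3 < ε * α i ^ 2 := by
    have := mul_lt_mul_of_pos_right (hn i) (pow_pos hi 2)
    calc α i ^ 3 = α i * α i ^ 2 := by ring
      _ < _ := this
  have := Finset.sum_lt_sum (fun i _ => h1 i) ⟨i, Finset.mem_univ i, hlt⟩
  rw [← Finset.mul_sum, h2] at this
  linarith

/-- ratio of norms after normalisation -/
lemma nrm_ratio {d : ℕ} {α : Fin d → ℝ} (hα : ∀ i, 0 ≤ α i) (h2 : 0 < ∑ i, α i ^ 2) :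
    0 < ∑ i, (α i / √(∑ i, α i ^ 2)) ^ 3 ∧ ∑ i, (α i / √(∑ i, α i ^ 2)) ^ 2 = 1 ∧
    (nrm 2 α / nrm 3 α) ^ 6 = ((∑ i, (α i / √(∑ i, α i ^ 2)) ^ 3) ^ 2)⁻¹ := by
  set S := ∑ i, α i ^ 2 with hS
  set R := ∑ i, α i ^ 3 with hR
  have hs : 0 < √S := Real.sqrt_pos.2 h2
  have R0 : 0 < R := by
    have hne : ∃ i, 0 < α i := by
      by_contra hh
      push Not at hh
      have : ∀ i, α i = 0 := fun i => le_antisymm (hh i) (hα i)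
      simp [hS, this] at h2
    obtain ⟨i, hi⟩ := hne
    exact Finset.sum_pos' (fun i _ => pow_nonneg (hα i) 3) ⟨i, Finset.mem_univ i, pow_pos hi 3⟩
  have e3 : ∑ i, (α i / √S) ^ 3 = R / (√S) ^ 3 := by
    rw [hR, Finset.sum_div]; exact Finset.sum_congr rfl fun i _ => by rw [div_pow]
  have e2 : ∑ i, (α i / √S) ^ 2 = 1 := by
    have : ∑ i, (α i / √S) ^ 2 = S / (√S) ^ 2 := by
      rw [hS, Finset.sum_div]; exact Finset.sum_congr rfl fun i _ => by rw [div_pow]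
    rw [this, Real.sq_sqrt h2.le, div_self h2.ne']
  refine ⟨by rw [e3]; positivity, e2, ?_⟩
  rw [e3]
  have n2 : nrm 2 α ^ 6 = S ^ 3 := by
    unfold nrm; rw [← hS, ← Real.rpow_natCast, ← Real.rpow_mul h2.le, ← Real.rpow_natCast]; norm_num
  have n3 : nrm 3 α ^ 6 = R ^ 2 := by
    unfold nrm; rw [← hR, ← Real.rpow_natCast, ← Real.rpow_mul R0.le, ← Real.rpow_natCast]; norm_num
  rw [div_pow, n2, n3]
  have : (√S) ^ 6 = S ^ 3 := by
    calc (√S) ^ 6 = ((√S) ^ 2) ^ 3 := by ring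
      _ = _ := by rw [Real.sq_sqrt h2.le]
  rw [div_pow, ← pow_mul, show 3 * 2 = 6 by norm_num, this, inv_div]

end scaling

lemma bm_dsum {p : ℝ} (hp : p ∈ Set.Ioo (0 : ℝ) 1) (n d : ℕ) (t : ℝ) :
    BM (fun X : Fin n → Fin d → ℝ => dsum n (fun i j k => Hk p t (X i) (X j) (X k))) := by
  unfold dsum
  refine BM.sum _ fun i _ => BM.sum _ fun j _ => BM.sum _ fun k _ => BM.ite ?_ _
  exact (Hk_symKer hp t (d := d)).bm.comp
    (g := fun X : Fin n → Fin d → ℝ => ((X i, X j), X k)) (by fun_prop)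

lemma n_bound {n : ℕ} (hn : 3 ≤ n) : (2 / 9) * (n:ℝ) ^ 2 ≤ ((n:ℝ) - 1) * (n - 2) := by
  have : (3:ℝ) ≤ n := by exact_mod_cast hn
  nlinarith

lemma caseA {p : ℝ} (hp : p ∈ Set.Ioo (0 : ℝ) 1) {n d : ℕ} (hn : 3 ≤ n) (α : Fin d → ℝ) (t : ℝ)
    {c r C β : ℝ} (hc : 0 < c) (hr : 0 < r) (hΔ : c * r ≤ |hD (gaussPi d α) (Hk p t)|)
    (hq : hV2 (gaussPi d α) (Hk p t) ≤ C * β) :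
    1 - 900000 / c ^ 2 * (C * (β / (n * r ^ 2)) + 2 / (n ^ 3 * r ^ 2)) ≤
      tvDist (Measure.map (signedTriangles p) (erGraph n p))
        (Measure.map (signedTriangles p) (geomGraph n d α t)) := by
  set Δ := hD (gaussPi d α) (Hk p t) with hΔd
  set q := hV2 (gaussPi d α) (Hk p t) with hqd
  have hn0 : (3:ℝ) ≤ n := by exact_mod_cast hn
  have hnp : (0:ℝ) < n := by linarith
  have hb := n_bound hn
  set N3 := (n:ℝ) * (((n:ℝ) - 1) * ((n:ℝ) - 2)) with hN3
  have hN : (2 / 9) * (n:ℝ) ^ 3 ≤ N3 := by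
    rw [hN3]; have := mul_le_mul_of_nonneg_left hb hnp.le; linarith
  have hN0 : 0 < N3 := lt_of_lt_of_le (by positivity) hN
  have hD0 : 0 < |Δ| := lt_of_lt_of_le (by positivity) hΔ
  set a := (1 / 2) * N3 * |Δ| with ha
  have a0 : 0 < a := by positivity
  have alow : (1 / 9) * n ^ 3 * (c * r) ≤ a := by
    rw [ha]
    refine mul_le_mul ?_ hΔ (by positivity) (by positivity)
    linarith
  have a2 : (1 / 81) * n ^ 6 * (c ^ 2 * r ^ 2) ≤ a ^ 2 := by
    calc (1 / 81) * (n:ℝ) ^ 6 * (c ^ 2 * r ^ 2) = ((1 / 9) * n ^ 3 * (c * r)) ^ 2 := by ring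
      _ ≤ _ := pow_le_pow_left₀ (by positivity) alow 2
  have hsk := Hk_symKer hp t (d := d)
  have hU := hsk.U1 (gaussPi d α) n hn
  rw [← hΔd, ← hqd, ← hN3] at hU
  have hch := cheb (sampleMeasure n d α)
    (f := fun X => dsum n (fun i j k => Hk p t (X i) (X j) (X k)) - N3 * Δ)
    ((((bm_dsum hp n d t).sub (BM.const _)).pow 2).integrable _) a0
  have hδ : (sampleMeasure n d α).real
      {X | |dsum n (fun i j k => Hk p t (X i) (X j) (X k))| ≤ a} ≤
      11000 * ((n:ℝ) ^ 5 * q + n ^ 3) / a ^ 2 := by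
    refine le_trans (measureReal_mono fun X hX => ?_) (hch.trans ?_)
    · have hX' : |dsum n (fun i j k => Hk p t (X i) (X j) (X k))| ≤ a := hX
      show a ≤ |dsum n (fun i j k => Hk p t (X i) (X j) (X k)) - N3 * Δ|
      have h1 : |N3 * Δ| = 2 * a := by rw [abs_mul, abs_of_pos hN0, ha]; ring
      have h2 := abs_sub_abs_le_abs_sub (N3 * Δ) (dsum n (fun i j k => Hk p t (X i) (X j) (X k)))
      rw [abs_sub_comm] at h2
      linarith
    · exact div_le_div_of_nonneg_right hU (by positivity)
  have hl := tv_lower hp n d α t a _ a0 hδ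
  refine le_trans ?_ hl
  have hq0 : 0 ≤ q := SymKer.V2_nonneg _
  have k1 : 27 * (n:ℝ) ^ 3 / a ^ 2 + 11000 * ((n:ℝ) ^ 5 * q + n ^ 3) / a ^ 2 ≤
      900000 / c ^ 2 * (C * (β / (n * r ^ 2)) + 2 / (n ^ 3 * r ^ 2)) := by
    rw [← add_div]
    calc (27 * (n:ℝ) ^ 3 + 11000 * ((n:ℝ) ^ 5 * q + n ^ 3)) / a ^ 2
        ≤ (11100 * ((n:ℝ) ^ 5 * (C * β) + 2 * n ^ 3)) / ((1 / 81) * n ^ 6 * (c ^ 2 * r ^ 2)) := by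
          have h5 : 0 ≤ (n:ℝ) ^ 5 * q := by positivity
          have h6 : (n:ℝ) ^ 5 * q ≤ (n:ℝ) ^ 5 * (C * β) := by gcongr
          have h7 : 0 < (n:ℝ) ^ 3 := by positivity
          refine div_le_div₀ (by linarith) (by linarith) (by positivity) a2
      _ = 899100 / c ^ 2 * (C * (β / (n * r ^ 2)) + 2 / (n ^ 3 * r ^ 2)) := by
          field_simp; ring
      _ ≤ _ := by
          have h8 : 0 ≤ C * (β / (n * r ^ 2)) + 2 / (n ^ 3 * r ^ 2) := by
            have : C * (β / (n * r ^ 2)) = C * β / (n * r ^ 2) := by ring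
            rw [this]
            have := hq0.trans hq
            positivity
          gcongr; norm_num
  linarith

lemma caseB {p : ℝ} (hp : p ∈ Set.Ioo (0 : ℝ) 1) {n d : ℕ} (hn : 3 ≤ n) (α : Fin d → ℝ) (t : ℝ)
    {v0 K η : ℝ} (hv0 : 0 ≤ v0) (hK : 0 < K) (hη : 0 < η)
    (hv : v0 ≤ ∫ x, hf1 (gaussPi d α) (Hk p t) x ^ 2 ∂(gaussPi d α) -
      (∫ x, hf1 (gaussPi d α) (Hk p t) x ∂(gaussPi d α)) ^ 2) :
    1 - 27 / (K ^ 2 * n) - 10000 / K ^ 2 -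
      2 * (rexp (-(n * v0 * η ^ 2 / (5 * (3 * K) ^ 2))) + η + 1 / (3 * K) ^ 2) ≤
      tvDist (Measure.map (signedTriangles p) (erGraph n p))
        (Measure.map (signedTriangles p) (geomGraph n d α t)) := by
  set μ := gaussPi d α with hμ
  set Δ := hD μ (Hk p t) with hΔd
  have hn0 : (3:ℝ) ≤ n := by exact_mod_cast hn
  have hnp : (0:ℝ) < n := by linarith
  have hb := n_bound hn
  set N2 := ((n:ℝ) - 1) * ((n:ℝ) - 2) with hN2
  have hN0 : 0 < N2 := lt_of_lt_of_le (by positivity) hb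
  set a := K * (n:ℝ) ^ 2 with ha
  have a0 : 0 < a := by positivity
  have hsk := Hk_symKer hp t (d := d)
  have hU := hsk.U2 μ n hn
  rw [← hΔd, ← hN2] at hU
  have hq1 := hsk.V2_le μ
  have hq0 := SymKer.V2_nonneg μ (H := Hk p t)
  set R : (Fin n → Fin d → ℝ) → ℝ := fun X => dsum n (fun i j k => Hk p t (X i) (X j) (X k)) -
    n * N2 * Δ - 3 * (N2 * ∑ i, hg1 μ (Hk p t) (X i)) with hR
  have bR : BM R := ((bm_dsum hp n d t).sub (BM.const _)).sub ((BM.const 3).mul ((BM.const N2).mul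
    (BM.sum _ fun i _ => (hsk.bm_g1 μ).comp (measurable_pi_apply i))))
  have hch := cheb (sampleMeasure n d α) (f := R) ((bR.pow 2).integrable _) a0
  have hch2 : (sampleMeasure n d α).real {X | a ≤ |R X|} ≤ 10000 / K ^ 2 := by
    refine hch.trans ?_
    have h1 : ∫ X, R X ^ 2 ∂(sampleMeasure n d α) ≤ 10000 * (n:ℝ) ^ 4 := by
      refine le_trans hU ?_
      have h3 : (n:ℝ) ^ 3 ≤ (n:ℝ) ^ 4 := pow_le_pow_right₀ (by linarith) (by norm_num)
      have h4 : (n:ℝ) ^ 4 * hV2 μ (Hk p t) ≤ (n:ℝ) ^ 4 := mul_le_of_le_one_right (by positivity) hq1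
      linarith
    calc _ ≤ 10000 * (n:ℝ) ^ 4 / a ^ 2 := div_le_div_of_nonneg_right h1 (by positivity)
      _ = 10000 / K ^ 2 := by rw [ha]; field_simp
  have hac := anticonc μ n (hsk.bm_f1 μ).1 (hsk.f1_bd μ) hv0 hv ((2 / 3) * n * Δ)
    (L := 3 * K) (by positivity) hη
  have hδ : (sampleMeasure n d α).real
      {X | |dsum n (fun i j k => Hk p t (X i) (X j) (X k))| ≤ a} ≤
      10000 / K ^ 2 + 2 * (rexp (-(n * v0 * η ^ 2 / (5 * (3 * K) ^ 2))) + η + 1 / (3 * K) ^ 2) := by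
    refine le_trans (le_trans (measureReal_mono (s₂ := {X | a ≤ |R X|} ∪
      {X | |∑ i, hf1 μ (Hk p t) (X i) - (2 / 3) * n * Δ| ≤ 3 * K}) fun X hX => ?_)
      (measureReal_union_le _ _)) (add_le_add hch2 hac)
    have hX' : |dsum n (fun i j k => Hk p t (X i) (X j) (X k))| ≤ a := hX
    by_cases hRX : a ≤ |R X|
    · exact Or.inl hRX
    · right
      push Not at hRX
      show |∑ i, hf1 μ (Hk p t) (X i) - (2 / 3) * n * Δ| ≤ 3 * K
      have e1 : ∑ i, hg1 μ (Hk p t) (X i) = ∑ i, hf1 μ (Hk p t) (X i) - n * Δ := by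
        unfold hg1; rw [Finset.sum_sub_distrib]; simp [hΔd]
      set Z := ∑ i, hf1 μ (Hk p t) (X i) - (2 / 3) * n * Δ with hZ
      have e2 : 3 * N2 * Z = dsum n (fun i j k => Hk p t (X i) (X j) (X k)) - R X := by
        rw [hR]; dsimp only; rw [e1, hZ]; ring
      have e3 : 3 * N2 * |Z| ≤ 2 * a := by
        have : 3 * N2 * |Z| = |3 * N2 * Z| := by
          rw [abs_mul, abs_of_pos (by positivity : 0 < 3 * N2)]
        rw [this, e2]
        have := abs_sub (dsum n (fun i j k => Hk p t (X i) (X j) (X k))) (R X)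
        linarith
      by_contra hh
      push Not at hh
      have e4 : 3 * ((2 / 9) * (n:ℝ) ^ 2) * (3 * K) < 3 * N2 * |Z| := by
        refine mul_lt_mul' (by linarith) hh (by positivity) (by positivity)
      rw [ha] at e3
      linarith
  have hl := tv_lower hp n d α t a _ a0 hδ
  refine le_trans (le_of_eq ?_) hl
  have : 27 * (n:ℝ) ^ 3 / a ^ 2 = 27 / (K ^ 2 * n) := by rw [ha]; field_simp
  rw [this]; ring

lemma var_lower {p : ℝ} (hp : p ∈ Set.Ioo (0 : ℝ) 1) {d : ℕ} (α : Fin d → ℝ) (t : ℝ)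
    {c1 c2 : ℝ} (h1 : 0 < c1)
    (hc : c2 ≤ (gaussPi d α).real {x | 2 * c1 ≤ hf1 (gaussPi d α) (Hk p t) x})
    (hD : |hD (gaussPi d α) (Hk p t)| < c1) :
    c1 ^ 2 * c2 ≤ ∫ x, hf1 (gaussPi d α) (Hk p t) x ^ 2 ∂(gaussPi d α) -
      (∫ x, hf1 (gaussPi d α) (Hk p t) x ∂(gaussPi d α)) ^ 2 := by
  have hsk := Hk_symKer hp t (d := d)
  have b := hsk.bm_f1 (gaussPi d α)
  set μ := gaussPi d α
  set f := hf1 μ (Hk p t) with hf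
  have hDe : _root_.hD μ (Hk p t) = ∫ x, f x ∂μ := rfl
  rw [hDe] at hD
  set Δ := ∫ x, f x ∂μ with hΔ
  have e : ∫ x, f x ^ 2 ∂μ - Δ ^ 2 = ∫ x, (f x - Δ) ^ 2 ∂μ := by
    have : ∀ x, (f x - Δ) ^ 2 = f x ^ 2 - 2 * Δ * f x + Δ ^ 2 := fun x => by ring
    simp only [this]
    rw [((b.pow 2).sub ((BM.const _).mul b)).iadd (BM.const _),
      (b.pow 2).isub ((BM.const _).mul b), integral_const_mul, ← hΔ]
    simp; ring
  rw [e]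
  have hch := cheb μ (f := fun x => f x - Δ) (((b.sub (BM.const Δ)).pow 2).integrable _) h1
  rw [le_div_iff₀ (by positivity)] at hch
  have : c2 ≤ μ.real {x | c1 ≤ |f x - Δ|} := hc.trans (measureReal_mono fun x hx => by
    have hx' : 2 * c1 ≤ f x := hx
    show c1 ≤ |f x - Δ|
    have := (abs_lt.1 hD).2
    rw [le_abs]; left; linarith)
  nlinarith [sq_nonneg c1]

lemma g2_aux {K n : ℝ} (hK : 0 < K) (hn : 3 ≤ n) : 27 / (K ^ 2 * n) ≤ 10000 / K ^ 2 := by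
  have : 0 < K ^ 2 := by positivity
  have hn0 : 0 < n := by linarith
  rw [div_le_div_iff₀ (by positivity) (by positivity)]
  nlinarith [mul_pos this hn0]

lemma g3_aux {K : ℝ} (hK : 0 < K) : 1 / (3 * K) ^ 2 ≤ 10000 / K ^ 2 := by
  have : 0 < K ^ 2 := by positivity
  rw [div_le_div_iff₀ (by positivity) (by positivity)]
  nlinarith

set_option maxHeartbeats 1000000 in
lemma core {p : ℝ} (hp : p ∈ Set.Ioo (0 : ℝ) 1) {η0 : ℝ} (hη0 : 0 < η0) :
    ∃ S : ℝ, ∃ N : ℕ, ∀ (n d : ℕ) (α : Fin d → ℝ) (t : ℝ), N ≤ n → (∀ i, 0 ≤ α i) →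
      ∑ i, α i ^ 2 = 1 → IsThreshold d α p t → 0 < ∑ i, α i ^ 3 →
      S ≤ (n:ℝ) ^ 3 * (∑ i, α i ^ 3) ^ 2 →
      1 - η0 ≤ tvDist (Measure.map (signedTriangles p) (erGraph n p))
        (Measure.map (signedTriangles p) (geomGraph n d α t)) := by
  set T := 1 / (p * (1 - p)) with hT
  have hT0 : 0 ≤ T := by
    have h1 := hp.1
    have h2 : 0 < 1 - p := by linarith [hp.2]
    positivity
  have hkap := kap_nonneg
  set C2 := 2 + 6 * ((20 + 10 * T) * (1 + 2 * kap)) with hC2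
  have hC20 : 0 ≤ C2 := by positivity
  set C3 := 7 * kap + 2 * ((20 + 10 * T) * (1 + 2 * kap)) with hC3
  have hC30 : 0 ≤ C3 := by positivity
  set e := e0 T ^ 3 with he
  have e_pos : 0 < e := pow_pos (e0_pos T) 3
  set κ := e / (2 * (C3 + 1)) with hκ
  have κ0 : 0 < κ := by positivity
  obtain ⟨c1, c2, c10, c20, hK4⟩ := K4 (p := p) hp hT0 (pow_pos κ0 3)
  set c := min (e / 2) c1 with hcd
  have c0 : 0 < c := lt_min (by positivity) c10
  set D := 900000 / c ^ 2 with hD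
  have D0 : 0 < D := by positivity
  set η' := min 1 (η0 / (D * (C2 + 2))) with hη'
  have η'0 : 0 < η' := lt_min one_pos (by positivity)
  have η'1 : η' ≤ 1 := min_le_left _ _
  have η'2 : D * (C2 + 2) * η' ≤ η0 := by
    have : η' ≤ η0 / (D * (C2 + 2)) := min_le_right _ _
    rw [le_div_iff₀ (by positivity)] at this
    linarith
  -- constants for the degenerate case
  set η := η0 / 16 with hη
  have η_pos : 0 < η := by positivity
  set K := 400 / min 1 η0 with hK
  have hmin : 0 < min 1 η0 := lt_min one_pos hη0
  have K0 : 0 < K := by positivity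
  have hK2 : 10000 / K ^ 2 ≤ η0 / 16 := by
    have h1 : 10000 / K ^ 2 = (min 1 η0) ^ 2 / 16 := by rw [hK]; field_simp; norm_num
    rw [h1]
    have h2 : min 1 η0 ≤ 1 := min_le_left _ _
    have h3 : min 1 η0 ≤ η0 := min_le_right _ _
    nlinarith
  set v0 := c1 ^ 2 * c2 with hv0
  have v00 : 0 < v0 := by positivity
  have hlim : Tendsto (fun n : ℕ => rexp (-((n:ℝ) * v0 * η ^ 2 / (5 * (3 * K) ^ 2)))) atTop
      (nhds 0) := by
    refine Real.tendsto_exp_neg_atTop_nhds_zero.comp ?_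
    have : (fun n : ℕ => (n:ℝ) * v0 * η ^ 2 / (5 * (3 * K) ^ 2)) =
        fun n : ℕ => (n:ℝ) * (v0 * η ^ 2 / (5 * (3 * K) ^ 2)) := by ext n; ring
    rw [this]
    exact tendsto_natCast_atTop_atTop.atTop_mul_const (by positivity)
  obtain ⟨N1, hN1⟩ := eventually_atTop.1 (hlim.eventually (gt_mem_nhds (by positivity : 0 < η0 / 16)))
  refine ⟨1 / η' ^ 3, max 3 N1, ?_⟩
  intro n d α t hn hα h2 hthr hr0 hs
  have hn3 : 3 ≤ n := (le_max_left _ _).trans hn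
  have hnN : N1 ≤ n := (le_max_right _ _).trans hn
  have hn0 : (3:ℝ) ≤ n := by exact_mod_cast hn3
  have hnp : (0:ℝ) < n := by linarith
  have htb := t_bound hα h2 hp hthr
  have hk2 := K2 hα h2 hp hthr htb
  have hk3 := K3 hα h2 hp hthr htb
  have hbr := beta_le hα
  have hr1 := r_le_one hα h2
  set r := ∑ i, α i ^ 3 with hr
  set β := ∑ i, α i ^ 4 with hβ
  have β0 : 0 ≤ β := Finset.sum_nonneg fun i _ => pow_nonneg (hα i) 4
  rw [← hT, ← hC2] at hk2
  rw [← hT, ← hC3, ← he] at hk3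
  have hA : ∀ hΔ : c * r ≤ |_root_.hD (gaussPi d α) (Hk p t)|,
      1 - η0 ≤ tvDist (Measure.map (signedTriangles p) (erGraph n p))
        (Measure.map (signedTriangles p) (geomGraph n d α t)) := by
    intro hΔ
    refine le_trans ?_ (caseA hp hn3 α t c0 hr0 hΔ hk2)
    set s := (n:ℝ) ^ 3 * r ^ 2 with hsd
    have s0 : 0 < s := by positivity
    have hs1 : 1 / s ≤ η' ^ 3 := by
      rw [div_le_iff₀ s0]
      rw [div_le_iff₀ (by positivity)] at hs
      linarith
    have hs2 : η' ^ 3 ≤ η' := by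
      calc η' ^ 3 ≤ η' ^ 1 := pow_le_pow_of_le_one η'0.le η'1 (by norm_num)
        _ = η' := pow_one _
    have hy : β / (n * r ^ 2) ≤ η' := by
      refine le_of_pow_le_pow_left₀ (n := 3) (by norm_num) η'0.le (le_trans ?_ hs1)
      rw [div_pow, hsd, div_le_div_iff₀ (by positivity) (by positivity)]
      calc β ^ 3 * (n ^ 3 * r ^ 2) ≤ r ^ 4 * (n ^ 3 * r ^ 2) := by gcongr
        _ = _ := by ring
    have h3 : 2 / s ≤ 2 * η' := by
      have : 2 / s = 2 * (1 / s) := by ring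
      rw [this]; linarith
    have h4 : C2 * (β / (n * r ^ 2)) ≤ C2 * η' := mul_le_mul_of_nonneg_left hy hC20
    have h5 : D * (C2 * (β / (n * r ^ 2)) + 2 / s) ≤ D * (C2 * η' + 2 * η') :=
      mul_le_mul_of_nonneg_left (by linarith) D0.le
    linarith
  rcases le_or_gt r (κ ^ 3) with hrs | hrb
  · apply hA
    have hbk : β ≤ κ * r := by
      refine le_of_pow_le_pow_left₀ (n := 3) (by norm_num) (by positivity) (hbr.trans ?_)
      calc r ^ 4 = r * r ^ 3 := by ring
        _ ≤ κ ^ 3 * r ^ 3 := by gcongr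
        _ = _ := by ring
    have h5 : C3 * β ≤ (e / 2) * r := by
      have h6 : C3 * κ ≤ e / 2 := by
        rw [hκ]
        have : C3 * (e / (2 * (C3 + 1))) = (e / 2) * (C3 / (C3 + 1)) := by field_simp
        rw [this]
        refine mul_le_of_le_one_right (by positivity) ?_
        rw [div_le_one (by positivity)]; linarith
      calc C3 * β ≤ C3 * (κ * r) := mul_le_mul_of_nonneg_left hbk hC30
        _ = (C3 * κ) * r := by ring
        _ ≤ _ := mul_le_mul_of_nonneg_right h6 hr0.le
    have h7 : c * r ≤ (e / 2) * r := mul_le_mul_of_nonneg_right (min_le_left _ _) hr0.le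
    refine le_trans ?_ (le_abs_self _)
    linarith
  · rcases le_or_gt c1 |_root_.hD (gaussPi d α) (Hk p t)| with hd | hd
    · apply hA
      refine le_trans ?_ hd
      calc c * r ≤ c1 * r := mul_le_mul_of_nonneg_right (min_le_right _ _) hr0.le
        _ ≤ c1 := mul_le_of_le_one_right c10.le hr1
    · obtain ⟨m, hm⟩ := exists_big hα h2 hrb.le
      have hev := hK4 d α t m hα h2 hthr htb hm
      have hv := var_lower hp α t c10 hev hd
      rw [← hv0] at hv
      refine le_trans ?_ (caseB hp hn3 α t v00.le K0 η_pos hv)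
      have g1 := hN1 n hnN
      have g2 := g2_aux K0 hn0
      have g3 := g3_aux K0
      clear_value K
      clear hA hv hev hm hK4 hk2 hk3 htb hlim hN1
      linarith

lemma final (p : ℝ) (hp : p ∈ Set.Ioo (0 : ℝ) 1)
    (d : ℕ → ℕ) (α : (n : ℕ) → Fin (d n) → ℝ)
    (hα : ∀ n i, 0 ≤ α n i)
    (t : ℕ → ℝ) (ht : ∀ n, IsThreshold (d n) (α n) p (t n))
    (hlim : Tendsto (fun n => (nrm 2 (α n) / nrm 3 (α n)) ^ 6 / (n : ℝ) ^ 3)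
      atTop (nhds 0)) :
    Tendsto (fun n => tvDist
        (Measure.map (signedTriangles p) (erGraph n p))
        (Measure.map (signedTriangles p) (geomGraph n (d n) (α n) (t n))))
      atTop (nhds 1) := by
  rw [Metric.tendsto_atTop]
  intro ε hε
  obtain ⟨S, N, hSN⟩ := core hp (half_pos hε)
  set S' := max S 1 with hS'
  have S0 : 0 < S' := lt_of_lt_of_le one_pos (le_max_right _ _)
  obtain ⟨N1, hN1⟩ := eventually_atTop.1 (hlim.eventually (gt_mem_nhds (by positivity : 0 < 1 / S')))
  refine ⟨max N (max N1 1), fun n hn => ?_⟩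
  have hnN : N ≤ n := (le_max_left _ _).trans hn
  have hn1 : N1 ≤ n := (le_max_left _ _).trans ((le_max_right _ _).trans hn)
  have hn2 : 1 ≤ n := (le_max_right _ _).trans ((le_max_right _ _).trans hn)
  have hnp : (0:ℝ) < n := by exact_mod_cast hn2
  have hpos := thr_pos (α n) (hα n) hp (ht n)
  obtain ⟨hr0, h2, hrat⟩ := nrm_ratio (hα n) hpos
  have g := hN1 n hn1
  have hcp : 0 < √(∑ i, α n i ^ 2) := Real.sqrt_pos.2 hpos
  set c := √(∑ i, α n i ^ 2) with hc
  rw [hrat] at g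
  have hs : S ≤ (n:ℝ) ^ 3 * (∑ i, (α n i / c) ^ 3) ^ 2 := by
    refine (le_max_left S 1).trans ?_
    rw [← hS']
    have e : ((∑ i, (α n i / c) ^ 3) ^ 2)⁻¹ / (n:ℝ) ^ 3 =
        1 / ((n:ℝ) ^ 3 * (∑ i, (α n i / c) ^ 3) ^ 2) := by
      field_simp
    rw [e, one_div_lt_one_div (by positivity) S0] at g
    exact g.le
  have key := hSN n (d n) (fun i => α n i / c) (t n / c) hnN
    (fun i => div_nonneg (hα n i) hcp.le) h2 (thr_scale (α n) (hα n) hcp (ht n)) hr0 hs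
  rw [geom_scale n (α n) (hα n) hcp (t n)] at key
  have up := tv_upper n (d n) (α n) p (t n)
  rw [Real.dist_eq, abs_lt]
  constructor <;> linarith

/-- Theorem 4. If `(‖α‖₂/‖α‖₃)⁶ / n³ → 0`, then
`TV(τ(G(n,p)), τ(G(n,p,α))) → 1`. -/
theorem tv_signedTriangles_tendsto_one (p : ℝ) (hp : p ∈ Set.Ioo (0 : ℝ) 1)
    (d : ℕ → ℕ) (α : (n : ℕ) → Fin (d n) → ℝ)
    (hα : ∀ n i, 0 ≤ α n i)
    (t : ℕ → ℝ) (ht : ∀ n, IsThreshold (d n) (α n) p (t n))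
    (hlim : Tendsto (fun n => (nrm 2 (α n) / nrm 3 (α n)) ^ 6 / (n : ℝ) ^ 3)
      atTop (nhds 0)) :
    Tendsto (fun n => tvDist
        (Measure.map (signedTriangles p) (erGraph n p))
        (Measure.map (signedTriangles p) (geomGraph n (d n) (α n) (t n))))
      atTop (nhds 1) :=
  final p hp d α hα t ht hlim

end
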